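/- Suppose y ∈ D satisfies y(a) = y^a and y(b) = y^b and is a local minimizer (with respect to ‖·‖_{1,∞}) of J over all trajectories in D satisfying these boundary conditions. Assume for each i = 1,…,N that the function x ↦ ∂L/∂v_i(x, y(x), C D_γ^{α,β} y(x)) is absolutely continuous on [a,b] with continuous combined Riemann–Liouville derivative D_{1−γ}^{β,α}. Then for every h ∈ D with h(a) = h(b) = 0, the following identity holds: ∫_a^b Σ_{i=1}^N [ ∂L/∂y_i(x, y(x), C D_γ^{α,β} y(x)) + D_{1−γ}^{β,α}( ∂L/∂v_i(·, y(·), C D_γ^{α,β} y(·)) )(x) ]·h_i(x) dx = 0. -/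

import Mathlib

open MeasureTheory Set Real

noncomputable section

/-- Left Riemann–Liouville fractional integral `(ₐIₓ^α f)(x)`. -/
def leftRLI (a α : ℝ) (f : ℝ → ℝ) (x : ℝ) : ℝ :=
  (1 / Real.Gamma α) * ∫ t in a..x, (x - t) ^ (α - 1) * f t

/-- Right Riemann–Liouville fractional integral `(ₓI_b^α f)(x)`. -/
def rightRLI (b α : ℝ) (f : ℝ → ℝ) (x : ℝ) : ℝ :=
  (1 / Real.Gamma α) * ∫ t in x..b, (t - x) ^ (α - 1) * f t

/-- A function is absolutely continuous on `[a, b]` iff it is the integral of its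
(almost everywhere defined) derivative. -/
def AbsolutelyContinuousOn (f : ℝ → ℝ) (a b : ℝ) : Prop :=
  IntervalIntegrable (deriv f) volume a b ∧
    ∀ x ∈ Icc a b, f x = f a + ∫ t in a..x, deriv f t

/-- Left Caputo fractional derivative `(ᶜₐDₓ^α f)(x)`. -/
def caputoLeft (a α : ℝ) (f : ℝ → ℝ) (x : ℝ) : ℝ :=
  (1 / Real.Gamma (1 - α)) * ∫ t in a..x, (x - t) ^ (-α) * deriv f t

/-- Right Caputo fractional derivative `(ᶜₓD_b^α f)(x)`. -/
def caputoRight (b α : ℝ) (f : ℝ → ℝ) (x : ℝ) : ℝ :=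
  -(1 / Real.Gamma (1 - α)) * ∫ t in x..b, (t - x) ^ (-α) * deriv f t

/-- Left Riemann–Liouville fractional derivative `(ₐDₓ^α g)(x) = d/dx (ₐIₓ^{1-α} g)(x)`. -/
def rlLeftD (a α : ℝ) (g : ℝ → ℝ) (x : ℝ) : ℝ :=
  deriv (leftRLI a (1 - α) g) x

/-- Right Riemann–Liouville fractional derivative `(ₓD_b^α g)(x) = -d/dx (ₓI_b^{1-α} g)(x)`. -/
def rlRightD (b α : ℝ) (g : ℝ → ℝ) (x : ℝ) : ℝ :=
  -deriv (rightRLI b (1 - α) g) x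

/-- Combined Caputo fractional derivative `ᶜD_γ^{α,β} f = γ ᶜₐDₓ^α f + (1-γ) ᶜₓD_b^β f`. -/
def combCaputo (a b α β γ : ℝ) (f : ℝ → ℝ) (x : ℝ) : ℝ :=
  γ * caputoLeft a α f x + (1 - γ) * caputoRight b β f x

/-- Combined Riemann–Liouville derivative `D_{1-γ}^{β,α} g = (1-γ) ₐDₓ^β g + γ ₓD_b^α g`. -/
def combRL (a b α β γ : ℝ) (g : ℝ → ℝ) (x : ℝ) : ℝ :=
  (1 - γ) * rlLeftD a β g x + γ * rlRightD b α g x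

/-- Componentwise combined Caputo derivative of a vector-valued function. -/
def combCaputoVec (a b α β γ : ℝ) {N : ℕ} (y : ℝ → Fin N → ℝ) (x : ℝ) : Fin N → ℝ :=
  fun i => combCaputo a b α β γ (fun t => y t i) x

/-- The class `𝐃` of trajectories: each component absolutely continuous on `[a,b]` and the
combined Caputo derivative exists and is continuous on `[a,b]`. -/
def memD (a b α β γ : ℝ) {N : ℕ} (y : ℝ → Fin N → ℝ) : Prop :=
  (∀ i, AbsolutelyContinuousOn (fun t => y t i) a b) ∧
    ∀ i, ContinuousOn (fun x => combCaputo a b α β γ (fun t => y t i) x) (Icc a b)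

/-- The norm `‖y‖_{1,∞} = max_{[a,b]} ‖y(x)‖ + max_{[a,b]} ‖ᶜD_γ^{α,β} y(x)‖`. -/
def norm1inf (a b α β γ : ℝ) {N : ℕ} (y : ℝ → Fin N → ℝ) : ℝ :=
  sSup ((fun x => ‖y x‖) '' Icc a b) +
    sSup ((fun x => ‖combCaputoVec a b α β γ y x‖) '' Icc a b)

/-- Partial derivative of a Lagrangian `L(x, y, v)` w.r.t. the `i`-th component of `y`. -/
def pdY {N : ℕ} (L : ℝ → (Fin N → ℝ) → (Fin N → ℝ) → ℝ) (i : Fin N) (x : ℝ)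
    (u v : Fin N → ℝ) : ℝ :=
  deriv (fun s => L x (Function.update u i s) v) (u i)

/-- Partial derivative of a Lagrangian `L(x, y, v)` w.r.t. the `i`-th component of `v`. -/
def pdV {N : ℕ} (L : ℝ → (Fin N → ℝ) → (Fin N → ℝ) → ℝ) (i : Fin N) (x : ℝ)
    (u v : Fin N → ℝ) : ℝ :=
  deriv (fun s => L x u (Function.update v i s)) (v i)

/-- A weakly singular kernel of order `θ`. -/
structure WeakSing (k : ℝ → ℝ) (θ C : ℝ) : Prop where
  meas : Measurable k
  cont : ContinuousOn k {0}ᶜ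
  bound : ∀ s, |k s| ≤ C * |s| ^ (-θ)
  pos : 0 < θ
  lt_one : θ < 1
  nonneg : 0 ≤ C

/-- Convolution of a kernel with a function. -/
def cv (k f : ℝ → ℝ) (x : ℝ) : ℝ := ∫ t, k (x - t) * f t

/-- The points at which the convolution integral converges absolutely. -/
def Good (k f : ℝ → ℝ) (x : ℝ) : Prop := Integrable fun t => k (x - t) * f t

/-- The singular part of the model kernel `|s| ^ (-θ)`. -/
def singPart (θ : ℝ) : ℝ → ℝ := (Icc (-1 : ℝ) 1).indicator fun s => |s| ^ (-θ)

theorem intervalIntegrable_abs_rpow {θ : ℝ} (h1 : θ < 1) (R : ℝ) :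
    IntervalIntegrable (fun s : ℝ => |s| ^ (-θ)) volume 0 R := by
  wlog hR : 0 ≤ R generalizing R
  · have h := this (-R) (by linarith)
    rw [IntervalIntegrable.iff_comp_neg]
    simpa using h
  have := (intervalIntegral.intervalIntegrable_rpow' (r := -θ) (by linarith) (a := 0) (b := R))
  refine this.congr ?_
  intro s hs
  rw [uIoc_of_le hR] at hs
  simp [abs_of_pos hs.1]

theorem integrable_singPart {θ : ℝ} (h1 : θ < 1) : Integrable (singPart θ) := by
  have h := (intervalIntegrable_abs_rpow h1 (-1)).symm.trans (intervalIntegrable_abs_rpow h1 1)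
  rw [intervalIntegrable_iff_integrableOn_Icc_of_le (by norm_num)] at h
  exact h.integrable_indicator measurableSet_Icc

theorem singPart_nonneg (θ s : ℝ) : 0 ≤ singPart θ s :=
  indicator_nonneg (fun _ _ => by positivity) s

theorem abs_rpow_neg_le {θ ρ s : ℝ} (hθ : 0 < θ) (hρ : 0 < ρ) (h : ρ ≤ |s|) :
    |s| ^ (-θ) ≤ ρ ^ (-θ) :=
  rpow_le_rpow_of_nonpos hρ h (by linarith)

theorem abs_rpow_le_singPart {θ : ℝ} (hθ : 0 < θ) (s : ℝ) : |s| ^ (-θ) ≤ singPart θ s + 1 := by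
  by_cases h : s ∈ Icc (-1 : ℝ) 1
  · simp [singPart, h]
  · have : 1 ≤ |s| := by
      by_contra h'
      exact h ⟨by linarith [neg_abs_le s], by linarith [le_abs_self s]⟩
    have := abs_rpow_neg_le hθ one_pos this
    simp only [one_rpow] at this
    linarith [singPart_nonneg θ s]

namespace WeakSing

variable {k : ℝ → ℝ} {θ C : ℝ}

theorem le_singPart (hk : WeakSing k θ C) (s : ℝ) : |k s| ≤ C * (singPart θ s + 1) :=
  (hk.bound s).trans (mul_le_mul_of_nonneg_left (abs_rpow_le_singPart hk.pos s) hk.nonneg)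

theorem le_far (hk : WeakSing k θ C) {ρ s : ℝ} (hρ : 0 < ρ) (h : ρ ≤ |s|) :
    |k s| ≤ C * ρ ^ (-θ) :=
  (hk.bound s).trans (mul_le_mul_of_nonneg_left (abs_rpow_neg_le hk.pos hρ h) hk.nonneg)

theorem zero (hk : WeakSing k θ C) : k 0 = 0 := by
  have := hk.bound 0
  rw [abs_zero, zero_rpow (by linarith [hk.pos]), mul_zero] at this
  exact abs_nonpos_iff.1 this

theorem comp_neg (hk : WeakSing k θ C) : WeakSing (fun s => k (-s)) θ C where
  meas := hk.meas.comp measurable_neg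
  cont := hk.cont.comp continuous_neg.continuousOn (by intro s hs; simpa using hs)
  bound s := by simpa using hk.bound (-s)
  pos := hk.pos
  lt_one := hk.lt_one
  nonneg := hk.nonneg

theorem intervalIntegrable (hk : WeakSing k θ C) (A B : ℝ) : IntervalIntegrable k volume A B := by
  have h : IntervalIntegrable (fun s => C * (singPart θ s + 1)) volume A B :=
    (((integrable_singPart hk.lt_one).intervalIntegrable).add
      intervalIntegrable_const).const_mul C
  refine h.mono_fun' hk.meas.aestronglyMeasurable.restrict ?_
  exact Filter.Eventually.of_forall fun s => hk.le_singPart s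

theorem integral_abs_le (hk : WeakSing k θ C) {A B : ℝ} (hAB : A ≤ B) :
    ∫ s in A..B, |k s| ≤ C * ((∫ s, singPart θ s) + (B - A)) := by
  have hI := (integrable_singPart hk.lt_one)
  have h : IntervalIntegrable (fun s => C * (singPart θ s + 1)) volume A B :=
    ((hI.intervalIntegrable).add intervalIntegrable_const).const_mul C
  calc ∫ s in A..B, |k s| ≤ ∫ s in A..B, C * (singPart θ s + 1) :=
        intervalIntegral.integral_mono_on hAB (hk.intervalIntegrable A B).abs h
          fun s _ => hk.le_singPart s
    _ = C * ((∫ s in A..B, singPart θ s) + (B - A)) := by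
        rw [intervalIntegral.integral_const_mul, intervalIntegral.integral_add
          hI.intervalIntegrable intervalIntegrable_const]
        simp
    _ ≤ _ := by
        refine mul_le_mul_of_nonneg_left (add_le_add_left ?_ _) hk.nonneg
        rw [intervalIntegral.integral_of_le hAB]
        exact setIntegral_le_integral hI (Filter.Eventually.of_forall (singPart_nonneg θ))

/-- Joint integrability of the convolution integrand along a curve `ξ`. -/
theorem integrable_prod (hk : WeakSing k θ C) {f : ℝ → ℝ} (hf : Integrable f)
    (hfm : Measurable f) {μ : Measure ℝ} [SFinite μ] {ξ : ℝ → ℝ} (hξ : Measurable ξ) {M : ℝ}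
    (hI : ∀ t, Integrable (fun s => k (ξ s - t)) μ) (hM : ∀ t, ∫ s, |k (ξ s - t)| ∂μ ≤ M) :
    Integrable (fun p : ℝ × ℝ => k (ξ p.1 - p.2) * f p.2) (μ.prod volume) := by
  have hm : Measurable (fun p : ℝ × ℝ => k (ξ p.1 - p.2) * f p.2) :=
    (hk.meas.comp ((hξ.comp measurable_fst).sub measurable_snd)).mul (hfm.comp measurable_snd)
  rw [integrable_prod_iff' hm.aestronglyMeasurable]
  refine ⟨Filter.Eventually.of_forall fun t => (hI t).mul_const (f t), ?_⟩
  refine Integrable.mono' (hf.abs.const_mul M) ?_ ?_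
  · exact (hm.stronglyMeasurable.norm.integral_prod_left').aestronglyMeasurable
  · refine Filter.Eventually.of_forall fun t => ?_
    simp only [norm_mul, norm_eq_abs]
    rw [integral_mul_const, abs_mul, abs_abs, abs_of_nonneg (integral_nonneg fun _ => abs_nonneg _)]
    exact mul_le_mul_of_nonneg_right (hM t) (abs_nonneg _)

theorem integrable_prod_Icc (hk : WeakSing k θ C) {f : ℝ → ℝ} (hf : Integrable f)
    (hfm : Measurable f) (A B : ℝ) :
    Integrable (fun p : ℝ × ℝ => k (p.1 - p.2) * f p.2)
      ((volume.restrict (Icc A B)).prod volume) := by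
  rcases lt_or_ge B A with h | hAB
  · simp [Icc_eq_empty (not_le.2 h)]
  have hI : ∀ t, IntervalIntegrable (fun s => k (s - t)) volume A B := fun t => by
    simpa using (hk.intervalIntegrable (A - t) (B - t)).comp_sub_right t
  refine hk.integrable_prod hf hfm measurable_id (M := C * ((∫ s, singPart θ s) + (B - A)))
    (fun t => ?_) fun t => ?_
  · have := hI t
    rwa [intervalIntegrable_iff_integrableOn_Icc_of_le hAB] at this
  · simp only [id]
    rw [integral_Icc_eq_integral_Ioc, ← intervalIntegral.integral_of_le hAB,
      intervalIntegral.integral_comp_sub_right (fun s => |k s|)]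
    have := hk.integral_abs_le (A := A - t) (B := B - t) (by linarith)
    rwa [show B - t - (A - t) = B - A by ring] at this

theorem integrable_prod_line (hk : WeakSing k θ C) {f : ℝ → ℝ} (hf : Integrable f)
    (hfm : Measurable f) (x : ℝ) {r : ℝ} (hr : r ≠ 0) :
    Integrable (fun p : ℝ × ℝ => k ((x - r * p.1) - p.2) * f p.2)
      ((volume.restrict (Ioc 0 1)).prod volume) := by
  have hI : ∀ t, IntervalIntegrable (fun s => k (x - r * s - t)) volume 0 1 := fun t => by
    have h := (hk.intervalIntegrable (x - t - r * 0) (x - t - r * 1)).comp_sub_left (x - t)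
    simp only [mul_zero, sub_zero, sub_self, mul_one, sub_sub_cancel] at h
    have h2 := h.comp_mul_left (c := r) 
    simp only [zero_div, div_self hr] at h2
    refine h2.congr_ae (Filter.Eventually.of_forall fun s => ?_)
    simp only []
    congr 1; ring
  obtain ⟨M, hM⟩ : ∃ M, ∀ t, ∫ s in (0:ℝ)..1, |k (x - r * s - t)| ≤ M := by
    refine ⟨|r|⁻¹ * (C * ((∫ s, singPart θ s) + |r|)), fun t => ?_⟩
    have : ∀ s, x - r * s - t = (x - t) - r * s := fun s => by ring
    simp only [this]
    rw [intervalIntegral.integral_comp_sub_mul (fun s => |k s|) hr]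
    simp only [mul_one, mul_zero, sub_zero, smul_eq_mul]
    rcases lt_or_gt_of_ne hr with h | h
    · rw [intervalIntegral.integral_symm, abs_of_neg h, mul_neg, ← neg_mul, ← inv_neg]
      refine mul_le_mul_of_nonneg_left ?_ (by rw [inv_nonneg]; linarith)
      have := hk.integral_abs_le (A := x - t) (B := x - t - r) (by linarith)
      rwa [show x - t - r - (x - t) = -r by ring] at this
    · rw [abs_of_pos h]
      refine mul_le_mul_of_nonneg_left ?_ (by rw [inv_nonneg]; linarith)
      have := hk.integral_abs_le (A := x - t - r) (B := x - t) (by linarith)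
      rwa [show x - t - (x - t - r) = r by ring] at this
  refine hk.integrable_prod hf hfm (ξ := fun s => x - r * s) (by fun_prop) (M := M)
    (fun t => ?_) fun t => ?_
  · have := hI t
    rwa [intervalIntegrable_iff_integrableOn_Ioc_of_le zero_le_one] at this
  · rw [← intervalIntegral.integral_of_le zero_le_one]
    exact hM t

theorem ae_good (hk : WeakSing k θ C) {f : ℝ → ℝ} (hf : Integrable f)
    (hfm : Measurable f) : ∀ᵐ x, Good k f x := by
  have : ∀ n : ℕ, ∀ᵐ x, x ∈ Icc (-(n : ℝ)) n → Good k f x := fun n => by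
    have := (hk.integrable_prod_Icc hf hfm (-(n : ℝ)) n).prod_right_ae
    exact (ae_restrict_iff' measurableSet_Icc).1 this
  filter_upwards [ae_all_iff.2 this] with x hx
  obtain ⟨n, hn⟩ := exists_nat_ge |x|
  exact hx n ⟨by linarith [neg_abs_le x], by linarith [le_abs_self x]⟩

end WeakSing

theorem Good.add {k f g : ℝ → ℝ} {x : ℝ} (hf : Good k f x) (hg : Good k g x) :
    Good k (fun t => f t + g t) x := by
  simp only [Good, mul_add]
  exact Integrable.add hf hg

theorem Good.sub {k f g : ℝ → ℝ} {x : ℝ} (hf : Good k f x) (hg : Good k g x) :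
    Good k (fun t => f t - g t) x := by
  simp only [Good, mul_sub]
  exact Integrable.sub hf hg

theorem cv_add {k f g : ℝ → ℝ} {x : ℝ} (hf : Good k f x) (hg : Good k g x) :
    cv k (fun t => f t + g t) x = cv k f x + cv k g x := by
  simpa only [cv, mul_add] using integral_add hf hg

theorem cv_sub {k f g : ℝ → ℝ} {x : ℝ} (hf : Good k f x) (hg : Good k g x) :
    cv k (fun t => f t - g t) x = cv k f x - cv k g x := by
  simpa only [cv, mul_sub] using integral_sub hf hg

theorem cv_const_mul (k f : ℝ → ℝ) (x c : ℝ) :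
    cv k (fun t => c * f t) x = c * cv k f x := by
  simp only [cv, mul_left_comm _ c, integral_const_mul]

theorem cv_of_not_good {k f : ℝ → ℝ} {x : ℝ} (hf : ¬ Good k f x) : cv k f x = 0 :=
  integral_undef hf

theorem cv_comp_add (k f : ℝ → ℝ) (x c : ℝ) :
    cv k (fun t => f (t - c)) x = cv k f (x - c) := by
  unfold cv
  rw [← integral_sub_right_eq_self (fun t => k (x - c - t) * f t) c]
  simp only [sub_sub_sub_cancel_right]

theorem integrable_tsum_of_summable_integral_norm {ι : Type*} [Countable ι] {F : ι → ℝ → ℝ}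
    (hF : ∀ j, Integrable (F j)) (hs : Summable fun j => ∫ t, |F j t|) :
    Integrable fun t => ∑' j, F j t := by
  refine ⟨(AEMeasurable.tsum fun j => (hF j).aemeasurable).aestronglyMeasurable, ?_⟩
  have h2 : ∑' j, ∫⁻ t, ‖F j t‖ₑ ≠ ⊤ := by
    have : ∀ j, ∫⁻ t, ‖F j t‖ₑ = ENNReal.ofReal (∫ t, |F j t|) := by
      intro j
      rw [← ofReal_integral_norm_eq_lintegral_enorm (hF j)]
      rfl
    simp only [this]
    exact hs.tsum_ofReal_ne_top
  rw [← lintegral_tsum fun j => (hF j).aestronglyMeasurable.enorm] at h2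
  exact lt_of_le_of_lt (lintegral_mono fun t => enorm_tsum_le_tsum_enorm) h2.lt_top

/-- If `∑ ∫ |k (x - t) * F j t|` converges, the convolution commutes with the sum. -/
theorem good_tsum {ι : Type*} [Countable ι] {k : ℝ → ℝ} {F : ι → ℝ → ℝ} {x : ℝ}
    (hg : ∀ j, Good k (F j) x) (hs : Summable fun j => ∫ t, |k (x - t) * F j t|) :
    Good k (fun t => ∑' j, F j t) x ∧
      HasSum (fun j => cv k (F j) x) (cv k (fun t => ∑' j, F j t) x) := by
  have h1 := hasSum_integral_of_summable_integral_norm hg hs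
  simp only [tsum_mul_left] at h1
  refine ⟨?_, h1⟩
  have h2 := integrable_tsum_of_summable_integral_norm hg hs
  simpa only [Good, tsum_mul_left] using h2

namespace WeakSing

variable {k : ℝ → ℝ} {θ C : ℝ}

theorem good_of_vanish (hk : WeakSing k θ C) {f : ℝ → ℝ} (hf : Integrable f)
    {x ρ : ℝ} (hρ : 0 < ρ) (h0 : ∀ t, |x - t| < ρ → f t = 0) :
    Good k f x ∧ ∫ t, |k (x - t) * f t| ≤ C * ρ ^ (-θ) * ∫ t, |f t| := by
  have hb : ∀ t, |k (x - t) * f t| ≤ C * ρ ^ (-θ) * |f t| := fun t => by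
    rcases lt_or_ge (|x - t|) ρ with h | h
    · simp [h0 t h]
    · rw [abs_mul]
      exact mul_le_mul_of_nonneg_right (hk.le_far hρ h) (abs_nonneg _)
  have hg : Good k f x := by
    refine Integrable.mono' (hf.abs.const_mul (C * ρ ^ (-θ))) ?_ (Filter.Eventually.of_forall hb)
    exact (hk.meas.comp (measurable_const.sub measurable_id)).aestronglyMeasurable.mul
      hf.aestronglyMeasurable
  refine ⟨hg, ?_⟩
  rw [← integral_const_mul]
  exact integral_mono (Integrable.abs hg) (hf.abs.const_mul _) hb

theorem good_of_bounded (hk : WeakSing k θ C) {f : ℝ → ℝ} (hf : Integrable f)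
    {x ρ M : ℝ} (hρ : 0 < ρ) (h0 : ∀ t, |x - t| < ρ → |f t| ≤ M) : Good k f x := by
  have hM : 0 ≤ M := (abs_nonneg _).trans (h0 x (by simpa using hρ))
  have hC := hk.nonneg
  refine Integrable.mono' (g := fun t => C * M * singPart θ (x - t) + (C + C * ρ ^ (-θ)) * |f t|)
    ((((integrable_singPart hk.lt_one).comp_sub_left x).const_mul _).add (hf.abs.const_mul _)) ?_
    (Filter.Eventually.of_forall fun t => ?_)
  · exact (hk.meas.comp (measurable_const.sub measurable_id)).aestronglyMeasurable.mul
      hf.aestronglyMeasurable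
  · have hs := singPart_nonneg θ (x - t)
    have hρ' : 0 ≤ ρ ^ (-θ) := by positivity
    rw [norm_mul, norm_eq_abs, norm_eq_abs]
    rcases lt_or_ge (|x - t|) ρ with h | h
    · calc |k (x - t)| * |f t| ≤ C * (singPart θ (x - t) + 1) * |f t| :=
            mul_le_mul_of_nonneg_right (hk.le_singPart _) (abs_nonneg _)
        _ = C * singPart θ (x - t) * |f t| + C * |f t| := by ring
        _ ≤ C * singPart θ (x - t) * M + C * |f t| := by
            gcongr
            exact h0 t h
        _ ≤ _ := by nlinarith [mul_nonneg (mul_nonneg hC hρ') (abs_nonneg (f t))]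
    · calc |k (x - t)| * |f t| ≤ C * ρ ^ (-θ) * |f t| :=
            mul_le_mul_of_nonneg_right (hk.le_far hρ h) (abs_nonneg _)
        _ ≤ _ := by nlinarith [mul_nonneg hC (abs_nonneg (f t)), mul_nonneg (mul_nonneg hC hM) hs]

theorem good_of_continuousAt (hk : WeakSing k θ C) {f : ℝ → ℝ} (hf : Integrable f)
    {x : ℝ} (hc : ContinuousAt f x) : Good k f x := by
  obtain ⟨ρ, hρ, h⟩ := Metric.continuousAt_iff.1 hc 1 one_pos
  refine hk.good_of_bounded hf (M := |f x| + 1) hρ fun t ht => ?_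
  have := @h t (by rwa [dist_comm, Real.dist_eq])
  rw [Real.dist_eq] at this
  linarith [abs_sub_abs_le_abs_sub (f t) (f x)]

theorem locallyIntegrable (hk : WeakSing k θ C) : LocallyIntegrable k := by
  intro x
  refine ⟨Icc (x - 1) (x + 1), Icc_mem_nhds (by linarith) (by linarith), ?_⟩
  rw [← intervalIntegrable_iff_integrableOn_Icc_of_le (by linarith)]
  exact hk.intervalIntegrable _ _

theorem continuous_cv (hk : WeakSing k θ C) {w : ℝ → ℝ} (hw : Continuous w)
    (hc : HasCompactSupport w) : Continuous (cv k w) := by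
  have h := hc.continuous_convolution_right (ContinuousLinearMap.mul ℝ ℝ) hk.locallyIntegrable hw
  convert h using 1
  ext x
  simp only [cv, convolution, ContinuousLinearMap.mul_apply']
  rw [← integral_sub_left_eq_self (fun t => k t * w (x - t)) volume x]
  simp

theorem continuousAt_cv_of_vanish (hk : WeakSing k θ C) {f : ℝ → ℝ} (hf : Integrable f)
    {x ρ : ℝ} (hρ : 0 < ρ) (h0 : ∀ t, |x - t| < ρ → f t = 0) : ContinuousAt (cv k f) x := by
  refine continuousAt_of_dominated (bound := fun t => C * (ρ / 2) ^ (-θ) * |f t|) ?_ ?_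
    (hf.abs.const_mul _) ?_
  · exact Filter.Eventually.of_forall fun y =>
      (hk.meas.comp (measurable_const.sub measurable_id)).aestronglyMeasurable.mul
        hf.aestronglyMeasurable
  · filter_upwards [Metric.ball_mem_nhds x (half_pos hρ)] with y hy
    refine Filter.Eventually.of_forall fun t => ?_
    rw [Metric.mem_ball, Real.dist_eq] at hy
    rw [norm_mul, norm_eq_abs, norm_eq_abs]
    rcases lt_or_ge (|x - t|) ρ with h | h
    · simp [h0 t h]
    · refine mul_le_mul_of_nonneg_right (hk.le_far (half_pos hρ) ?_) (abs_nonneg _)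
      have := abs_sub_abs_le_abs_sub (x - t) (x - y)
      rw [show x - t - (x - y) = y - t by ring, abs_sub_comm x y] at this
      linarith
  · refine Filter.Eventually.of_forall fun t => ?_
    rcases lt_or_ge (|x - t|) ρ with h | h
    · simp only [h0 t h, mul_zero]; exact continuousAt_const
    · refine ContinuousAt.mul ?_ continuousAt_const
      refine ContinuousAt.comp (f := fun y => y - t) (x := x) ?_ (by fun_prop)
      refine hk.cont.continuousAt (isOpen_compl_singleton.mem_nhds ?_)
      intro h'
      rw [mem_singleton_iff] at h'
      rw [h', abs_zero] at h
      linarith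

end WeakSing

/-- The trapezoidal cutoff, equal to `1` near `x` and supported in the ball of radius `ρ`. -/
def cutoff (x ρ t : ℝ) : ℝ := max 0 (min 1 (2 - 3 / ρ * |x - t|))

theorem continuous_cutoff (x ρ : ℝ) : Continuous (cutoff x ρ) := by
  unfold cutoff; fun_prop

theorem cutoff_nonneg (x ρ t : ℝ) : 0 ≤ cutoff x ρ t := le_max_left _ _

theorem cutoff_le_one (x ρ t : ℝ) : cutoff x ρ t ≤ 1 := max_le zero_le_one (min_le_left _ _)

theorem cutoff_eq_one {x ρ t : ℝ} (hρ : 0 < ρ) (h : |x - t| ≤ ρ / 3) : cutoff x ρ t = 1 := by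
  have : 3 / ρ * |x - t| ≤ 1 := by
    calc 3 / ρ * |x - t| ≤ 3 / ρ * (ρ / 3) := by gcongr
      _ = 1 := by field_simp
  unfold cutoff
  rw [min_eq_left (by linarith)]; simp

theorem cutoff_eq_zero {x ρ t : ℝ} (hρ : 0 < ρ) (h : 2 * ρ / 3 ≤ |x - t|) :
    cutoff x ρ t = 0 := by
  have : 2 ≤ 3 / ρ * |x - t| := by
    calc 2 = 3 / ρ * (2 * ρ / 3) := by field_simp
      _ ≤ _ := by gcongr
  unfold cutoff
  exact max_eq_left ((min_le_right _ _).trans (by linarith))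

theorem abs_clamp_sub_le (p q : ℝ) : |max 0 (min 1 p) - max 0 (min 1 q)| ≤ |p - q| := by
  refine (abs_max_sub_max_le_max _ _ _ _).trans ?_
  simp only [sub_self, abs_zero]
  refine max_le (abs_nonneg _) ((abs_min_sub_min_le_max _ _ _ _).trans ?_)
  simp

theorem cutoff_lipschitz {x ρ : ℝ} (hρ : 0 < ρ) (s t : ℝ) :
    |cutoff x ρ s - cutoff x ρ t| ≤ 3 / ρ * |s - t| := by
  refine (abs_clamp_sub_le _ _).trans ?_
  rw [show 2 - 3 / ρ * |x - s| - (2 - 3 / ρ * |x - t|) = 3 / ρ * (|x - t| - |x - s|) by ring,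
    abs_mul, abs_of_pos (by positivity : 0 < 3 / ρ)]
  refine mul_le_mul_of_nonneg_left ?_ (by positivity)
  refine (abs_abs_sub_abs_le_abs_sub _ _).trans (le_of_eq ?_)
  congr 1; ring

theorem hasCompactSupport_of_vanish {f : ℝ → ℝ} {A B : ℝ} (h : ∀ t, t ∉ Icc A B → f t = 0) :
    HasCompactSupport f :=
  HasCompactSupport.intro isCompact_Icc h

theorem continuous_cutoff_mul {f : ℝ → ℝ} {x ρ : ℝ} (hρ : 0 < ρ)
    (hc : ContinuousOn f (Metric.ball x ρ)) : Continuous fun t => cutoff x ρ t * f t := by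
  rw [continuous_iff_continuousAt]
  intro t
  by_cases ht : t ∈ Metric.ball x ρ
  · exact (continuous_cutoff x ρ).continuousAt.mul (hc.continuousAt (Metric.isOpen_ball.mem_nhds ht))
  · have : ∀ᶠ s in nhds t, cutoff x ρ s * f s = 0 := by
      rw [Metric.mem_ball, Real.dist_eq, not_lt, abs_sub_comm] at ht
      have h2 : ∀ᶠ s in nhds t, 2 * ρ / 3 < |x - s| :=
        (by fun_prop : Continuous fun s => |x - s|).continuousAt.eventually_const_lt (by linarith)
      filter_upwards [h2] with s hs
      rw [cutoff_eq_zero hρ hs.le, zero_mul]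
    exact (continuousAt_const (y := (0 : ℝ))).congr (this.mono fun s hs => hs.symm)

theorem cutoff_mul_support {f : ℝ → ℝ} {x ρ t : ℝ} (hρ : 0 < ρ) (h : t ∉ Icc (x - ρ) (x + ρ)) :
    cutoff x ρ t * f t = 0 := by
  rw [cutoff_eq_zero hρ, zero_mul]
  by_contra h'
  refine h ⟨?_, ?_⟩
  · linarith [le_abs_self (x - t)]
  · linarith [neg_abs_le (x - t)]

theorem WeakSing.continuousAt_cv {k : ℝ → ℝ} {θ C : ℝ} (hk : WeakSing k θ C) {f : ℝ → ℝ}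
    (hf : Integrable f) {x ρ : ℝ} (hρ : 0 < ρ)
    (hc : ContinuousOn f (Metric.ball x ρ)) : ContinuousAt (cv k f) x := by
  set w : ℝ → ℝ := fun t => cutoff x ρ t * f t with hwdef
  have hw : Continuous w := continuous_cutoff_mul hρ hc
  have hwc : HasCompactSupport w := hasCompactSupport_of_vanish fun t ht => cutoff_mul_support hρ ht
  have hwi : Integrable w := hw.integrable_of_hasCompactSupport hwc
  have h2 : Integrable (fun t => f t - w t) := hf.sub hwi
  have hv : ∀ t, |x - t| < ρ / 3 → f t - w t = 0 := fun t ht => by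
    rw [hwdef]; simp only []; rw [cutoff_eq_one hρ ht.le]; ring
  have key := ((hk.continuous_cv hw hwc).continuousAt (x := x)).add
    (hk.continuousAt_cv_of_vanish h2 (by positivity) hv)
  refine key.congr ?_
  filter_upwards [Metric.ball_mem_nhds x (by positivity : 0 < ρ / 6)] with y hy
  rw [Metric.mem_ball, Real.dist_eq] at hy
  have g1 : Good k w y := hk.good_of_continuousAt hwi hw.continuousAt
  have g2 : Good k (fun t => f t - w t) y := by
    refine (hk.good_of_vanish h2 (ρ := ρ / 6) (by positivity) fun t ht => hv t ?_).1
    rw [abs_sub_comm] at hy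
    calc |x - t| = |(x - y) + (y - t)| := by ring_nf
      _ ≤ |x - y| + |y - t| := abs_add_le _ _
      _ < ρ / 3 := by linarith
  rw [Pi.add_apply, ← cv_add g1 g2]
  simp

/-- The commutator of convolution with `k` and multiplication by `χ`. -/
def kcomm (k χ f : ℝ → ℝ) (x : ℝ) : ℝ := ∫ t, k (x - t) * (χ t - χ x) * f t

namespace WeakSing

variable {k : ℝ → ℝ} {θ C : ℝ}

theorem comm_kernel_le (hk : WeakSing k θ C) {χ : ℝ → ℝ} {Λ : ℝ} (hΛ : 0 ≤ Λ)
    (hL : ∀ s t, |χ s - χ t| ≤ Λ * |s - t|) (h1 : ∀ s t, |χ s - χ t| ≤ 1) (x t : ℝ) :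
    |k (x - t) * (χ t - χ x)| ≤ C * (Λ + 1) := by
  have hC := hk.nonneg
  rw [abs_mul]
  rcases le_or_gt 1 |x - t| with h | h
  · have := hk.le_far one_pos h
    rw [one_rpow, mul_one] at this
    calc |k (x - t)| * |χ t - χ x| ≤ C * 1 := by
          gcongr
          exact h1 _ _
      _ ≤ _ := by gcongr; linarith
  · rcases eq_or_ne (x - t) 0 with h0 | h0
    · rw [h0, hk.zero]; simp; positivity
    have hp : 0 < |x - t| := abs_pos.2 h0
    have hr : |x - t| ^ (-θ) * |x - t| ≤ 1 := by
      nth_rewrite 2 [← rpow_one |x - t|]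
      rw [← rpow_add hp]
      exact rpow_le_one hp.le h.le (by linarith [hk.lt_one])
    calc |k (x - t)| * |χ t - χ x| ≤ (C * |x - t| ^ (-θ)) * (Λ * |t - x|) := by
          gcongr
          · exact hk.bound _
          · exact hL _ _
      _ = C * Λ * (|x - t| ^ (-θ) * |x - t|) := by rw [abs_sub_comm t x]; ring
      _ ≤ C * Λ * 1 := by gcongr
      _ ≤ _ := by nlinarith

theorem integrable_comm (hk : WeakSing k θ C) {χ : ℝ → ℝ} {Λ : ℝ} (hΛ : 0 ≤ Λ)
    (hL : ∀ s t, |χ s - χ t| ≤ Λ * |s - t|) (h1 : ∀ s t, |χ s - χ t| ≤ 1) (hχ : Continuous χ)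
    {f : ℝ → ℝ} (hf : Integrable f) (x : ℝ) :
    Integrable fun t => k (x - t) * (χ t - χ x) * f t := by
  refine Integrable.mono' (hf.abs.const_mul (C * (Λ + 1))) ?_
    (Filter.Eventually.of_forall fun t => ?_)
  · exact (((hk.meas.comp (measurable_const.sub measurable_id)).mul
      (hχ.measurable.sub measurable_const)).aestronglyMeasurable).mul hf.aestronglyMeasurable
  · rw [norm_mul]
    exact mul_le_mul_of_nonneg_right (hk.comm_kernel_le hΛ hL h1 x t) (abs_nonneg _)

theorem abs_comm_le (hk : WeakSing k θ C) {χ : ℝ → ℝ} {Λ : ℝ} (hΛ : 0 ≤ Λ)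
    (hL : ∀ s t, |χ s - χ t| ≤ Λ * |s - t|) (h1 : ∀ s t, |χ s - χ t| ≤ 1)
    {f : ℝ → ℝ} (hf : Integrable f) (x : ℝ) :
    |kcomm k χ f x| ≤ C * (Λ + 1) * ∫ t, |f t| := by
  rw [← integral_const_mul, ← norm_eq_abs, kcomm]
  refine norm_integral_le_of_norm_le (hf.abs.const_mul _) (Filter.Eventually.of_forall fun t => ?_)
  rw [norm_mul]
  exact mul_le_mul_of_nonneg_right (hk.comm_kernel_le hΛ hL h1 x t) (abs_nonneg _)

theorem continuous_comm (hk : WeakSing k θ C) {χ : ℝ → ℝ} {Λ : ℝ} (hΛ : 0 ≤ Λ)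
    (hL : ∀ s t, |χ s - χ t| ≤ Λ * |s - t|) (h1 : ∀ s t, |χ s - χ t| ≤ 1) (hχ : Continuous χ)
    {f : ℝ → ℝ} (hf : Integrable f) : Continuous (kcomm k χ f) := by
  rw [continuous_iff_continuousAt]
  intro x
  refine continuousAt_of_dominated (bound := fun t => C * (Λ + 1) * |f t|) ?_ ?_
    (hf.abs.const_mul _) ?_
  · exact Filter.Eventually.of_forall fun y =>
      (hk.integrable_comm hΛ hL h1 hχ hf y).aestronglyMeasurable
  · refine Filter.Eventually.of_forall fun y => Filter.Eventually.of_forall fun t => ?_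
    rw [norm_mul]
    exact mul_le_mul_of_nonneg_right (hk.comm_kernel_le hΛ hL h1 y t) (abs_nonneg _)
  · have : ∀ᵐ t : ℝ, t ≠ x := by simp [ae_iff]
    filter_upwards [this] with t ht
    refine (ContinuousAt.mul ?_ (by fun_prop)).mul continuousAt_const
    refine ContinuousAt.comp (f := fun y => y - t) (x := x) ?_ (by fun_prop)
    refine hk.cont.continuousAt (isOpen_compl_singleton.mem_nhds ?_)
    intro h'
    exact ht (by linarith [mem_singleton_iff.1 h'])

theorem cv_mul_eq (hk : WeakSing k θ C) {χ : ℝ → ℝ} {Λ : ℝ} (hΛ : 0 ≤ Λ)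
    (hL : ∀ s t, |χ s - χ t| ≤ Λ * |s - t|) (h1 : ∀ s t, |χ s - χ t| ≤ 1) (hχ : Continuous χ)
    {f : ℝ → ℝ} (hf : Integrable f) {x : ℝ} (hg : Good k f x ∨ χ x = 0) :
    Good k (fun t => χ t * f t) x ∧
      cv k (fun t => χ t * f t) x = χ x * cv k f x + kcomm k χ f x := by
  have hc := hk.integrable_comm hΛ hL h1 hχ hf x
  have heq : (fun t => k (x - t) * (χ t * f t)) =
      fun t => χ x * (k (x - t) * f t) + k (x - t) * (χ t - χ x) * f t := by
    ext t; ring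
  have hi : Integrable fun t => χ x * (k (x - t) * f t) := by
    rcases hg with hg | hg
    · exact Integrable.const_mul hg _
    · simp [hg]
  constructor
  · unfold Good
    rw [heq]
    exact hi.add hc
  · unfold cv kcomm
    rw [heq, integral_add hi hc, integral_const_mul]

end WeakSing

/-- The average of the translates of `v` by `r * s`, `s ∈ [0, 1]`. -/
def avg (r : ℝ) (v : ℝ → ℝ) (t : ℝ) : ℝ := ∫ s in (0 : ℝ)..1, v (t - r * s)

theorem continuous_avg {r : ℝ} (hr : r ≠ 0) {v : ℝ → ℝ} (hv : Integrable v) :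
    Continuous (avg r v) := by
  have h1 : ∀ t, avg r v t = r⁻¹ * ((∫ s in (0 : ℝ)..t, v s) - ∫ s in (0 : ℝ)..(t - r), v s) := by
    intro t
    unfold avg
    rw [intervalIntegral.integral_comp_sub_mul v hr,
      intervalIntegral.integral_interval_sub_left hv.intervalIntegrable hv.intervalIntegrable]
    simp
  have h2 : Continuous fun t => ∫ s in (0 : ℝ)..t, v s :=
    intervalIntegral.continuous_primitive (fun _ _ => hv.intervalIntegrable) 0
  rw [show avg r v = _ from funext h1]
  exact continuous_const.mul (h2.sub (h2.comp (by fun_prop : Continuous fun t : ℝ => t - r)))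

theorem avg_eq_zero {r : ℝ} {v : ℝ → ℝ} {t : ℝ} (h : ∀ s, |t - s| ≤ |r| → v s = 0) :
    avg r v t = 0 := by
  unfold avg
  rw [intervalIntegral.integral_congr (g := fun _ => 0), intervalIntegral.integral_zero]
  intro s hs
  rw [uIcc_of_le zero_le_one] at hs
  refine h _ ?_
  rw [sub_sub_cancel, abs_mul, abs_of_nonneg hs.1]
  nlinarith [hs.2, abs_nonneg r]

theorem measurePreserving_shear (r : ℝ) :
    MeasurePreserving (fun p : ℝ × ℝ => (p.1, p.2 - r * p.1))
      ((volume.restrict (Ioc (0 : ℝ) 1)).prod volume)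
      ((volume.restrict (Ioc (0 : ℝ) 1)).prod volume) := by
  refine (MeasurePreserving.id _).skew_product (g := fun s t : ℝ => t - r * s)
    (by unfold Function.uncurry; fun_prop) ?_
  exact Filter.Eventually.of_forall fun s => map_sub_right_eq_self volume (r * s)

theorem integrable_shear (r : ℝ) {v : ℝ → ℝ} (hv : Integrable v) :
    Integrable (fun p : ℝ × ℝ => v (p.2 - r * p.1))
      ((volume.restrict (Ioc (0 : ℝ) 1)).prod volume) :=
  (measurePreserving_shear r).integrable_comp_of_integrable
    (g := fun p : ℝ × ℝ => v p.2) (hv.comp_snd _)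

theorem integrable_avg (r : ℝ) {v : ℝ → ℝ} (hv : Integrable v) : Integrable (avg r v) := by
  unfold avg
  simp only [intervalIntegral.integral_of_le zero_le_one]
  exact (integrable_shear r hv).integral_prod_right

theorem integral_abs_avg_le (r : ℝ) {v : ℝ → ℝ} (hv : Integrable v) :
    ∫ t, |avg r v t| ≤ ∫ t, |v t| := by
  have h := integrable_shear r hv.abs
  have h1 : ∫ t, avg r (fun t => |v t|) t = ∫ t, |v t| := by
    simp only [avg, intervalIntegral.integral_of_le zero_le_one]
    rw [integral_integral_swap (f := fun t s => |v (t - r * s)|) h.swap]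
    simp only [integral_sub_right_eq_self (fun t => |v t|)]
    simp
  rw [← h1]
  refine integral_mono (integrable_avg r hv).abs (integrable_avg r hv.abs) fun t => ?_
  exact intervalIntegral.abs_integral_le_integral_abs zero_le_one

theorem WeakSing.cv_avg {k : ℝ → ℝ} {θ C : ℝ} (hk : WeakSing k θ C) {v : ℝ → ℝ}
    (hv : Integrable v) (hvm : Measurable v) {r : ℝ} (hr : r ≠ 0) (x : ℝ) :
    cv k (avg r v) x = ∫ s in (0 : ℝ)..1, cv k v (x - r * s) := by
  have h0 := hk.integrable_prod_line hv hvm x hr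
  have h : Integrable (fun p : ℝ × ℝ => k (x - p.2) * v (p.2 - r * p.1))
      ((volume.restrict (Ioc (0 : ℝ) 1)).prod volume) := by
    have := (measurePreserving_shear r).integrable_comp_of_integrable h0
    refine this.congr (Filter.Eventually.of_forall fun p => ?_)
    simp only [Function.comp]
    rw [show x - r * p.1 - (p.2 - r * p.1) = x - p.2 by ring]
  unfold cv
  simp only [avg, intervalIntegral.integral_of_le zero_le_one, ← integral_const_mul]
  rw [integral_integral_swap (f := fun t s => k (x - t) * v (t - r * s)) h.swap]
  congr 1
  ext s
  rw [← integral_sub_right_eq_self (fun t => k (x - r * s - t) * v t) (r * s)]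
  congr 1
  ext t
  rw [show x - r * s - (t - r * s) = x - t by ring]

theorem WeakSing.cv_avg_kernel {k : ℝ → ℝ} {θ C : ℝ} (hk : WeakSing k θ C) {v : ℝ → ℝ}
    (hv : Integrable v) (hvm : Measurable v) {r : ℝ} (hr : r ≠ 0) (x : ℝ) :
    cv k (avg r v) x = ∫ t, (avg r k (x - t)) * v t := by
  rw [hk.cv_avg hv hvm hr]
  unfold cv
  simp only [avg, intervalIntegral.integral_of_le zero_le_one, ← integral_mul_const]
  have h0 := hk.integrable_prod_line hv hvm x hr
  rw [integral_integral_swap (f := fun s t => k (x - r * s - t) * v t) h0]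
  congr 1
  ext t
  congr 1
  ext s
  rw [show x - r * s - t = x - t - r * s by ring]

theorem abs_avg_sub_le {f : ℝ → ℝ} {x r c ε : ℝ} (hc : ContinuousOn f (Icc (x - |r|) (x + |r|)))
    (h : ∀ s ∈ Icc (x - |r|) (x + |r|), |f s - c| ≤ ε) : |avg r f x - c| ≤ ε := by
  have hm : ∀ s ∈ Icc (0 : ℝ) 1, x - r * s ∈ Icc (x - |r|) (x + |r|) := fun s hs => by
    have : |r * s| ≤ |r| := by
      rw [abs_mul, abs_of_nonneg hs.1]
      exact mul_le_of_le_one_right (abs_nonneg r) hs.2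
    have := abs_le.1 this
    constructor <;> linarith [this.1, this.2]
  have hI : IntervalIntegrable (fun s => f (x - r * s)) volume 0 1 := by
    apply ContinuousOn.intervalIntegrable
    rw [uIcc_of_le zero_le_one]
    exact hc.comp (by fun_prop) hm
  have : avg r f x - c = ∫ s in (0 : ℝ)..1, (f (x - r * s) - c) := by
    rw [intervalIntegral.integral_sub hI intervalIntegrable_const]
    simp [avg]
  rw [this, ← norm_eq_abs]
  have h2 := intervalIntegral.norm_integral_le_of_norm_le_const (a := (0 : ℝ)) (b := 1) (C := ε)
    (f := fun s => f (x - r * s) - c) fun s hs => by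
      rw [uIoc_of_le zero_le_one] at hs
      exact h _ (hm s ⟨hs.1.le, hs.2⟩)
  simpa using h2

theorem avg_uniform {Ψ : ℝ → ℝ} (hΨ : Continuous Ψ) (A B : ℝ) {ε : ℝ} (hε : 0 < ε) :
    ∃ δ > 0, ∀ r, |r| ≤ δ → ∀ x ∈ Icc A B, |avg r Ψ x - Ψ x| ≤ ε := by
  have hu := (isCompact_Icc (a := A - 1) (b := B + 1)).uniformContinuousOn_of_continuous
    hΨ.continuousOn
  obtain ⟨δ, hδ, h⟩ := Metric.uniformContinuousOn_iff.1 hu ε hε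
  refine ⟨min 1 (δ / 2), by positivity, fun r hr x hx => ?_⟩
  have h1 := hr.trans (min_le_left _ _)
  have h2 := hr.trans (min_le_right _ _)
  refine abs_avg_sub_le hΨ.continuousOn fun s hs => ?_
  refine (h s ⟨?_, ?_⟩ x ⟨?_, ?_⟩ ?_).le
  any_goals linarith [hs.1, hs.2, hx.1, hx.2]
  rw [Real.dist_eq]
  refine lt_of_le_of_lt (abs_le.2 ⟨?_, ?_⟩ : _ ≤ |r|) (by linarith) <;> linarith [hs.1, hs.2]

theorem avg_sub {r : ℝ} {f g : ℝ → ℝ} (t : ℝ)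
    (hf : IntervalIntegrable (fun s => f (t - r * s)) volume 0 1)
    (hg : IntervalIntegrable (fun s => g (t - r * s)) volume 0 1) :
    avg r (fun t => f t - g t) t = avg r f t - avg r g t :=
  intervalIntegral.integral_sub hf hg

theorem intervalIntegrable_line {v : ℝ → ℝ} (hv : Integrable v) {r : ℝ} (hr : r ≠ 0) (t : ℝ) :
    IntervalIntegrable (fun s => v (t - r * s)) volume 0 1 := by
  refine Integrable.intervalIntegrable ?_
  exact (hv.comp_sub_left t).comp_mul_left' hr

theorem avg_L1 {v : ℝ → ℝ} (hv : Integrable v) {ε : ℝ} (hε : 0 < ε) :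
    ∃ δ > 0, ∀ r, r ≠ 0 → |r| ≤ δ → ∫ t, |avg r v t - v t| ≤ ε := by
  obtain ⟨g, hgc, hg, hgcont, hgi⟩ := hv.exists_hasCompactSupport_integral_sub_le
    (by positivity : 0 < ε / 4)
  obtain ⟨R, hR⟩ := hgc.isCompact.isBounded.subset_closedBall 0
  have hR' : ∀ t, R < |t| → g t = 0 := fun t ht => by
    by_contra h
    have := hR (subset_tsupport g h)
    rw [Metric.mem_closedBall, Real.dist_eq, sub_zero] at this
    linarith
  set R' := |R| + 1 with hR'def
  have hRp : 0 < R' := by positivity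
  obtain ⟨δ, hδ, hu⟩ := avg_uniform hgcont (-R') R' (by positivity : 0 < ε / (4 * R'))
  refine ⟨min 1 δ, by positivity, fun r hr0 hr => ?_⟩
  have h1 := hr.trans (min_le_left _ _)
  have h2 := hr.trans (min_le_right _ _)
  have hd : Integrable fun t => v t - g t := hv.sub hgi
  have hz : ∀ t, t ∉ Icc (-R') R' → avg r g t - g t = 0 := fun t ht => by
    have hRt : R' < |t| := by
      by_contra h
      exact ht (abs_le.1 (not_lt.1 h))
    have hRR := le_abs_self R
    rw [hR' t (by linarith), avg_eq_zero, sub_zero]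
    intro s hs
    apply hR'
    have := abs_sub_abs_le_abs_sub t s
    linarith
  have hgd : ∫ t, |avg r g t - g t| ≤ ε / 2 := by
    rw [← setIntegral_eq_integral_of_forall_compl_eq_zero (s := Icc (-R') R')
      fun t ht => by rw [hz t ht, abs_zero]]
    have := norm_setIntegral_le_of_norm_le_const (μ := volume) (s := Icc (-R') R')
      (f := fun t => |avg r g t - g t|) (C := ε / (4 * R')) (by simp)
      fun t ht => by rw [norm_eq_abs, abs_abs]; exact hu r h2 t ht
    refine (le_abs_self _).trans (this.trans (le_of_eq ?_))
    rw [measureReal_def, Real.volume_Icc, ENNReal.toReal_ofReal (by linarith)]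
    field_simp
    ring
  have hsplit : ∀ t, |avg r v t - v t| ≤
      |avg r (fun t => v t - g t) t| + |avg r g t - g t| + |v t - g t| := fun t => by
    rw [avg_sub t (intervalIntegrable_line hv hr0 t) (intervalIntegrable_line hgi hr0 t)]
    calc |avg r v t - v t|
        = |(avg r v t - avg r g t) + (avg r g t - g t) - (v t - g t)| := by ring_nf
      _ ≤ |(avg r v t - avg r g t) + (avg r g t - g t)| + |v t - g t| := abs_sub _ _
      _ ≤ _ := by gcongr; exact abs_add_le _ _
  have i1 := (integrable_avg r hd).abs
  have i2 := ((integrable_avg r hgi).sub hgi).abs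
  have i3 := hd.abs
  calc ∫ t, |avg r v t - v t|
      ≤ ∫ t, (|avg r (fun t => v t - g t) t| + |avg r g t - g t| + |v t - g t|) :=
        integral_mono ((integrable_avg r hv).sub hv).abs ((i1.add i2).add i3) hsplit
    _ = (∫ t, |avg r (fun t => v t - g t) t|) + (∫ t, |avg r g t - g t|) +
          ∫ t, |v t - g t| := by
        have e1 := integral_add (i1.add i2) i3
        have e2 := integral_add i1 i2
        simp only [Pi.add_apply, Pi.sub_apply] at e1 e2
        rw [e1, e2]
    _ ≤ ε / 4 + ε / 2 + ε / 4 := by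
        gcongr
        · exact (integral_abs_avg_le r hd).trans hg
        · exact hg
    _ = ε := by ring

theorem measurable_avg {k : ℝ → ℝ} (hk : Measurable k) (r : ℝ) : Measurable (avg r k) := by
  unfold avg
  simp only [intervalIntegral.integral_of_le zero_le_one]
  have : StronglyMeasurable (fun p : ℝ × ℝ => k (p.1 - r * p.2)) :=
    (hk.comp (by fun_prop)).stronglyMeasurable
  exact (this.integral_prod_right' (ν := volume.restrict (Ioc 0 1))).measurable

/-- One-sided averages of the kernel are controlled by the kernel itself. -/
def DirAvg (k : ℝ → ℝ) (σ : ℝ) : Prop :=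
  ∃ C', ∀ r > 0, ∀ s, |avg (σ * r) k s| ≤ C' * |k s|

theorem WeakSing.tendsto_cv_avg {k : ℝ → ℝ} {θ C : ℝ} (hk : WeakSing k θ C) {σ : ℝ} (hσ : σ ≠ 0)
    (hd : DirAvg k σ) {v : ℝ → ℝ} (hv : Integrable v) (hvm : Measurable v) {x : ℝ}
    (hg : Good k v x) :
    Filter.Tendsto (fun r => cv k (avg (σ * r) v) x) (nhdsWithin 0 (Ioi 0)) (nhds (cv k v x)) := by
  obtain ⟨C', hC'⟩ := hd
  have hev : ∀ᶠ r : ℝ in nhdsWithin 0 (Ioi 0), 0 < r := eventually_mem_nhdsWithin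
  have h1 : Filter.Tendsto (fun r => ∫ t, avg (σ * r) k (x - t) * v t) (nhdsWithin 0 (Ioi 0))
      (nhds (cv k v x)) := by
    refine tendsto_integral_filter_of_dominated_convergence (fun t => C' * |k (x - t) * v t|)
      ?_ ?_ ((Integrable.abs hg).const_mul C') ?_
    · exact Filter.Eventually.of_forall fun r => (((measurable_avg hk.meas _).comp
        (measurable_const.sub measurable_id)).mul hvm).aestronglyMeasurable
    · filter_upwards [hev] with r hr
      refine Filter.Eventually.of_forall fun t => ?_
      rw [norm_mul, norm_eq_abs, norm_eq_abs, abs_mul, ← mul_assoc]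
      exact mul_le_mul_of_nonneg_right (hC' r hr _) (abs_nonneg _)
    · have : ∀ᵐ t : ℝ, t ≠ x := by simp [ae_iff]
      filter_upwards [this] with t ht
      refine Filter.Tendsto.mul_const _ ?_
      have hne : 0 < |x - t| := abs_pos.2 (sub_ne_zero.2 ht.symm)
      have hcont : ContinuousAt k (x - t) :=
        hk.cont.continuousAt (isOpen_compl_singleton.mem_nhds (sub_ne_zero.2 ht.symm))
      rw [Metric.tendsto_nhds]
      intro ε hε
      obtain ⟨δ, hδ, hδ'⟩ := Metric.continuousAt_iff.1 hcont (ε / 2) (half_pos hε)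
      have hsmall : ∀ᶠ r : ℝ in nhdsWithin 0 (Ioi 0), |σ * r| < min δ |x - t| := by
        have : Filter.Tendsto (fun r : ℝ => |σ * r|) (nhds 0) (nhds 0) := by
          have := (by fun_prop : Continuous fun r : ℝ => |σ * r|).tendsto 0
          simpa using this
        exact (this.mono_left nhdsWithin_le_nhds).eventually_lt_const (lt_min hδ hne)
      filter_upwards [hsmall] with r hr
      rw [Real.dist_eq]
      refine lt_of_le_of_lt (abs_avg_sub_le (ε := ε / 2) ?_ ?_) (half_lt_self hε)
      · refine hk.cont.mono fun s hs => ?_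
        have hr' := hr.trans_le (min_le_right _ _)
        intro h0
        rw [mem_singleton_iff] at h0
        subst h0
        have : |x - t| ≤ |σ * r| := abs_le.2 ⟨by linarith [hs.2], by linarith [hs.1]⟩
        linarith
      · intro s hs
        have := @hδ' s (by
          rw [Real.dist_eq]
          refine lt_of_le_of_lt (abs_le.2 ⟨?_, ?_⟩) (hr.trans_le (min_le_left _ _))
          · linarith [hs.1]
          · linarith [hs.2])
        rw [Real.dist_eq] at this
        exact this.le
  refine h1.congr' ?_
  filter_upwards [hev] with r hr
  exact (hk.cv_avg_kernel hv hvm (mul_ne_zero hσ hr.ne') x).symm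

/-- The one-sided power kernel. -/
def powKer (c θ s : ℝ) : ℝ := if 0 < s then c * s ^ (-θ) else 0

theorem powKer_eq_indicator (c θ : ℝ) :
    powKer c θ = (Ioi (0 : ℝ)).indicator fun s => c * s ^ (-θ) := by
  ext s; simp [powKer, indicator]

theorem abs_powKer (c θ s : ℝ) : |powKer c θ s| = powKer |c| θ s := by
  unfold powKer
  split_ifs with h
  · rw [abs_mul, abs_of_nonneg (a := s ^ (-θ)) (by positivity)]
  · simp

theorem powKer_nonneg {c : ℝ} (hc : 0 ≤ c) (θ s : ℝ) : 0 ≤ powKer c θ s := by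
  unfold powKer
  split_ifs with h <;> positivity

theorem weakSing_powKer (c : ℝ) {θ : ℝ} (h0 : 0 < θ) (h1 : θ < 1) :
    WeakSing (powKer c θ) θ |c| where
  meas := by
    rw [powKer_eq_indicator]
    exact (by fun_prop : Measurable fun s : ℝ => c * s ^ (-θ)).indicator measurableSet_Ioi
  cont := by
    intro s hs
    refine ContinuousAt.continuousWithinAt ?_
    rcases lt_or_gt_of_ne (show s ≠ 0 from hs) with h | h
    · refine (continuousAt_const (y := (0 : ℝ))).congr ?_
      filter_upwards [Iio_mem_nhds h] with t ht
      simp [powKer, not_lt.2 (le_of_lt (mem_Iio.1 ht))]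
    · have : ContinuousAt (fun s : ℝ => c * s ^ (-θ)) s :=
        continuousAt_const.mul (continuousAt_rpow_const _ _ (Or.inl h.ne'))
      refine this.congr ?_
      filter_upwards [Ioi_mem_nhds h] with t ht
      simp [powKer, show 0 < t from ht]
  bound s := by
    unfold powKer
    split_ifs with h
    · rw [abs_mul, abs_of_pos h, abs_of_nonneg (a := s ^ (-θ)) (by positivity)]
    · simp only [abs_zero]; positivity
  pos := h0
  lt_one := h1
  nonneg := abs_nonneg c

theorem integral_powKer_le {c : ℝ} (hc : 0 ≤ c) {θ : ℝ} (h1 : θ < 1) {s r : ℝ} (hs : 0 < s)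
    (hr : 0 < r) : ∫ t in (s - r)..s, powKer c θ t ≤ c * (s ^ (1 - θ) / (1 - θ)) := by
  have hI : IntervalIntegrable (fun t : ℝ => c * t ^ (-θ)) volume 0 s :=
    (intervalIntegral.intervalIntegrable_rpow' (by linarith)).const_mul c
  have e : ∫ t in (0 : ℝ)..s, c * t ^ (-θ) = c * (s ^ (1 - θ) / (1 - θ)) := by
    rw [intervalIntegral.integral_const_mul, integral_rpow (Or.inl (by linarith)),
      zero_rpow (by linarith), show -θ + 1 = 1 - θ by ring, sub_zero]
  rw [← e, intervalIntegral.integral_of_le (by linarith), intervalIntegral.integral_of_le hs.le,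
    powKer_eq_indicator, setIntegral_indicator measurableSet_Ioi]
  refine setIntegral_mono_set ((intervalIntegrable_iff_integrableOn_Ioc_of_le hs.le).1 hI) ?_ ?_
  · rw [Filter.EventuallyLE, ae_restrict_iff' measurableSet_Ioc]
    exact Filter.Eventually.of_forall fun t ht => by
      have := ht.1
      simp only [Pi.zero_apply]; positivity
  · exact Filter.Eventually.of_forall fun t ht => ⟨ht.2, ht.1.2⟩

theorem avg_abs_le {k : ℝ → ℝ} (r s : ℝ) : |avg r k s| ≤ avg r (fun t => |k t|) s :=
  intervalIntegral.abs_integral_le_integral_abs zero_le_one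

theorem dirAvg_powKer (c : ℝ) {θ : ℝ} (h0 : 0 < θ) (h1 : θ < 1) : DirAvg (powKer c θ) 1 := by
  refine ⟨2 / (1 - θ), fun r hr s => ?_⟩
  have hθ : 0 < 1 - θ := by linarith
  refine (avg_abs_le _ _).trans ?_
  simp only [abs_powKer, one_mul]
  have hc := abs_nonneg c
  generalize |c| = d at hc
  rcases le_or_gt s 0 with hs | hs
  · have : avg r (powKer d θ) s = 0 := by
      unfold avg
      rw [intervalIntegral.integral_congr (g := fun _ => 0), intervalIntegral.integral_zero]
      intro t ht
      rw [uIcc_of_le zero_le_one] at ht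
      have := mul_nonneg hr.le ht.1
      simp [powKer, show ¬ (0 < s - r * t) by linarith]
    rw [this]
    exact mul_nonneg (by positivity) (powKer_nonneg hc _ _)
  have hks : powKer d θ s = d * s ^ (-θ) := by simp [powKer, hs]
  rw [hks]
  have hsp : 0 < s ^ (-θ) := by positivity
  rcases le_or_gt r (s / 2) with h | h
  · have h2 : ∀ t ∈ uIoc (0 : ℝ) 1, ‖powKer d θ (s - r * t)‖ ≤ d * (s / 2) ^ (-θ) := fun t ht => by
      rw [uIoc_of_le zero_le_one] at ht
      have : s / 2 ≤ s - r * t := by nlinarith [ht.1, ht.2]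
      rw [norm_eq_abs, abs_of_nonneg (powKer_nonneg hc _ _)]
      have hpos : 0 < s - r * t := by linarith
      simp only [powKer, hpos, if_true]
      exact mul_le_mul_of_nonneg_left
        (rpow_le_rpow_of_nonpos (half_pos hs) this (by linarith)) hc
    have h3 := intervalIntegral.norm_integral_le_of_norm_le_const h2
    rw [norm_eq_abs] at h3
    simp only [sub_zero, abs_one, mul_one] at h3
    refine (le_abs_self _).trans (h3.trans ?_)
    have h4 : (s / 2) ^ (-θ) ≤ 2 * s ^ (-θ) := by
      rw [div_rpow hs.le (by norm_num), rpow_neg (by norm_num : (0:ℝ) ≤ 2), div_inv_eq_mul, mul_comm]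
      gcongr
      calc (2 : ℝ) ^ θ ≤ 2 ^ (1 : ℝ) := rpow_le_rpow_of_exponent_le (by norm_num) h1.le
        _ = 2 := by simp
    have h5 : 2 ≤ 2 / (1 - θ) := by rw [le_div_iff₀ hθ]; nlinarith
    calc d * (s / 2) ^ (-θ) ≤ d * (2 * s ^ (-θ)) := by gcongr
      _ = 2 * (d * s ^ (-θ)) := by ring
      _ ≤ _ := by gcongr
  · have e : avg r (powKer d θ) s = r⁻¹ * ∫ t in (s - r)..s, powKer d θ t := by
      unfold avg
      rw [intervalIntegral.integral_comp_sub_mul _ hr.ne']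
      simp
    rw [e]
    calc r⁻¹ * ∫ t in (s - r)..s, powKer d θ t ≤ r⁻¹ * (d * (s ^ (1 - θ) / (1 - θ))) := by
          gcongr
          exact integral_powKer_le hc h1 hs hr
      _ ≤ (s / 2)⁻¹ * (d * (s ^ (1 - θ) / (1 - θ))) := by
          gcongr
      _ = _ := by
          rw [show (1 - θ) = 1 + -θ by ring, rpow_add hs, rpow_one]
          field_simp

theorem DirAvg.comp_neg {k : ℝ → ℝ} (h : DirAvg k 1) : DirAvg (fun s => k (-s)) (-1) := by
  obtain ⟨C', hC'⟩ := h
  refine ⟨C', fun r hr s => ?_⟩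
  have e : avg (-1 * r) (fun s => k (-s)) s = avg (1 * r) k (-s) := by
    unfold avg
    congr 1
    ext t
    ring_nf
  rw [e]
  exact hC' r hr (-s)

/-- The sum of the convolutions with two kernels. -/
def opT (k₁ k₂ f : ℝ → ℝ) (x : ℝ) : ℝ := cv k₁ f x + cv k₂ f x

theorem avg_congr_ae {r : ℝ} (hr : r ≠ 0) {f g : ℝ → ℝ} (h : f =ᵐ[volume] g) (x : ℝ) :
    avg r f x = avg r g x := by
  unfold avg
  rw [intervalIntegral.integral_comp_sub_mul f hr, intervalIntegral.integral_comp_sub_mul g hr,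
    intervalIntegral.integral_congr_ae (h.mono fun _ h _ => h)]

theorem opT_avg {k₁ k₂ : ℝ → ℝ} {θ₁ θ₂ C₁ C₂ : ℝ} (h₁ : WeakSing k₁ θ₁ C₁)
    (h₂ : WeakSing k₂ θ₂ C₂) {v Ψ : ℝ → ℝ} (hv : Integrable v) (hvm : Measurable v)
    (hΨ : ∀ᵐ x, opT k₁ k₂ v x = Ψ x) {r : ℝ} (hr : r ≠ 0) (x : ℝ) :
    opT k₁ k₂ (avg r v) x = avg r Ψ x := by
  rw [← avg_congr_ae hr hΨ]
  have hI : ∀ {k : ℝ → ℝ} {θ C : ℝ}, WeakSing k θ C →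
      IntervalIntegrable (fun s => cv k v (x - r * s)) volume 0 1 := fun hk => by
    rw [intervalIntegrable_iff_integrableOn_Ioc_of_le zero_le_one]
    exact (hk.integrable_prod_line hv hvm x hr).integral_prod_left
  unfold opT
  rw [h₁.cv_avg hv hvm hr, h₂.cv_avg hv hvm hr, avg, intervalIntegral.integral_add (hI h₁) (hI h₂)]

/-- A priori control of the first convolution by the sum of the two. -/
def APriori (k₁ k₂ : ℝ → ℝ) : Prop :=
  ∃ C, 0 ≤ C ∧ ∀ w : ℝ → ℝ, Continuous w → HasCompactSupport w → ∀ B x : ℝ,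
    (∀ s, |s - x| ≤ 1 → |opT k₁ k₂ w s| ≤ B) → |cv k₁ w x| ≤ C * (B + ∫ t, |w t|)

theorem exists_gadget {k₁ k₂ : ℝ → ℝ} {θ₁ θ₂ C₁ C₂ : ℝ} (h₁ : WeakSing k₁ θ₁ C₁)
    (h₂ : WeakSing k₂ θ₂ C₂) (hA : ¬ APriori k₁ k₂) (x₀ : ℝ) {r η : ℝ} (hr : 0 < r)
    (hη : 0 < η) :
    ∃ G : ℝ → ℝ, Continuous G ∧ (∀ t, r ≤ |x₀ - t| → G t = 0) ∧ (∫ t, |G t|) ≤ η ∧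
      (∀ x, |opT k₁ k₂ G x| ≤ η) ∧ cv k₁ G x₀ = 1 := by
  set ρ := min r 1 with hρdef
  have hρ : 0 < ρ := by positivity
  set Λ := 3 / ρ with hΛdef
  have hΛ : 0 ≤ Λ := by positivity
  set χ := cutoff x₀ ρ with hχdef
  have hχc : Continuous χ := continuous_cutoff x₀ ρ
  have hL : ∀ s t, |χ s - χ t| ≤ Λ * |s - t| := cutoff_lipschitz hρ
  have hχ0 : ∀ t, 0 ≤ χ t := cutoff_nonneg x₀ ρ
  have hχ1 : ∀ t, χ t ≤ 1 := cutoff_le_one x₀ ρ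
  have h1 : ∀ s t, |χ s - χ t| ≤ 1 := fun s t =>
    abs_le.2 ⟨by linarith [hχ0 s, hχ1 t], by linarith [hχ0 t, hχ1 s]⟩
  set M := (C₁ + C₂) * (Λ + 1) with hMdef
  have hC₁ := h₁.nonneg
  have hC₂ := h₂.nonneg
  have hM : 0 ≤ M := by positivity
  set ε := min η 1 with hεdef
  have hε : 0 < ε := by positivity
  have hεη : ε ≤ η := min_le_left _ _
  have hε1 : ε ≤ 1 := min_le_right _ _
  unfold APriori at hA
  push Not at hA
  obtain ⟨w, hw, hwc, B, x, hB, hlt⟩ := hA (2 * (M + 1) / ε) (by positivity)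
  have hwi : Integrable w := hw.integrable_of_hasCompactSupport hwc
  have hB0 : 0 ≤ B := (abs_nonneg _).trans (hB x (by simp))
  have hm0 : 0 ≤ ∫ t, |w t| := integral_nonneg fun _ => abs_nonneg _
  set A := cv k₁ w x with hAdef
  have hApos : 0 < |A| := lt_of_le_of_lt (by positivity) hlt
  set w₁ : ℝ → ℝ := fun t => A⁻¹ * w (t - (x₀ - x)) with hw₁
  have hw₁c : Continuous w₁ := by fun_prop
  have hw₁i : Integrable w₁ := (hwi.comp_sub_right (x₀ - x)).const_mul _
  have hcv : ∀ (k : ℝ → ℝ) (s : ℝ), cv k w₁ s = A⁻¹ * cv k w (s - (x₀ - x)) := fun k s => by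
    rw [hw₁, cv_const_mul, cv_comp_add]
  have hw₁n : ∫ t, |w₁ t| = |A|⁻¹ * ∫ t, |w t| := by
    simp only [hw₁, abs_mul, abs_inv]
    rw [integral_const_mul, integral_sub_right_eq_self (fun t => |w t|)]
  set m := ∫ t, |w₁ t| with hmdef
  have hm0' : 0 ≤ m := integral_nonneg fun _ => abs_nonneg _
  set b := |A|⁻¹ * B with hbdef
  have hb0 : 0 ≤ b := by positivity
  have hbm : (M + 1) * (b + m) ≤ ε / 2 := by
    have h3 : 2 * (M + 1) / ε * (B + ∫ t, |w t|) ≤ |A| := hlt.le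
    rw [hw₁n, hbdef, ← mul_add]
    rw [div_mul_eq_mul_div, div_le_iff₀ hε] at h3
    rw [mul_left_comm, ← div_eq_inv_mul, div_le_iff₀ hApos]
    linarith
  have hTw₁ : ∀ s, |s - x₀| ≤ 1 → |opT k₁ k₂ w₁ s| ≤ b := fun s hs => by
    have := hB (s - (x₀ - x)) (by rwa [show s - (x₀ - x) - x = s - x₀ by ring])
    unfold opT at this ⊢
    rw [hcv, hcv, ← mul_add, abs_mul, abs_inv]
    exact mul_le_mul_of_nonneg_left this (by positivity)
  have hgood : ∀ {k : ℝ → ℝ} {θ C : ℝ}, WeakSing k θ C → ∀ s, Good k w₁ s := fun hk s =>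
    hk.good_of_continuousAt hw₁i hw₁c.continuousAt
  have e₁ := fun s => h₁.cv_mul_eq hΛ hL h1 hχc hw₁i (Or.inl (hgood h₁ s))
  have e₂ := fun s => h₂.cv_mul_eq hΛ hL h1 hχc hw₁i (Or.inl (hgood h₂ s))
  have b₁ := h₁.abs_comm_le hΛ hL h1 hw₁i
  have b₂ := h₂.abs_comm_le hΛ hL h1 hw₁i
  rw [← hmdef] at b₁ b₂
  have hsmall : b + M * m ≤ ε / 2 := by nlinarith
  have hT0 : ∀ s, |opT k₁ k₂ (fun t => χ t * w₁ t) s| ≤ ε / 2 := fun s => by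
    have hχT : |χ s * opT k₁ k₂ w₁ s| ≤ b := by
      rcases le_or_gt |s - x₀| 1 with hs | hs
      · rw [abs_mul, abs_of_nonneg (hχ0 s)]
        calc χ s * |opT k₁ k₂ w₁ s| ≤ 1 * b := by
              gcongr
              · exact hχ1 s
              · exact hTw₁ s hs
          _ = b := one_mul b
      · have : χ s = 0 := cutoff_eq_zero hρ (by
          rw [abs_sub_comm]
          have : ρ ≤ 1 := min_le_right _ _
          linarith)
        rw [this]; simpa using hb0
    calc |opT k₁ k₂ (fun t => χ t * w₁ t) s|
        = |χ s * opT k₁ k₂ w₁ s + kcomm k₁ χ w₁ s + kcomm k₂ χ w₁ s| := by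
          rw [opT, (e₁ s).2, (e₂ s).2, opT]; ring_nf
      _ ≤ |χ s * opT k₁ k₂ w₁ s| + |kcomm k₁ χ w₁ s| + |kcomm k₂ χ w₁ s| := abs_add_three _ _ _
      _ ≤ b + C₁ * (Λ + 1) * m + C₂ * (Λ + 1) * m := by
          gcongr
          · exact b₁ s
          · exact b₂ s
      _ = b + M * m := by rw [hMdef]; ring
      _ ≤ _ := hsmall
  set κ := cv k₁ (fun t => χ t * w₁ t) x₀ with hκdef
  have hκ : |κ - 1| ≤ 1 / 2 := by
    rw [hκdef, (e₁ x₀).2, hcv, show x₀ - (x₀ - x) = x by ring, ← hAdef,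
      inv_mul_cancel₀ (abs_pos.1 hApos), hχdef, cutoff_eq_one hρ (by simp; positivity)]
    rw [show 1 * 1 + kcomm k₁ (cutoff x₀ ρ) w₁ x₀ - 1 = kcomm k₁ (cutoff x₀ ρ) w₁ x₀ by ring]
    refine (b₁ x₀).trans ?_
    have : C₁ * (Λ + 1) * m ≤ M * m := by
      rw [hMdef]; gcongr; linarith
    linarith
  have hκ2 : 1 / 2 ≤ κ := by linarith [(abs_le.1 hκ).1]
  have hκi : |κ⁻¹| ≤ 2 := by
    rw [abs_of_pos (by positivity)]
    rw [inv_le_comm₀ (by linarith) (by norm_num)]; linarith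
  refine ⟨fun t => κ⁻¹ * (χ t * w₁ t), by fun_prop, ?_, ?_, ?_, ?_⟩
  · intro t ht
    have hρr : ρ ≤ r := min_le_left _ _
    have h0 : χ t = 0 := cutoff_eq_zero hρ (by linarith)
    simp [h0]
  · simp only [abs_mul]
    rw [integral_const_mul]
    have : ∫ t, |χ t| * |w₁ t| ≤ m := by
      refine integral_mono ?_ hw₁i.abs fun t => ?_
      · refine Integrable.mono' hw₁i.abs ?_ (Filter.Eventually.of_forall fun t => ?_)
        · exact (by fun_prop : Continuous fun t => |χ t| * |w₁ t|).aestronglyMeasurable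
        · rw [norm_mul, norm_eq_abs, abs_abs, norm_eq_abs, abs_abs, abs_of_nonneg (hχ0 t)]
          exact mul_le_of_le_one_left (abs_nonneg _) (hχ1 t)
      · change |χ t| * |w₁ t| ≤ |w₁ t|
        rw [abs_of_nonneg (hχ0 t)]
        exact mul_le_of_le_one_left (abs_nonneg _) (hχ1 t)
    have h0 : 0 ≤ ∫ t, |χ t| * |w₁ t| := integral_nonneg fun _ => by positivity
    have : m ≤ ε / 2 := by nlinarith
    nlinarith
  · intro s
    have := hT0 s
    unfold opT at this ⊢
    rw [cv_const_mul, cv_const_mul, ← mul_add, abs_mul]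
    nlinarith [abs_nonneg (cv k₁ (fun t => χ t * w₁ t) s + cv k₂ (fun t => χ t * w₁ t) s)]
  · rw [cv_const_mul, ← hκdef, inv_mul_cancel₀ (by linarith)]

theorem exists_mollify {k₁ k₂ : ℝ → ℝ} {θ₁ θ₂ C₁ C₂ : ℝ} (h₁ : WeakSing k₁ θ₁ C₁)
    (h₂ : WeakSing k₂ θ₂ C₂) (hd₁ : DirAvg k₁ 1) (hd₂ : DirAvg k₂ (-1)) {v Ψ : ℝ → ℝ}
    (hv : Integrable v) (hvm : Measurable v) {A B : ℝ} (hvs : ∀ t, t ∉ Icc A B → v t = 0)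
    (hΨc : Continuous Ψ) (hΨ : ∀ᵐ x, opT k₁ k₂ v x = Ψ x) (a b : ℝ) {η ρ : ℝ} (hη : 0 < η)
    (hρ : 0 < ρ) :
    ∃ r, r ≠ 0 ∧ |r| ≤ ρ ∧ ∫ t, |avg r v t - v t| ≤ η ∧
      (∀ x ∈ Icc a b, |avg r Ψ x - Ψ x| ≤ η) ∧
      (APriori k₁ k₂ → ∀ x ∈ Icc a b,
        (Good k₁ v x → |cv k₁ (avg r v) x - cv k₁ v x| ≤ η) ∧
        (Good k₂ v x → |cv k₂ (avg r v) x - cv k₂ v x| ≤ η)) := by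
  obtain ⟨C, hC0, hC⟩ : ∃ C : ℝ, 0 ≤ C ∧ (APriori k₁ k₂ → ∀ w : ℝ → ℝ, Continuous w →
      HasCompactSupport w → ∀ B x : ℝ,
      (∀ s, |s - x| ≤ 1 → |opT k₁ k₂ w s| ≤ B) → |cv k₁ w x| ≤ C * (B + ∫ t, |w t|)) := by
    by_cases h : APriori k₁ k₂
    · obtain ⟨C, hC0, hC⟩ := id h
      exact ⟨C, hC0, fun _ => hC⟩
    · exact ⟨0, le_rfl, fun h' => absurd h' h⟩
  set ε := η / (4 * C + 4) with hεdef
  have hε : 0 < ε := by positivity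
  have hε4 : 4 * C * ε + 4 * ε = η := by rw [hεdef]; field_simp
  have hCε : 0 ≤ C * ε := by positivity
  have hεη : ε ≤ η := by nlinarith
  obtain ⟨δ₁, hδ₁, hu⟩ := avg_uniform hΨc (a - 1) (b + 1) hε
  obtain ⟨δ₂, hδ₂, hl⟩ := avg_L1 hv hε
  set r := min ρ (min δ₁ δ₂) with hrdef
  have hr : 0 < r := by positivity
  have hra : |r| = r := abs_of_pos hr
  have hr1 : r ≤ δ₁ := (min_le_right _ _).trans (min_le_left _ _)
  have hr2 : r ≤ δ₂ := (min_le_right _ _).trans (min_le_right _ _)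
  have key : APriori k₁ k₂ → ∀ x ∈ Icc a b, ∀ r', r' ≠ 0 → |r'| ≤ r →
      |cv k₁ (avg r v) x - cv k₁ (avg r' v) x| ≤ η ∧
      |cv k₂ (avg r v) x - cv k₂ (avg r' v) x| ≤ η := by
    intro hA x hx r' hr'0 hr'
    have hc1 := continuous_avg hr.ne' hv
    have hc2 := continuous_avg hr'0 hv
    have hi1 := integrable_avg r hv
    have hi2 := integrable_avg r' hv
    have hg1 : ∀ {k : ℝ → ℝ} {θ C : ℝ}, WeakSing k θ C → ∀ s, Good k (avg r v) s := fun hk s =>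
      hk.good_of_continuousAt hi1 hc1.continuousAt
    have hg2 : ∀ {k : ℝ → ℝ} {θ C : ℝ}, WeakSing k θ C → ∀ s, Good k (avg r' v) s := fun hk s =>
      hk.good_of_continuousAt hi2 hc2.continuousAt
    set w : ℝ → ℝ := fun t => avg r v t - avg r' v t with hw
    have e1 : ∀ s, cv k₁ w s = cv k₁ (avg r v) s - cv k₁ (avg r' v) s := fun s =>
      cv_sub (hg1 h₁ s) (hg2 h₁ s)
    have e2 : ∀ s, cv k₂ w s = cv k₂ (avg r v) s - cv k₂ (avg r' v) s := fun s =>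
      cv_sub (hg1 h₂ s) (hg2 h₂ s)
    have hT : ∀ s ∈ Icc (a - 1) (b + 1), |opT k₁ k₂ w s| ≤ 2 * ε := fun s hs => by
      have f1 := opT_avg h₁ h₂ hv hvm hΨ hr.ne' s
      have f2 := opT_avg h₁ h₂ hv hvm hΨ hr'0 s
      have g1 := abs_le.1 (hu r (by rw [hra]; exact hr1) s hs)
      have g2 := abs_le.1 (hu r' (hr'.trans hr1) s hs)
      unfold opT at f1 f2 ⊢
      rw [e1, e2, abs_le]
      constructor <;> linarith [g1.1, g1.2, g2.1, g2.2]
    have hwc : HasCompactSupport w := by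
      refine hasCompactSupport_of_vanish (A := A - r) (B := B + r) fun t ht => ?_
      have hz : ∀ q : ℝ, |q| ≤ r → avg q v t = 0 := fun q hq => by
        refine avg_eq_zero fun s hs => hvs s fun hs' => ht ?_
        have := abs_le.1 (hs.trans hq)
        exact ⟨by linarith [hs'.1], by linarith [hs'.2]⟩
      simp only [hw, hz r hra.le, hz r' hr', sub_zero]
    have hwn : ∫ t, |w t| ≤ 2 * ε := by
      have n1 := hl r hr.ne' (by rw [hra]; exact hr2)
      have n2 := hl r' hr'0 (hr'.trans hr2)
      calc ∫ t, |w t| ≤ ∫ t, (|avg r v t - v t| + |avg r' v t - v t|) := by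
            refine integral_mono (hi1.sub hi2).abs ((hi1.sub hv).abs.add (hi2.sub hv).abs)
              fun t => ?_
            have := abs_sub (avg r v t - v t) (avg r' v t - v t)
            simpa [hw] using this
        _ ≤ 2 * ε := by
            have := integral_add (hi1.sub hv).abs (hi2.sub hv).abs
            simp only [Pi.sub_apply] at this
            linarith
    have hk1 : |cv k₁ w x| ≤ C * (2 * ε + ∫ t, |w t|) :=
      hC hA w (hc1.sub hc2) hwc (2 * ε) x fun s hs => hT s (by
        have := abs_le.1 hs
        exact ⟨by linarith [hx.1], by linarith [hx.2]⟩)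
    have hk1' : |cv k₁ w x| ≤ 4 * C * ε := by
      refine hk1.trans ?_
      have := mul_le_mul_of_nonneg_left hwn hC0
      linarith
    have hTx := abs_le.1 (hT x ⟨by linarith [hx.1], by linarith [hx.2]⟩)
    have := abs_le.1 hk1'
    unfold opT at hTx
    rw [← e1, ← e2]
    refine ⟨by linarith, abs_le.2 ⟨?_, ?_⟩⟩ <;> linarith [hTx.1, hTx.2, this.1, this.2]
  have hev : ∀ᶠ r' : ℝ in nhdsWithin 0 (Ioi 0), 0 < r' ∧ r' ≤ r :=
    eventually_mem_nhdsWithin.and (mem_nhdsWithin_of_mem_nhds (Iic_mem_nhds hr))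
  refine ⟨r, hr.ne', by rw [hra]; exact min_le_left _ _, (hl r hr.ne' (by rw [hra]; exact hr2)).trans
    hεη, fun x hx => (hu r (by rw [hra]; exact hr1) x ⟨by linarith [hx.1], by linarith [hx.2]⟩).trans
    hεη, fun hA x hx => ⟨fun hg => ?_, fun hg => ?_⟩⟩
  · refine le_of_tendsto ((tendsto_const_nhds.sub
      (h₁.tendsto_cv_avg one_ne_zero hd₁ hv hvm hg)).abs) (hev.mono fun r' h => ?_)
    refine (key hA x hx (1 * r') ?_ ?_).1
    · simpa using h.1.ne'
    · rw [one_mul, abs_of_pos h.1]; exact h.2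
  · refine le_of_tendsto ((tendsto_const_nhds.sub
      (h₂.tendsto_cv_avg (by norm_num) hd₂ hv hvm hg)).abs) (hev.mono fun r' h => ?_)
    refine (key hA x hx (-1 * r') ?_ ?_).2
    · simpa using h.1.ne'
    · rw [neg_one_mul, abs_neg, abs_of_pos h.1]; exact h.2

theorem integral_abs_tsum_le {ι : Type*} [Countable ι] {F : ι → ℝ → ℝ}
    (hF : ∀ j, Integrable (F j)) (hs : Summable fun j => ∫ t, |F j t|) :
    ∫ t, |∑' j, F j t| ≤ ∑' j, ∫ t, |F j t| := by
  have hF' : ∀ j, Integrable fun t => |F j t| := fun j => (hF j).abs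
  have hs' : Summable fun j => ∫ t, |(|F j t|)| := by simpa only [abs_abs] using hs
  rw [(hasSum_integral_of_summable_integral_norm hF' (by simpa using hs')).tsum_eq]
  refine integral_mono_of_nonneg (Filter.Eventually.of_forall fun t => abs_nonneg _)
    (integrable_tsum_of_summable_integral_norm hF' hs') (Filter.Eventually.of_forall fun t => ?_)
  by_cases h : Summable fun j => F j t
  · exact norm_tsum_le_tsum_norm h.norm
  · simp only [tsum_eq_zero_of_not_summable h, abs_zero]
    exact tsum_nonneg fun _ => abs_nonneg _

theorem exists_gadget_sum {k₁ k₂ : ℝ → ℝ} {θ₁ θ₂ C₁ C₂ : ℝ} (h₁ : WeakSing k₁ θ₁ C₁)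
    (h₂ : WeakSing k₂ θ₂ C₂) (hA : ¬ APriori k₁ k₂) {ι : Type*} [Countable ι]
    (xs r lam : ι → ℝ) (hr : ∀ i, 0 < r i) (hsep : ∀ i j, i ≠ j → r i ≤ |xs i - xs j|)
    {η : ℝ} (hη : 0 < η) :
    ∃ w : ℝ → ℝ, Measurable w ∧ Integrable w ∧ (∀ t, (∀ i, r i ≤ |xs i - t|) → w t = 0) ∧
      ∫ t, |w t| ≤ η ∧ (∀ x, Good k₁ w x ∧ Good k₂ w x) ∧ Continuous (opT k₁ k₂ w) ∧
      (∀ x, |opT k₁ k₂ w x| ≤ η) ∧ ∀ i, |cv k₁ w (xs i) - lam i| ≤ η := by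
  classical
  have := Encodable.ofCountable ι
  obtain ⟨ε, hε, c, hc, hcη⟩ := posSumOfEncodable hη ι
  set M : ι → ℝ := fun i => 1 + C₁ * (r i / 4) ^ (-θ₁) + C₂ * (r i / 4) ^ (-θ₂) with hM
  have hC₁ := h₁.nonneg
  have hC₂ := h₂.nonneg
  have hp₁ : ∀ i, 0 ≤ C₁ * (r i / 4) ^ (-θ₁) := fun i => by have := hr i; positivity
  have hp₂ : ∀ i, 0 ≤ C₂ * (r i / 4) ^ (-θ₂) := fun i => by have := hr i; positivity
  have hM1 : ∀ i, 1 ≤ M i := fun i => by simp only [hM]; linarith [hp₁ i, hp₂ i]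
  have hM0 : ∀ i, 0 < M i := fun i => by linarith [hM1 i]
  have hl0 : ∀ i, 0 < 1 + |lam i| := fun i => by positivity
  choose G hGc hG0 hGn hGT hG1 using fun i => exists_gadget h₁ h₂ hA (xs i)
    (r := r i / 4) (by linarith [hr i]) (η := ε i / ((1 + |lam i|) * M i))
    (div_pos (hε i) (mul_pos (hl0 i) (hM0 i)))
  set F : ι → ℝ → ℝ := fun i t => lam i * G i t with hFdef
  have hFc : ∀ i, Continuous (F i) := fun i => continuous_const.mul (hGc i)
  have hF0 : ∀ i t, r i / 4 ≤ |xs i - t| → F i t = 0 := fun i t h => by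
    simp only [hFdef, hG0 i t h, mul_zero]
  have hFcs : ∀ i, HasCompactSupport (F i) := fun i =>
    hasCompactSupport_of_vanish (A := xs i - r i / 4) (B := xs i + r i / 4) fun t ht => by
      refine hF0 i t (le_of_not_gt fun h => ht ?_)
      have := abs_lt.1 h
      exact ⟨by linarith, by linarith⟩
  have hFi : ∀ i, Integrable (F i) := fun i => (hFc i).integrable_of_hasCompactSupport (hFcs i)
  have hscale : ∀ i, |lam i| * (ε i / ((1 + |lam i|) * M i)) ≤ ε i / M i := fun i => by
    rw [mul_div_assoc', div_le_div_iff₀ (mul_pos (hl0 i) (hM0 i)) (hM0 i)]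
    have := mul_pos (hε i) (hM0 i)
    nlinarith
  have hdiv : ∀ i, ε i / M i ≤ ε i := fun i => div_le_self (hε i).le (hM1 i)
  have hFn : ∀ i, ∫ t, |F i t| ≤ ε i / M i := fun i => by
    simp only [hFdef, abs_mul]
    rw [integral_const_mul]
    exact (mul_le_mul_of_nonneg_left (hGn i) (abs_nonneg _)).trans (hscale i)
  have hFT : ∀ i x, |opT k₁ k₂ (F i) x| ≤ ε i := fun i x => by
    have : opT k₁ k₂ (F i) x = lam i * opT k₁ k₂ (G i) x := by
      simp only [opT, hFdef, cv_const_mul, mul_add]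
    rw [this, abs_mul]
    exact ((mul_le_mul_of_nonneg_left (hGT i x) (abs_nonneg _)).trans (hscale i)).trans (hdiv i)
  have hgood : ∀ {k : ℝ → ℝ} {θ C : ℝ}, WeakSing k θ C → ∀ i x, Good k (F i) x := fun hk i x =>
    hk.good_of_continuousAt (hFi i) (hFc i).continuousAt
  have hfar : ∀ {k : ℝ → ℝ} {θ C : ℝ}, WeakSing k θ C → (∀ i, C * (r i / 4) ^ (-θ) ≤ M i) →
      ∀ i x, r i / 2 ≤ |x - xs i| → ∫ t, |k (x - t) * F i t| ≤ ε i := by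
    intro k θ C hk hle i x hx
    refine (hk.good_of_vanish (hFi i) (ρ := r i / 4) (by linarith [hr i]) fun t ht => ?_).2.trans ?_
    · refine hF0 i t ?_
      have := abs_sub_le x t (xs i)
      rw [abs_sub_comm t (xs i)] at this
      linarith
    · calc C * (r i / 4) ^ (-θ) * ∫ t, |F i t| ≤ M i * (ε i / M i) :=
            mul_le_mul (hle i) (hFn i) (integral_nonneg fun _ => abs_nonneg _) (hM0 i).le
        _ = ε i := mul_div_cancel₀ _ (hM0 i).ne'
  have hle₁ : ∀ i, C₁ * (r i / 4) ^ (-θ₁) ≤ M i := fun i => by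
    simp only [hM]; linarith [hp₂ i]
  have hle₂ : ∀ i, C₂ * (r i / 4) ^ (-θ₂) ≤ M i := fun i => by
    simp only [hM]; linarith [hp₁ i]
  have hsum : ∀ {k : ℝ → ℝ} {θ C : ℝ}, WeakSing k θ C → (∀ i, C * (r i / 4) ^ (-θ) ≤ M i) →
      ∀ x, Summable fun i => ∫ t, |k (x - t) * F i t| := by
    intro k θ C hk hle x
    refine Summable.of_norm_bounded_eventually hc.summable ?_
    rw [Filter.eventually_cofinite]
    refine Set.Subsingleton.finite fun i hi j hj => ?_
    by_contra hij
    have hn : ∀ i, ¬ ‖∫ t, |k (x - t) * F i t|‖ ≤ ε i → |x - xs i| < r i / 2 := fun i h => by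
      by_contra h'
      refine h ?_
      rw [norm_eq_abs, abs_of_nonneg (integral_nonneg fun _ => abs_nonneg _)]
      exact hfar hk hle i x (not_lt.1 h')
    have a1 := hn i hi
    have a2 := hn j hj
    have a3 := hsep i j hij
    have a4 := hsep j i (Ne.symm hij)
    have a5 := abs_sub_le (xs i) x (xs j)
    rw [abs_sub_comm (xs i) x] at a5
    rw [abs_sub_comm (xs j)] at a4
    linarith
  have s₁ := fun x => good_tsum (fun i => hgood h₁ i x) (hsum h₁ hle₁ x)
  have s₂ := fun x => good_tsum (fun i => hgood h₂ i x) (hsum h₂ hle₂ x)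
  have hsT : ∀ x, HasSum (fun i => opT k₁ k₂ (F i) x) (opT k₁ k₂ (fun t => ∑' i, F i t) x) :=
    fun x => (s₁ x).2.add (s₂ x).2
  have hnorm : Summable fun i => ∫ t, |F i t| :=
    Summable.of_nonneg_of_le (fun i => integral_nonneg fun _ => abs_nonneg _)
      (fun i => (hFn i).trans (hdiv i)) hc.summable
  refine ⟨fun t => ∑' i, F i t, Measurable.tsum fun i => (hFc i).measurable,
    integrable_tsum_of_summable_integral_norm hFi hnorm, fun t ht => ?_, ?_,
    fun x => ⟨(s₁ x).1, (s₂ x).1⟩, ?_, fun x => ?_, fun i => ?_⟩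
  · have : ∀ i, F i t = 0 := fun i => hF0 i t (by linarith [ht i, hr i])
    simp [this]
  · refine (integral_abs_tsum_le hFi hnorm).trans (le_trans ?_ hcη)
    rw [← hc.tsum_eq]
    exact hnorm.tsum_le_tsum (fun i => (hFn i).trans (hdiv i)) hc.summable
  · have : opT k₁ k₂ (fun t => ∑' i, F i t) = fun x => ∑' i, opT k₁ k₂ (F i) x :=
      funext fun x => (hsT x).tsum_eq.symm
    rw [this]
    refine continuous_tsum (fun i => ?_) hc.summable fun i x => hFT i x
    exact (h₁.continuous_cv (hFc i) (hFcs i)).add (h₂.continuous_cv (hFc i) (hFcs i))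
  · rw [← (hsT x).tsum_eq, ← norm_eq_abs]
    exact (tsum_of_norm_bounded hc fun i => hFT i x).trans hcη
  · have hs := (s₁ (xs i)).2.sub (hasSum_ite_eq i (lam i))
    rw [← hs.tsum_eq, ← norm_eq_abs]
    refine (tsum_of_norm_bounded hc fun j => ?_).trans hcη
    split_ifs with h
    · subst h
      have : cv k₁ (F j) (xs j) = lam j := by rw [hFdef, cv_const_mul, hG1, mul_one]
      rw [this, sub_self, norm_zero]
      exact (hε j).le
    · rw [sub_zero]
      refine (norm_integral_le_integral_norm _).trans (hfar h₁ hle₁ j (xs i) ?_)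
      have := hsep j i h
      rw [abs_sub_comm] at this
      linarith [hr j]

/-- Continuous functions with compact support in the open interval `(a, b)`. -/
def testSpace (a b : ℝ) : Submodule ℝ (ℝ → ℝ) where
  carrier := {q | Continuous q ∧ ∃ A B, a < A ∧ B < b ∧ ∀ t, t ∉ Icc A B → q t = 0}
  zero_mem' := ⟨continuous_zero, a + 1, b - 1, by linarith, by linarith, fun _ _ => rfl⟩
  add_mem' := by
    rintro p q ⟨hp, A, B, hA, hB, h0⟩ ⟨hq, A', B', hA', hB', h0'⟩
    refine ⟨hp.add hq, min A A', max B B', lt_min hA hA', max_lt hB hB', fun t ht => ?_⟩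
    rw [Pi.add_apply, h0 t fun h => ht ⟨(min_le_left _ _).trans h.1, h.2.trans (le_max_left _ _)⟩,
      h0' t fun h => ht ⟨(min_le_right _ _).trans h.1, h.2.trans (le_max_right _ _)⟩, add_zero]
  smul_mem' := by
    rintro c q ⟨hq, A, B, hA, hB, h0⟩
    exact ⟨hq.const_smul c, A, B, hA, hB, fun t ht => by rw [Pi.smul_apply, h0 t ht, smul_zero]⟩

theorem integrable_mul_test {a b : ℝ} {F q : ℝ → ℝ} (hF : ContinuousOn F (Ioo a b))
    (hq : q ∈ testSpace a b) : Integrable fun t => F t * q t := by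
  obtain ⟨hqc, A, B, hA, hB, h0⟩ := hq
  refine IntegrableOn.integrable_of_forall_notMem_eq_zero (s := Icc A B) ?_ fun t ht => by
    rw [h0 t ht, mul_zero]
  refine ContinuousOn.integrableOn_Icc ((hF.mono ?_).mul hqc.continuousOn)
  exact fun t ht => ⟨by linarith [ht.1], by linarith [ht.2]⟩

theorem hasCompactSupport_test {a b : ℝ} {q : ℝ → ℝ} (hq : q ∈ testSpace a b) :
    HasCompactSupport q := by
  obtain ⟨_, A, B, _, _, h0⟩ := hq
  exact hasCompactSupport_of_vanish h0

theorem integrable_test {a b : ℝ} {q : ℝ → ℝ} (hq : q ∈ testSpace a b) : Integrable q :=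
  hq.1.integrable_of_hasCompactSupport (hasCompactSupport_test hq)

theorem test_eq_zero {a b : ℝ} {q : ℝ → ℝ} (hq : q ∈ testSpace a b) {t : ℝ} (ht : t ∉ Ioo a b) :
    q t = 0 := by
  obtain ⟨_, A, B, hA, hB, h0⟩ := hq
  exact h0 t fun h => ht ⟨by linarith [h.1], by linarith [h.2]⟩

/-- Integration against a function continuous on `(a, b)`. -/
def pairing {a b : ℝ} (F : ℝ → ℝ) (hF : ContinuousOn F (Ioo a b)) : testSpace a b →ₗ[ℝ] ℝ where
  toFun q := ∫ t, F t * (q : ℝ → ℝ) t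
  map_add' p q := by
    rw [← integral_add (integrable_mul_test hF p.2) (integrable_mul_test hF q.2)]
    simp [mul_add]
  map_smul' c q := by
    simp only [Submodule.coe_smul, Pi.smul_apply, smul_eq_mul, RingHom.id_apply]
    rw [← integral_const_mul]
    congr 1; ext t; ring

open scoped ContDiff in
theorem eqOn_zero_of_pairing {a b : ℝ} {F : ℝ → ℝ} (hF : ContinuousOn F (Ioo a b))
    (h : ∀ q ∈ testSpace a b, ∫ t, F t * q t = 0) : ∀ t ∈ Ioo a b, F t = 0 := by
  have hae : ∀ᵐ x, x ∈ Ioo a b → F x = 0 := by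
    refine isOpen_Ioo.ae_eq_zero_of_integral_contDiff_smul_eq_zero
      (hF.locallyIntegrableOn measurableSet_Ioo) fun g hg hgc hgs => ?_
    have hmem : g ∈ testSpace a b := by
      refine ⟨hg.continuous, ?_⟩
      rcases (tsupport g).eq_empty_or_nonempty with he | hne
      · refine ⟨a + 1, b - 1, by linarith, by linarith, fun t _ => ?_⟩
        exact image_eq_zero_of_notMem_tsupport (by simp [he])
      · have hK : IsCompact (tsupport g) := hgc
        refine ⟨_, _, (hgs (hK.sInf_mem hne)).1, (hgs (hK.sSup_mem hne)).2, fun t ht => ?_⟩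
        exact image_eq_zero_of_notMem_tsupport fun h =>
          ht ⟨csInf_le hK.bddBelow h, le_csSup hK.bddAbove h⟩
    simpa only [smul_eq_mul, mul_comm] using h g hmem
  refine Measure.eqOn_open_of_ae_eq (μ := volume) (g := fun _ => 0) ?_ isOpen_Ioo hF
    continuousOn_const
  exact (ae_restrict_iff' measurableSet_Ioo).2 hae

theorem span_of_pairing {a b : ℝ} {ι : Type*} [Fintype ι] {F : ℝ → ℝ} {ψ : ι → ℝ → ℝ}
    (hF : ContinuousOn F (Ioo a b)) (hψ : ∀ i, ContinuousOn (ψ i) (Ioo a b))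
    (h : ∀ q ∈ testSpace a b, (∀ i, ∫ t, ψ i t * q t = 0) → ∫ t, F t * q t = 0) :
    ∃ c : ι → ℝ, ∀ t ∈ Ioo a b, F t = ∑ i, c i * ψ i t := by
  have hm : pairing F hF ∈ Submodule.span ℝ (range fun i => pairing (ψ i) (hψ i)) := by
    refine mem_span_of_iInf_ker_le_ker fun q hq => ?_
    simp only [Submodule.mem_iInf, LinearMap.mem_ker] at hq ⊢
    exact h q q.2 hq
  obtain ⟨c, hc⟩ := (Submodule.mem_span_range_iff_exists_fun _).1 hm
  refine ⟨c, fun t ht => ?_⟩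
  have hs : ContinuousOn (fun t => ∑ i, c i * ψ i t) (Ioo a b) :=
    continuousOn_finsetSum _ fun i _ => continuousOn_const.mul (hψ i)
  have := eqOn_zero_of_pairing (hF.sub hs) (fun q hq => ?_) t ht
  · simpa [sub_eq_zero] using this
  · have e := LinearMap.congr_fun hc ⟨q, hq⟩
    simp only [LinearMap.sum_apply, LinearMap.smul_apply, smul_eq_mul] at e
    change ∑ i, c i * ∫ t, ψ i t * q t = ∫ t, F t * q t at e
    have e2 : ∫ t, (∑ i, c i * ψ i t) * q t = ∑ i, c i * ∫ t, ψ i t * q t := by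
      simp only [Finset.sum_mul, ← integral_const_mul]
      rw [integral_finsetSum _ fun i _ => ?_]
      · simp only [mul_assoc]
      · simpa only [mul_assoc] using (integrable_mul_test (hψ i) hq).const_mul (c i)
    simp only [Pi.sub_apply, sub_mul]
    rw [integral_sub (integrable_mul_test hF hq) (integrable_mul_test hs hq), e2, e, sub_self]

theorem coeff_eq_zero_of_bounded {a b α β c₀ c₁ c₂ M : ℝ} (hab : a < b) (hα : 0 < α) (hβ : 0 < β)
    (h : ∀ t ∈ Ioo a b, |c₀ + c₁ * (t - a) ^ (-β) + c₂ * (b - t) ^ (-α)| ≤ M) : c₁ = 0 := by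
  by_contra hc
  have ht : Filter.Tendsto (fun s : ℝ => |c₁| * s ^ (-β)) (nhdsWithin 0 (Ioi 0)) Filter.atTop :=
    (tendsto_rpow_neg_nhdsGT_zero (by linarith)).const_mul_atTop (abs_pos.2 hc)
  obtain ⟨s, hs, hs0, hsm⟩ := ((ht.eventually_gt_atTop
    (M + |c₀| + |c₂| * ((b - a) / 2) ^ (-α))).and
    (eventually_mem_nhdsWithin.and (mem_nhdsWithin_of_mem_nhds
      (Iio_mem_nhds (show (0 : ℝ) < (b - a) / 2 by linarith))))).exists
  have hs0' : 0 < s := hs0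
  have hsm' : s < (b - a) / 2 := hsm
  have h1 := h (a + s) ⟨by linarith, by linarith⟩
  rw [add_sub_cancel_left] at h1
  have h2 : (b - (a + s)) ^ (-α) ≤ ((b - a) / 2) ^ (-α) :=
    rpow_le_rpow_of_nonpos (by linarith) (by linarith) (by linarith)
  have h3 : 0 ≤ (b - (a + s)) ^ (-α) := rpow_nonneg (by linarith) _
  have h4 : |c₂ * (b - (a + s)) ^ (-α)| ≤ |c₂| * ((b - a) / 2) ^ (-α) := by
    rw [abs_mul, abs_of_nonneg h3]; gcongr
  have h5 : |c₁ * s ^ (-β)| = |c₁| * s ^ (-β) := by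
    rw [abs_mul, abs_of_nonneg (rpow_nonneg hs0'.le _)]
  have h6 : |c₁ * s ^ (-β)| ≤ |c₀ + c₁ * s ^ (-β) + c₂ * (b - (a + s)) ^ (-α)| + |c₀|
      + |c₂ * (b - (a + s)) ^ (-α)| := by
    have := abs_sub (c₀ + c₁ * s ^ (-β) + c₂ * (b - (a + s)) ^ (-α))
      (c₀ + c₂ * (b - (a + s)) ^ (-α))
    have h7 := abs_add_le c₀ (c₂ * (b - (a + s)) ^ (-α))
    rw [show c₀ + c₁ * s ^ (-β) + c₂ * (b - (a + s)) ^ (-α) - (c₀ + c₂ * (b - (a + s)) ^ (-α))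
      = c₁ * s ^ (-β) by ring] at this
    linarith
  linarith

/-- The constant function and the two endpoint singularities. -/
def endFun (a b α β : ℝ) : Fin 3 → ℝ → ℝ :=
  ![fun _ => 1, fun t => (t - a) ^ (-β), fun t => (b - t) ^ (-α)]

theorem continuousOn_endFun (a b α β : ℝ) (i : Fin 3) :
    ContinuousOn (endFun a b α β i) (Ioo a b) := by
  fin_cases i
  · exact continuousOn_const
  · exact ContinuousOn.rpow_const (by fun_prop) fun t ht => Or.inl (by linarith [ht.1])
  · exact ContinuousOn.rpow_const (by fun_prop) fun t ht => Or.inl (by linarith [ht.2])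

theorem endFun_bounded {a b α β : ℝ} (hab : a < b) (hα : 0 < α) (hβ : 0 < β) {c : Fin 3 → ℝ}
    {M : ℝ} (h : ∀ t ∈ Ioo a b, |∑ i, c i * endFun a b α β i t| ≤ M) : c 1 = 0 ∧ c 2 = 0 := by
  replace h : ∀ t ∈ Ioo a b, |c 0 + c 1 * (t - a) ^ (-β) + c 2 * (b - t) ^ (-α)| ≤ M :=
    fun t ht => by simpa [Fin.sum_univ_three, endFun] using h t ht
  refine ⟨coeff_eq_zero_of_bounded hab hα hβ h, coeff_eq_zero_of_bounded (a := a) (b := b)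
    (c₀ := c 0) (c₂ := c 1) (M := M) hab hβ hα fun t ht => ?_⟩
  have := h (a + b - t) ⟨by linarith [ht.2], by linarith [ht.1]⟩
  rw [show a + b - t - a = b - t by ring, show b - (a + b - t) = t - a by ring] at this
  rwa [add_right_comm]

theorem endFun_independent {a b α β : ℝ} (hab : a < b) (hα : 0 < α) (hβ : 0 < β) {c : Fin 3 → ℝ}
    (h : ∀ t ∈ Ioo a b, ∑ i, c i * endFun a b α β i t = 0) : c = 0 := by
  obtain ⟨h1, h2⟩ := endFun_bounded (M := 0) hab hα hβ fun t ht => by rw [h t ht, abs_zero]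
  have h0 := h ((a + b) / 2) ⟨by linarith, by linarith⟩
  rw [Fin.sum_univ_three, h1, h2] at h0
  ext i
  fin_cases i
  · simpa [endFun] using h0
  · exact h1
  · exact h2

theorem exists_dual {a b α β : ℝ} (hab : a < b) (hα : 0 < α) (hβ : 0 < β) (i : Fin 3) :
    ∃ q ∈ testSpace a b, ∀ j, ∫ t, endFun a b α β j t * q t = if j = i then 1 else 0 := by
  have hex : ∃ q ∈ testSpace a b, (∀ j : {j // j ≠ i}, ∫ t, endFun a b α β j t * q t = 0) ∧
      ∫ t, endFun a b α β i t * q t ≠ 0 := by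
    by_contra hno
    push Not at hno
    obtain ⟨c, hc⟩ := span_of_pairing (ψ := fun j : {j // j ≠ i} => endFun a b α β j)
      (continuousOn_endFun a b α β i) (fun j => continuousOn_endFun a b α β j) hno
    have := endFun_independent hab hα hβ
      (c := fun j => if h : j ≠ i then c ⟨j, h⟩ else -1) (α := α) (β := β) fun t ht => by
        rw [← Finset.add_sum_erase _ _ (Finset.mem_univ i)]
        have e : ∑ j ∈ Finset.univ.erase i,
            (if h : j ≠ i then c ⟨j, h⟩ else -1) * endFun a b α β j t =
            ∑ j : {j // j ≠ i}, c j * endFun a b α β j t := by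
          rw [← Finset.sum_subtype_of_mem (p := fun j => j ≠ i)]
          · rw [Finset.subtype_eq_univ.2 (by simp)]
            exact Finset.sum_congr rfl fun j _ => by rw [dif_pos j.2]
          · intro j hj; exact Finset.ne_of_mem_erase hj
        rw [e, ← hc t ht]
        simp
    have := congrFun this i
    simp at this
  obtain ⟨q, hq, h0, hne⟩ := hex
  refine ⟨(∫ t, endFun a b α β i t * q t)⁻¹ • q, Submodule.smul_mem _ _ hq, fun j => ?_⟩
  have e : ∫ t, endFun a b α β j t * ((∫ t, endFun a b α β i t * q t)⁻¹ • q) t =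
      (∫ t, endFun a b α β i t * q t)⁻¹ * ∫ t, endFun a b α β j t * q t := by
    rw [← integral_const_mul]
    congr 1; ext t
    simp only [Pi.smul_apply, smul_eq_mul]; ring
  rw [e]
  split_ifs with h
  · rw [h, inv_mul_cancel₀ hne]
  · rw [h0 ⟨j, h⟩, mul_zero]

/-- Distance to the complement of `(a, b)` inside the interval, negative outside. -/
def bdist (a b t : ℝ) : ℝ := min (t - a) (b - t)

theorem bdist_pos {a b t : ℝ} : 0 < bdist a b t ↔ t ∈ Ioo a b := by
  simp [bdist]

theorem bdist_sub_le (a b s t : ℝ) : |bdist a b s - bdist a b t| ≤ |s - t| := by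
  unfold bdist
  refine (abs_min_sub_min_le_max _ _ _ _).trans (max_le ?_ ?_)
  · rw [sub_sub_sub_cancel_right]
  · rw [sub_sub_sub_cancel_left, abs_sub_comm]

theorem continuous_bdist (a b : ℝ) : Continuous (bdist a b) := by
  unfold bdist; fun_prop

/-- Cutoffs exhausting `(a, b)`. -/
def exhaust (a b : ℝ) (n : ℕ) (t : ℝ) : ℝ := max 0 (min 1 (n * bdist a b t - 1))

/-- The partition of unity of `(a, b)` obtained from the exhausting cutoffs. -/
def shell (a b : ℝ) (j : ℕ) (t : ℝ) : ℝ := exhaust a b (j + 1) t - exhaust a b j t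

theorem exhaust_eq_zero {a b t : ℝ} {n : ℕ} (h : n * bdist a b t ≤ 1) : exhaust a b n t = 0 := by
  unfold exhaust
  exact max_eq_left ((min_le_right _ _).trans (by linarith))

theorem exhaust_eq_one {a b t : ℝ} {n : ℕ} (h : 2 ≤ n * bdist a b t) : exhaust a b n t = 1 := by
  unfold exhaust
  rw [min_eq_left (by linarith), max_eq_right zero_le_one]

theorem exhaust_nonneg (a b : ℝ) (n : ℕ) (t : ℝ) : 0 ≤ exhaust a b n t := le_max_left _ _

theorem exhaust_le_one (a b : ℝ) (n : ℕ) (t : ℝ) : exhaust a b n t ≤ 1 :=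
  max_le zero_le_one (min_le_left _ _)

theorem exhaust_lipschitz (a b : ℝ) (n : ℕ) (s t : ℝ) :
    |exhaust a b n s - exhaust a b n t| ≤ n * |s - t| := by
  refine (abs_clamp_sub_le _ _).trans ?_
  rw [sub_sub_sub_cancel_right, ← mul_sub, abs_mul, Nat.abs_cast]
  exact mul_le_mul_of_nonneg_left (bdist_sub_le a b s t) (Nat.cast_nonneg n)

theorem continuous_exhaust (a b : ℝ) (n : ℕ) : Continuous (exhaust a b n) := by
  have := continuous_bdist a b
  unfold exhaust; fun_prop

theorem continuous_shell (a b : ℝ) (j : ℕ) : Continuous (shell a b j) :=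
  (continuous_exhaust a b _).sub (continuous_exhaust a b _)

theorem shell_eq_zero_of_near {a b t : ℝ} {j : ℕ} (h : (j + 1) * bdist a b t ≤ 1) :
    shell a b j t = 0 := by
  have hj : (0 : ℝ) ≤ j := Nat.cast_nonneg j
  unfold shell
  rw [exhaust_eq_zero (by push_cast; exact h), exhaust_eq_zero, sub_zero]
  rcases le_total 0 (bdist a b t) with hd | hd
  · nlinarith
  · nlinarith

theorem shell_eq_zero_of_far {a b t : ℝ} {j : ℕ} (h : 2 ≤ j * bdist a b t) :
    shell a b j t = 0 := by
  have hj : (0 : ℝ) ≤ j := Nat.cast_nonneg j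
  have hd : 0 ≤ bdist a b t := by
    by_contra hd
    nlinarith
  unfold shell
  rw [exhaust_eq_one h, exhaust_eq_one (by push_cast; linarith), sub_self]

theorem shell_nonneg (a b : ℝ) (j : ℕ) (t : ℝ) : 0 ≤ shell a b j t := by
  rcases le_total 0 (bdist a b t) with hd | hd
  · unfold shell exhaust
    rw [sub_nonneg]
    gcongr
    simp
  · rw [shell_eq_zero_of_near]
    have hj : (0 : ℝ) ≤ j := Nat.cast_nonneg j
    nlinarith

theorem shell_le_one (a b : ℝ) (j : ℕ) (t : ℝ) : shell a b j t ≤ 1 := by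
  unfold shell
  linarith [exhaust_le_one a b (j + 1) t, exhaust_nonneg a b j t]

theorem shell_sub_le_one (a b : ℝ) (j : ℕ) (s t : ℝ) : |shell a b j s - shell a b j t| ≤ 1 :=
  abs_le.2 ⟨by linarith [shell_nonneg a b j s, shell_le_one a b j t],
    by linarith [shell_nonneg a b j t, shell_le_one a b j s]⟩

theorem shell_lipschitz (a b : ℝ) (j : ℕ) (s t : ℝ) :
    |shell a b j s - shell a b j t| ≤ (2 * j + 1) * |s - t| := by
  have h1 := exhaust_lipschitz a b (j + 1) s t
  have h2 := exhaust_lipschitz a b j s t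
  have h3 := abs_sub (exhaust a b (j + 1) s - exhaust a b (j + 1) t)
    (exhaust a b j s - exhaust a b j t)
  push_cast at h1
  unfold shell
  rw [show exhaust a b (j + 1) s - exhaust a b j s - (exhaust a b (j + 1) t - exhaust a b j t) =
    exhaust a b (j + 1) s - exhaust a b (j + 1) t - (exhaust a b j s - exhaust a b j t) by ring]
  linarith

theorem sum_shell (a b : ℝ) (n : ℕ) (t : ℝ) :
    ∑ j ∈ Finset.range n, shell a b j t = exhaust a b n t := by
  unfold shell
  rw [Finset.sum_range_sub (fun j => exhaust a b j t), exhaust_eq_zero (n := 0) (by simp), sub_zero]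

theorem exists_interior_mollification {k₁ k₂ : ℝ → ℝ} {θ₁ θ₂ C₁ C₂ : ℝ} (h₁ : WeakSing k₁ θ₁ C₁)
    (h₂ : WeakSing k₂ θ₂ C₂) (hd₁ : DirAvg k₁ 1) (hd₂ : DirAvg k₂ (-1)) {a b : ℝ} (hab : a < b)
    {u φ : ℝ → ℝ} (hu : Integrable u) (hum : Measurable u) (hu0 : ∀ t, t ∉ Ioo a b → u t = 0)
    (hφ : Continuous φ) (hT : ∀ x ∈ Icc a b, opT k₁ k₂ u x = φ x) {η : ℝ} (hη : 0 < η) :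
    ∃ p τ : ℝ → ℝ, Measurable p ∧ Integrable p ∧ (∀ t, t ∉ Ioo a b → p t = 0) ∧
      ∫ t, |p t| ≤ η ∧ ContinuousOn τ (Icc a b) ∧ (∀ x ∈ Icc a b, |τ x| ≤ η) ∧
      (∀ x ∈ Ioo a b, ContinuousAt (fun t => u t + p t) x) ∧
      (∀ x ∈ Ioo a b, opT k₁ k₂ (fun t => u t + p t) x = φ x + τ x) ∧
      (∀ x, x = a ∨ x = b → Good k₁ p x ∧ Good k₂ p x ∧ opT k₁ k₂ p x = τ x) ∧
      (APriori k₁ k₂ → ∀ x ∈ Ioo a b,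
        (Good k₁ u x → |cv k₁ p x| ≤ η) ∧ (Good k₂ u x → |cv k₂ p x| ≤ η)) := by
  obtain ⟨ε, hε, c, hc, hcη⟩ := posSumOfEncodable hη ℕ
  have hC₁ := h₁.nonneg
  have hC₂ := h₂.nonneg
  set ρ : ℕ → ℝ := fun j => 1 / (j + 2) with hρdef
  have hρ : ∀ j, 0 < ρ j := fun j => by simp only [hρdef]; positivity
  set M : ℕ → ℝ := fun j => 1 + C₁ * ρ j ^ (-θ₁) + C₂ * ρ j ^ (-θ₂) with hM
  have hp₁ : ∀ i, 0 ≤ C₁ * ρ i ^ (-θ₁) := fun i => by have := hρ i; positivity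
  have hp₂ : ∀ i, 0 ≤ C₂ * ρ i ^ (-θ₂) := fun i => by have := hρ i; positivity
  have hM1 : ∀ i, 1 ≤ M i := fun i => by simp only [hM]; linarith [hp₁ i, hp₂ i]
  have hM0 : ∀ i, 0 < M i := fun i => by linarith [hM1 i]
  have hle₁ : ∀ i, C₁ * ρ i ^ (-θ₁) ≤ M i := fun i => by simp only [hM]; linarith [hp₂ i]
  have hle₂ : ∀ i, C₂ * ρ i ^ (-θ₂) ≤ M i := fun i => by simp only [hM]; linarith [hp₁ i]
  have hdiv : ∀ i, ε i / M i ≤ ε i := fun i => div_le_self (hε i).le (hM1 i)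
  set v : ℕ → ℝ → ℝ := fun j t => shell a b j t * u t with hvdef
  have hvm : ∀ j, Measurable (v j) := fun j => (continuous_shell a b j).measurable.mul hum
  have hvi : ∀ j, Integrable (v j) := fun j => by
    refine hu.abs.mono' (hvm j).aestronglyMeasurable (Filter.Eventually.of_forall fun t => ?_)
    rw [norm_eq_abs, abs_mul, abs_of_nonneg (shell_nonneg a b j t)]
    exact mul_le_of_le_one_left (abs_nonneg _) (shell_le_one a b j t)
  have hvs : ∀ j t, t ∉ Icc a b → v j t = 0 := fun j t ht => by
    simp only [hvdef, hu0 t fun h => ht (Ioo_subset_Icc_self h), mul_zero]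
  have hΛ : ∀ j : ℕ, (0 : ℝ) ≤ 2 * j + 1 := fun j => by positivity
  set Ψ : ℕ → ℝ → ℝ := fun j x => shell a b j x * φ x + kcomm k₁ (shell a b j) u x
    + kcomm k₂ (shell a b j) u x with hΨdef
  have hΨc : ∀ j, Continuous (Ψ j) := fun j =>
    (((continuous_shell a b j).mul hφ).add (h₁.continuous_comm (hΛ j) (shell_lipschitz a b j)
      (shell_sub_le_one a b j) (continuous_shell a b j) hu)).add
      (h₂.continuous_comm (hΛ j) (shell_lipschitz a b j) (shell_sub_le_one a b j)
        (continuous_shell a b j) hu)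
  have hvg : ∀ {k : ℝ → ℝ} {θ C : ℝ}, WeakSing k θ C → ∀ j x,
      (Good k u x ∨ shell a b j x = 0) → Good k (v j) x ∧
      cv k (v j) x = shell a b j x * cv k u x + kcomm k (shell a b j) u x := fun hk j x h =>
    hk.cv_mul_eq (hΛ j) (shell_lipschitz a b j) (shell_sub_le_one a b j) (continuous_shell a b j)
      hu h
  have hend : ∀ j x, x ∉ Ioo a b → shell a b j x = 0 := fun j x hx => by
    refine shell_eq_zero_of_near ?_
    have : bdist a b x ≤ 0 := not_lt.1 fun h => hx (bdist_pos.1 h)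
    have hj : (0 : ℝ) ≤ j := Nat.cast_nonneg j
    nlinarith
  have hTv : ∀ j x, (Good k₁ u x ∧ Good k₂ u x) ∨ shell a b j x = 0 →
      opT k₁ k₂ (v j) x = Ψ j x := fun j x h => by
    have e1 := (hvg h₁ j x (h.imp And.left id)).2
    have e2 := (hvg h₂ j x (h.imp And.right id)).2
    have e3 : shell a b j x * opT k₁ k₂ u x = shell a b j x * φ x := by
      by_cases hx : x ∈ Ioo a b
      · rw [hT x (Ioo_subset_Icc_self hx)]
      · rw [hend j x hx, zero_mul, zero_mul]
    simp only [hΨdef]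
    rw [← e3, opT, e1, e2, opT]
    ring
  have hae : ∀ᵐ x, Good k₁ u x ∧ Good k₂ u x := (h₁.ae_good hu hum).and (h₂.ae_good hu hum)
  have hTvae : ∀ j, ∀ᵐ x, opT k₁ k₂ (v j) x = Ψ j x := fun j =>
    hae.mono fun x hx => hTv j x (Or.inl hx)
  choose r hr0 hrρ hrn hrΨ hrA using fun j => exists_mollify h₁ h₂ hd₁ hd₂ (hvi j) (hvm j) (hvs j)
    (hΨc j) (hTvae j) a b (η := ε j / M j) (ρ := 1 / ((j + 1) * (j + 2)))
    (div_pos (hε j) (hM0 j)) (by positivity)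
  set P : ℕ → ℝ → ℝ := fun j t => avg (r j) (v j) t - v j t with hPdef
  have hPi : ∀ j, Integrable (P j) := fun j => (integrable_avg (r j) (hvi j)).sub (hvi j)
  have hPm : ∀ j, Measurable (P j) := fun j => (continuous_avg (hr0 j) (hvi j)).measurable.sub (hvm j)
  have hnear : ∀ (j : ℕ) t, (j + 2) * bdist a b t ≤ 1 → P j t = 0 := fun j t ht => by
    have hj : (0 : ℝ) ≤ j := Nat.cast_nonneg j
    have hv0 : ∀ s, |t - s| ≤ |r j| → v j s = 0 := fun s hs => by
      have h1 := (abs_le.1 ((bdist_sub_le a b t s).trans (hs.trans (hrρ j)))).1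
      have h2 : (1 : ℝ) / ((j + 1) * (j + 2)) * ((j + 1) * (j + 2)) = 1 := by field_simp
      have : shell a b j s = 0 := shell_eq_zero_of_near (by
        have h3 : bdist a b s ≤ bdist a b t + 1 / ((j + 1) * (j + 2)) := by linarith
        have h4 : (j + 2) * ((j + 1) * bdist a b s) ≤ (j + 2) * 1 := by
          have := mul_le_mul_of_nonneg_left h3 (show (0 : ℝ) ≤ (j + 1) * (j + 2) by positivity)
          nlinarith
        exact le_of_mul_le_mul_left h4 (by positivity))
      simp only [hvdef, this, zero_mul]
    simp only [hPdef, avg_eq_zero hv0, hv0 t (by simp), sub_zero]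
  have hvfar : ∀ (j : ℕ) t, 2 ≤ j * bdist a b t → v j t = 0 := fun j t ht => by
    simp only [hvdef, shell_eq_zero_of_far ht, zero_mul]
  have hfar : ∀ (j : ℕ) t, 3 ≤ j * bdist a b t → P j t = 0 := fun j t ht => by
    have hj : (0 : ℝ) ≤ j := Nat.cast_nonneg j
    have hv0 : ∀ s, |t - s| ≤ |r j| → v j s = 0 := fun s hs => by
      have h1 := (abs_le.1 ((bdist_sub_le a b t s).trans (hs.trans (hrρ j)))).2
      refine hvfar j s ?_
      have h2 : (j : ℝ) * (1 / ((j + 1) * (j + 2))) ≤ 1 := by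
        rw [mul_one_div, div_le_one (by positivity)]; nlinarith
      have h3 := mul_le_mul_of_nonneg_left h1 hj
      nlinarith
    simp only [hPdef, avg_eq_zero hv0, hv0 t (by simp), sub_zero]
  have hPn : ∀ j, ∫ t, |P j t| ≤ ε j / M j := hrn
  have hPn' : ∀ j, ∫ t, |P j t| ≤ ε j := fun j => (hPn j).trans (hdiv j)
  have hnorm : Summable fun j => ∫ t, |P j t| :=
    Summable.of_nonneg_of_le (fun i => integral_nonneg fun _ => abs_nonneg _) hPn' hc.summable
  have hPend : ∀ x, x = a ∨ x = b → ∀ j t, |x - t| < ρ j → P j t = 0 := by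
    intro x hx j t ht
    refine hnear j t ?_
    have h1 : bdist a b t ≤ |x - t| := by
      rcases hx with rfl | rfl
      · exact (min_le_left _ _).trans ((le_abs_self _).trans (abs_sub_comm _ _).le)
      · exact (min_le_right _ _).trans (le_abs_self _)
    have h2 : (j + 2) * ρ j = 1 := by simp only [hρdef]; field_simp
    have h3 : (0 : ℝ) ≤ j + 2 := by positivity
    nlinarith
  have hloc : ∀ x ∈ Ioo a b, ∀ t, |x - t| < bdist a b x / 2 → bdist a b x / 2 ≤ bdist a b t := by
    intro x hx t ht
    have := (abs_le.1 (bdist_sub_le a b x t)).2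
    linarith
  have hsum : ∀ {k : ℝ → ℝ} {θ C : ℝ}, WeakSing k θ C → (∀ i, C * ρ i ^ (-θ) ≤ M i) →
      ∀ x ∈ Icc a b, Summable fun j => ∫ t, |k (x - t) * P j t| := by
    intro k θ C hk hle x hx
    have hC := hk.nonneg
    by_cases hxe : x = a ∨ x = b
    · refine Summable.of_nonneg_of_le (fun i => integral_nonneg fun _ => abs_nonneg _)
        (fun j => ?_) hc.summable
      refine (hk.good_of_vanish (hPi j) (hρ j) (hPend x hxe j)).2.trans ?_
      calc C * ρ j ^ (-θ) * ∫ t, |P j t| ≤ M j * (ε j / M j) :=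
            mul_le_mul (hle j) (hPn j) (integral_nonneg fun _ => abs_nonneg _) (hM0 j).le
        _ = ε j := mul_div_cancel₀ _ (hM0 j).ne'
    · have hx' : x ∈ Ioo a b := by
        push Not at hxe
        exact ⟨lt_of_le_of_ne hx.1 hxe.1.symm, lt_of_le_of_ne hx.2 hxe.2⟩
      have hd := bdist_pos.2 hx'
      refine Summable.of_norm_bounded_eventually
        (hc.summable.mul_left (C * (bdist a b x / 2) ^ (-θ))) ?_
      rw [Nat.cofinite_eq_atTop]
      filter_upwards [Filter.eventually_ge_atTop ⌈6 / bdist a b x⌉₊] with j hj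
      have hj' : 6 ≤ j * bdist a b x := by
        rw [← div_le_iff₀ hd]; exact Nat.ceil_le.1 hj
      rw [norm_eq_abs, abs_of_nonneg (integral_nonneg fun _ => abs_nonneg _)]
      refine (hk.good_of_vanish (hPi j) (half_pos hd) fun t ht => hfar j t ?_).2.trans ?_
      · have := mul_le_mul_of_nonneg_left (hloc x hx' t ht) (Nat.cast_nonneg (α := ℝ) j)
        linarith
      · exact mul_le_mul_of_nonneg_left (hPn' j) (by positivity)
  have hPg : ∀ {k : ℝ → ℝ} {θ C : ℝ}, WeakSing k θ C → ∀ j x,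
      (Good k u x ∨ shell a b j x = 0) → Good k (P j) x ∧
        cv k (P j) x = cv k (avg (r j) (v j)) x - cv k (v j) x := fun hk j x h => by
    have g1 := hk.good_of_continuousAt (integrable_avg (r j) (hvi j))
      (continuous_avg (hr0 j) (hvi j)).continuousAt (x := x)
    exact ⟨g1.sub (hvg hk j x h).1, cv_sub g1 (hvg hk j x h).1⟩
  have hTP : ∀ j x, (Good k₁ u x ∧ Good k₂ u x) ∨ shell a b j x = 0 →
      opT k₁ k₂ (P j) x = avg (r j) (Ψ j) x - Ψ j x := fun j x h => by
    rw [← hTv j x h, ← opT_avg h₁ h₂ (hvi j) (hvm j) (hTvae j) (hr0 j), opT,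
      (hPg h₁ j x (h.imp And.left id)).2, (hPg h₂ j x (h.imp And.right id)).2, opT, opT]
    ring
  set p : ℝ → ℝ := fun t => ∑' j, P j t with hpdef
  set τ : ℝ → ℝ := fun x => ∑' j, (avg (r j) (Ψ j) x - Ψ j x) with hτdef
  have hpi : Integrable p := integrable_tsum_of_summable_integral_norm hPi hnorm
  have hτb : ∀ j, ∀ x ∈ Icc a b, ‖avg (r j) (Ψ j) x - Ψ j x‖ ≤ ε j := fun j x hx =>
    (hrΨ j x hx).trans (hdiv j)
  have hΨavg : ∀ j, Continuous (avg (r j) (Ψ j)) := fun j => by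
    unfold avg
    exact intervalIntegral.continuous_parametric_intervalIntegral_of_continuous'
      (by have := hΨc j; fun_prop) 0 1
  have hτc : ContinuousOn τ (Icc a b) :=
    continuousOn_tsum (fun j => ((hΨavg j).sub (hΨc j)).continuousOn) hc.summable hτb
  have hTp : ∀ x ∈ Icc a b, ((Good k₁ u x ∧ Good k₂ u x) ∨ ∀ j, shell a b j x = 0) →
      Good k₁ p x ∧ Good k₂ p x ∧ opT k₁ k₂ p x = τ x := fun x hx h => by
    have g1 := good_tsum (fun j => (hPg h₁ j x (h.imp And.left fun h => h j)).1) (hsum h₁ hle₁ x hx)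
    have g2 := good_tsum (fun j => (hPg h₂ j x (h.imp And.right fun h => h j)).1) (hsum h₂ hle₂ x hx)
    refine ⟨g1.1, g2.1, ?_⟩
    have := (g1.2.add g2.2).tsum_eq
    rw [opT, ← this]
    exact tsum_congr fun j => hTP j x (h.imp id fun h => h j)
  have hcont : ∀ x ∈ Ioo a b, ContinuousOn (fun t => u t + p t)
      (Metric.ball x (bdist a b x / 2)) := fun x hx => by
    have hd := bdist_pos.2 hx
    obtain ⟨n, hn⟩ := exists_nat_ge (6 / bdist a b x)
    have hn' : 6 ≤ n * bdist a b x := by rwa [div_le_iff₀ hd] at hn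
    have hs : Continuous fun t => ∑ j ∈ Finset.range n, avg (r j) (v j) t :=
      continuous_finsetSum _ fun j _ => continuous_avg (hr0 j) (hvi j)
    refine hs.continuousOn.congr fun t ht => ?_
    have hdt := hloc x hx t (by rwa [Metric.mem_ball, Real.dist_eq, abs_sub_comm] at ht)
    have hnt : ∀ j, n ≤ j → 3 ≤ j * bdist a b t := fun j hj => by
      have h1 : (n : ℝ) ≤ j := Nat.cast_le.2 hj
      have h2 : (n : ℝ) * (bdist a b x / 2) ≤ j * bdist a b t := by gcongr
      linarith
    have e1 : p t = ∑ j ∈ Finset.range n, P j t :=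
      tsum_eq_sum fun j hj => hfar j t (hnt j (by simpa using hj))
    have e2 : u t = ∑ j ∈ Finset.range n, v j t := by
      simp only [hvdef]
      rw [← Finset.sum_mul, sum_shell, exhaust_eq_one (by linarith [hnt n le_rfl]), one_mul]
    change u t + p t = _
    rw [e1, e2, ← Finset.sum_add_distrib]
    exact Finset.sum_congr rfl fun j _ => by simp only [hPdef]; ring
  have hca : ∀ x ∈ Ioo a b, ContinuousAt (fun t => u t + p t) x := fun x hx =>
    (hcont x hx).continuousAt (Metric.ball_mem_nhds x (half_pos (bdist_pos.2 hx)))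
  have hend' : ∀ x, x = a ∨ x = b → ∀ j, shell a b j x = 0 := fun x hx j => by
    refine hend j x fun h => ?_
    rcases hx with rfl | rfl
    · exact lt_irrefl _ h.1
    · exact lt_irrefl _ h.2
  refine ⟨p, τ, Measurable.tsum hPm, hpi, fun t ht => ?_, ?_, hτc, fun x hx => ?_, hca, ?_,
    fun x hx => hTp x ?_ (Or.inr (hend' x hx)), fun hA x hx => ⟨fun hg => ?_, fun hg => ?_⟩⟩
  · have : ∀ j, P j t = 0 := fun j => hnear j t (by
      have : bdist a b t ≤ 0 := not_lt.1 fun h => ht (bdist_pos.1 h)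
      have hj : (0 : ℝ) ≤ j := Nat.cast_nonneg j
      nlinarith)
    simp [hpdef, this]
  · refine (integral_abs_tsum_le hPi hnorm).trans (le_trans ?_ hcη)
    rw [← hc.tsum_eq]
    exact hnorm.tsum_le_tsum hPn' hc.summable
  · rw [← norm_eq_abs]
    exact (tsum_of_norm_bounded hc fun j => hτb j x hx).trans hcη
  · have hup := hu.add hpi
    refine Measure.eqOn_open_of_ae_eq (μ := volume) ?_ isOpen_Ioo (fun x hx => ?_)
      ((hφ.continuousOn.add hτc).mono Ioo_subset_Icc_self)
    · refine (ae_restrict_iff' measurableSet_Ioo).2 (hae.mono fun x hg hx => ?_)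
      obtain ⟨g1, g2, e⟩ := hTp x (Ioo_subset_Icc_self hx) (Or.inl hg)
      have e0 := hT x (Ioo_subset_Icc_self hx)
      change cv k₁ (fun t => u t + p t) x + cv k₂ (fun t => u t + p t) x = φ x + τ x
      rw [cv_add hg.1 g1, cv_add hg.2 g2, ← e0, ← e]
      unfold opT
      ring
    · have hd := half_pos (bdist_pos.2 hx)
      exact ((h₁.continuousAt_cv hup hd (hcont x hx)).add
        (h₂.continuousAt_cv hup hd (hcont x hx))).continuousWithinAt
  · rcases hx with rfl | rfl
    · exact left_mem_Icc.2 hab.le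
    · exact right_mem_Icc.2 hab.le
  · have g := good_tsum (fun j => (hPg h₁ j x (Or.inl hg)).1)
      (hsum h₁ hle₁ x (Ioo_subset_Icc_self hx))
    rw [← g.2.tsum_eq, ← norm_eq_abs]
    refine (tsum_of_norm_bounded hc fun j => ?_).trans hcη
    rw [(hPg h₁ j x (Or.inl hg)).2]
    exact ((hrA j hA x (Ioo_subset_Icc_self hx)).1 (hvg h₁ j x (Or.inl hg)).1).trans (hdiv j)
  · have g := good_tsum (fun j => (hPg h₂ j x (Or.inl hg)).1)
      (hsum h₂ hle₂ x (Ioo_subset_Icc_self hx))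
    rw [← g.2.tsum_eq, ← norm_eq_abs]
    refine (tsum_of_norm_bounded hc fun j => ?_).trans hcη
    rw [(hPg h₂ j x (Or.inl hg)).2]
    exact ((hrA j hA x (Ioo_subset_Icc_self hx)).2 (hvg h₂ j x (Or.inl hg)).1).trans (hdiv j)

/-- Every subset of `(a, b)` either is finite, and then uniformly separated, or contains an infinite
sequence of mutually isolated points, which we label by unbounded reals. -/
theorem exists_isolated_labels {a b : ℝ} {A : Set ℝ} (hA : A ⊆ Ioo a b) :
    ∃ (ι : Type) (_ : Countable ι) (xs r ex : ι → ℝ), (∀ i, xs i ∈ A) ∧ (∀ i, 0 < r i) ∧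
      (∀ i, r i ≤ bdist a b (xs i)) ∧ (∀ i j, i ≠ j → r i ≤ |xs i - xs j|) ∧
      ((∀ x ∈ A, ∃ i, xs i = x ∧ ex i = 0) ∨ ∀ M : ℝ, ∃ i, M ≤ ex i) := by
  have isol : ∀ {ι : Type} [TopologicalSpace ι] (f : ι → A), Topology.IsInducing f →
      DiscreteTopology ι → ∃ r : ι → ℝ, (∀ i, 0 < r i) ∧
        (∀ i, r i ≤ bdist a b (f i)) ∧ ∀ i j, i ≠ j → r i ≤ |(f i : ℝ) - f j| := by
    intro ι _ f hf hd
    have : ∀ i, ∃ r : ℝ, 0 < r ∧ r ≤ bdist a b (f i) ∧ ∀ j, i ≠ j → r ≤ |(f i : ℝ) - f j| := by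
      intro i
      have hn : {i} ∈ nhds i := (isOpen_discrete {i}).mem_nhds rfl
      rw [hf.nhds_eq_comap, Filter.mem_comap] at hn
      obtain ⟨t, ht, hts⟩ := hn
      obtain ⟨ρ, hρ, hb⟩ := Metric.mem_nhds_iff.1 ht
      refine ⟨min ρ (bdist a b (f i)), lt_min hρ (bdist_pos.2 (hA (f i).2)), min_le_right _ _,
        fun j hj => ?_⟩
      by_contra hlt
      push Not at hlt
      have hm : f j ∈ Metric.ball (f i) ρ := by
        rw [Metric.mem_ball, Subtype.dist_eq, Real.dist_eq, abs_sub_comm]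
        exact hlt.trans_le (min_le_left _ _)
      exact hj (hts (hb hm) : j = i).symm
    choose r h1 h2 h3 using this
    exact ⟨r, h1, h2, h3⟩
  rcases A.finite_or_infinite with hf | hi
  · have := hf.to_subtype
    obtain ⟨r, h1, h2, h3⟩ := isol (id : A → A) Topology.IsInducing.id
      inferInstance
    exact ⟨A, inferInstance, fun i => i, r, fun _ => 0, fun i => i.2, h1, h2, h3,
      Or.inl fun x hx => ⟨⟨x, hx⟩, rfl, rfl⟩⟩
  · have := hi.to_subtype
    obtain ⟨f, hf⟩ := exists_topology_isEmbedding_nat A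
    obtain ⟨r, h1, h2, h3⟩ := isol f hf.isInducing inferInstance
    exact ⟨ℕ, inferInstance, fun i => f i, r, fun i => i, fun i => (f i).2, h1, h2, h3,
      Or.inr fun M => exists_nat_ge M⟩

theorem not_good_add {k f g : ℝ → ℝ} {x : ℝ} (hf : ¬ Good k f x) (hg : Good k g x) :
    ¬ Good k (fun t => f t + g t) x := fun h => hf (by simpa using h.sub hg)

theorem exists_perturbation {k₁ k₂ : ℝ → ℝ} {θ₁ θ₂ C₁ C₂ : ℝ} (h₁ : WeakSing k₁ θ₁ C₁)
    (h₂ : WeakSing k₂ θ₂ C₂) (hd₁ : DirAvg k₁ 1) (hd₂ : DirAvg k₂ (-1)) {a b : ℝ} (hab : a < b)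
    {u φ : ℝ → ℝ} (hu : Integrable u) (hum : Measurable u) (hu0 : ∀ t, t ∉ Ioo a b → u t = 0)
    (hφ : Continuous φ) (hT : ∀ x ∈ Icc a b, opT k₁ k₂ u x = φ x) {η : ℝ} (hη : 0 < η) :
    ∃ p τ : ℝ → ℝ, Measurable p ∧ Integrable p ∧ (∀ t, t ∉ Ioo a b → p t = 0) ∧
      ∫ t, |p t| ≤ η ∧ ContinuousOn τ (Icc a b) ∧ (∀ x ∈ Icc a b, |τ x| ≤ η) ∧
      (∀ x ∈ Ioo a b, Good k₁ (fun t => u t + p t) x ∧ Good k₂ (fun t => u t + p t) x ∧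
        opT k₁ k₂ (fun t => u t + p t) x = φ x + τ x) ∧
      (∀ x, x = a ∨ x = b → Good k₁ p x ∧ Good k₂ p x ∧ opT k₁ k₂ p x = τ x) ∧
      ((∀ x ∈ Ioo a b, |opT k₁ k₂ p x| ≤ η) ∨ ∀ M, ∃ x ∈ Ioo a b, M ≤ |opT k₁ k₂ p x|) := by
  obtain ⟨p, τ, hpm, hpi, hp0, hpn, hτc, hτn, hca, hbal, hend, hA⟩ :=
    exists_interior_mollification h₁ h₂ hd₁ hd₂ hab hu hum hu0 hφ hT
      (show 0 < η / 2 by linarith)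
  have hup := hu.add hpi
  have hg₁ : ∀ x ∈ Ioo a b, Good k₁ (fun t => u t + p t) x := fun x hx =>
    h₁.good_of_continuousAt hup (hca x hx)
  have hg₂ : ∀ x ∈ Ioo a b, Good k₂ (fun t => u t + p t) x := fun x hx =>
    h₂.good_of_continuousAt hup (hca x hx)
  have hgp : ∀ {k : ℝ → ℝ} {x : ℝ}, Good k (fun t => u t + p t) x → (Good k p x ↔ Good k u x) :=
    fun h => ⟨fun hp => by simpa using h.sub hp, fun hu => by simpa using h.sub hu⟩
  have hboth : ∀ x ∈ Ioo a b, Good k₁ u x → Good k₂ u x → opT k₁ k₂ p x = τ x := by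
    intro x hx g1 g2
    have e := hbal x hx
    rw [← hT x (Ioo_subset_Icc_self hx)] at e
    unfold opT at e ⊢
    rw [cv_add g1 ((hgp (hg₁ x hx)).2 g1), cv_add g2 ((hgp (hg₂ x hx)).2 g2)] at e
    linarith
  by_cases hAP : APriori k₁ k₂
  · refine ⟨p, τ, hpm, hpi, hp0, by linarith, hτc, fun x hx => by linarith [hτn x hx],
      fun x hx => ⟨hg₁ x hx, hg₂ x hx, hbal x hx⟩, hend, Or.inl fun x hx => ?_⟩
    have hx' := Ioo_subset_Icc_self hx
    by_cases g1 : Good k₁ u x <;> by_cases g2 : Good k₂ u x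
    · rw [hboth x hx g1 g2]; linarith [hτn x hx']
    · rw [opT, cv_of_not_good (mt (hgp (hg₂ x hx)).1 g2), add_zero]
      linarith [(hA hAP x hx).1 g1]
    · rw [opT, cv_of_not_good (mt (hgp (hg₁ x hx)).1 g1), zero_add]
      linarith [(hA hAP x hx).2 g2]
    · rw [opT, cv_of_not_good (mt (hgp (hg₂ x hx)).1 g2),
        cv_of_not_good (mt (hgp (hg₁ x hx)).1 g1), add_zero, abs_zero]
      exact hη.le
  · obtain ⟨ι, _, xs, r, ex, hxs, hr, hrb, hsep, hor⟩ :=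
      exists_isolated_labels (A := {x | x ∈ Ioo a b ∧ ¬ (Good k₁ u x ↔ Good k₂ u x)})
        (fun x hx => hx.1)
    classical
    obtain ⟨w, hwm, hwi, hw0, hwn, hwg, hwc, hwb, hwx⟩ := exists_gadget_sum h₁ h₂ hAP xs r
      (fun i => if Good k₁ u (xs i) then ex i - opT k₁ k₂ p (xs i)
        else opT k₁ k₂ p (xs i) - ex i) hr hsep (show 0 < η / 4 by linarith)
    have hval : ∀ i, |opT k₁ k₂ (fun t => p t + w t) (xs i) - ex i| ≤ η / 2 := by
      intro i
      obtain ⟨hx, hxor⟩ := hxs i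
      have hw := hwx i
      have hT := hwb (xs i)
      have gw := hwg (xs i)
      by_cases g1 : Good k₁ u (xs i)
      · have g2 : ¬ Good k₂ u (xs i) := fun g2 => hxor ⟨fun _ => g2, fun _ => g1⟩
        have n2 := mt (hgp (hg₂ _ hx)).1 g2
        have p1 := (hgp (hg₁ _ hx)).2 g1
        rw [if_pos g1, opT, cv_of_not_good n2, add_zero] at hw
        rw [opT, cv_add p1 gw.1, cv_of_not_good (not_good_add n2 gw.2), add_zero]
        rw [abs_le] at hw ⊢
        constructor <;> linarith
      · have g2 : Good k₂ u (xs i) := by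
          by_contra g2
          exact hxor ⟨fun h => absurd h g1, fun h => absurd h g2⟩
        have n1 := mt (hgp (hg₁ _ hx)).1 g1
        have p2 := (hgp (hg₂ _ hx)).2 g2
        rw [if_neg g1, opT, cv_of_not_good n1, zero_add] at hw
        rw [opT, cv_add p2 gw.2, cv_of_not_good (not_good_add n1 gw.1), zero_add]
        rw [opT] at hT
        rw [abs_le] at hw hT ⊢
        constructor <;> linarith
    have hassoc : (fun t => u t + (p t + w t)) = fun t => (u t + p t) + w t := by
      ext t; ring
    refine ⟨fun t => p t + w t, fun x => τ x + opT k₁ k₂ w x, hpm.add hwm, hpi.add hwi,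
      fun t ht => ?_, ?_, hτc.add hwc.continuousOn, fun x hx => ?_, fun x hx => ?_,
      fun x hx => ?_, ?_⟩
    · simp only
      rw [hp0 t ht, hw0 t fun i => ?_, add_zero]
      refine (hrb i).trans ?_
      have hb : bdist a b t ≤ 0 := not_lt.1 fun h => ht (bdist_pos.1 h)
      have := (le_abs_self _).trans (bdist_sub_le a b (xs i) t)
      linarith
    · calc ∫ t, |p t + w t| ≤ ∫ t, (|p t| + |w t|) :=
            integral_mono (hpi.add hwi).abs (hpi.abs.add hwi.abs) fun t => abs_add_le _ _
        _ = (∫ t, |p t|) + ∫ t, |w t| := integral_add hpi.abs hwi.abs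
        _ ≤ η := by linarith
    · refine (abs_add_le _ _).trans ?_
      linarith [hτn x hx, hwb x]
    · rw [hassoc]
      refine ⟨(hg₁ x hx).add (hwg x).1, (hg₂ x hx).add (hwg x).2, ?_⟩
      have e := hbal x hx
      unfold opT at e ⊢
      rw [cv_add (hg₁ x hx) (hwg x).1, cv_add (hg₂ x hx) (hwg x).2]
      linarith
    · obtain ⟨g1, g2, e⟩ := hend x hx
      refine ⟨g1.add (hwg x).1, g2.add (hwg x).2, ?_⟩
      unfold opT at e ⊢
      rw [cv_add g1 (hwg x).1, cv_add g2 (hwg x).2]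
      linarith
    · rcases hor with hfin | hunb
      · refine Or.inl fun x hx => ?_
        by_cases hiff : Good k₁ u x ↔ Good k₂ u x
        · by_cases g1 : Good k₁ u x
          · have g2 := hiff.1 g1
            have e := hboth x hx g1 g2
            have t1 := hτn x (Ioo_subset_Icc_self hx)
            have t2 := hwb x
            unfold opT at e t2 ⊢
            rw [cv_add ((hgp (hg₁ x hx)).2 g1) (hwg x).1,
              cv_add ((hgp (hg₂ x hx)).2 g2) (hwg x).2]
            rw [abs_le] at t1 t2 ⊢
            constructor <;> linarith
          · have n1 := mt (hgp (hg₁ _ hx)).1 g1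
            have n2 := mt (hgp (hg₂ _ hx)).1 (mt hiff.2 g1)
            rw [opT, cv_of_not_good (not_good_add n1 (hwg x).1),
              cv_of_not_good (not_good_add n2 (hwg x).2), add_zero, abs_zero]
            exact hη.le
        · obtain ⟨i, rfl, hi⟩ := hfin x ⟨hx, hiff⟩
          have := hval i
          rw [hi, sub_zero] at this
          linarith
      · refine Or.inr fun M => ?_
        obtain ⟨i, hi⟩ := hunb (M + η / 2)
        refine ⟨xs i, (hxs i).1, le_trans ?_ (le_abs_self _)⟩
        linarith [neg_le_of_abs_le (hval i)]

theorem powKer_left_end {a b : ℝ} {f : ℝ → ℝ} (c α : ℝ) (hf : ∀ t, t ∉ Ioo a b → f t = 0) (t : ℝ) :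
    powKer c α (a - t) * f t = 0 := by
  by_cases ht : t ∈ Ioo a b
  · rw [powKer, if_neg (by linarith [ht.1]), zero_mul]
  · rw [hf t ht, mul_zero]

theorem powKer_right_end {a b : ℝ} {f : ℝ → ℝ} (c β : ℝ) (hf : ∀ t, t ∉ Ioo a b → f t = 0)
    (t : ℝ) : powKer c β (-(b - t)) * f t = 0 := by
  by_cases ht : t ∈ Ioo a b
  · rw [powKer, if_neg (by linarith [ht.2]), zero_mul]
  · rw [hf t ht, mul_zero]

theorem cv_powKer_right_end {a b : ℝ} {f : ℝ → ℝ} (c α β : ℝ) (hf : ∀ t, t ∉ Ioo a b → f t = 0) :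
    cv (powKer c α) f b = c * ∫ t, endFun a b α β 2 t * f t := by
  rw [cv, ← integral_const_mul]
  congr 1; ext t
  by_cases ht : t ∈ Ioo a b
  · rw [powKer, if_pos (by linarith [ht.2])]
    simp [endFun, mul_assoc]
  · simp [hf t ht]

theorem cv_powKer_left_end {a b : ℝ} {f : ℝ → ℝ} (c α β : ℝ) (hf : ∀ t, t ∉ Ioo a b → f t = 0) :
    cv (fun s => powKer c β (-s)) f a = c * ∫ t, endFun a b α β 1 t * f t := by
  rw [cv, ← integral_const_mul]
  congr 1; ext t
  by_cases ht : t ∈ Ioo a b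
  · rw [powKer, if_pos (by linarith [ht.1])]
    simp [endFun, mul_assoc]
  · simp [hf t ht]

theorem cv_add_of_null {k u r : ℝ → ℝ} {x : ℝ} (hr : Good k r x) (h0 : cv k r x = 0) :
    cv k (fun t => u t + r t) x = cv k u x := by
  by_cases hu : Good k u x
  · rw [cv_add hu hr, h0, add_zero]
  · rw [cv_of_not_good hu, cv_of_not_good (not_good_add hu hr)]

theorem abs_cv_add_sub_le {k p q : ℝ → ℝ} {x : ℝ} (hq : Good k q x) :
    |cv k (fun t => p t + q t) x - cv k p x| ≤ |cv k q x| := by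
  by_cases hp : Good k p x
  · rw [cv_add hp hq, add_sub_cancel_left]
  · rw [cv_of_not_good hp, cv_of_not_good (not_good_add hp hq), sub_zero, abs_zero]
    exact abs_nonneg _

theorem abs_opT_add_sub_le {k₁ k₂ p q : ℝ → ℝ} {x : ℝ} (h₁ : Good k₁ q x) (h₂ : Good k₂ q x) :
    |opT k₁ k₂ (fun t => p t + q t) x - opT k₁ k₂ p x| ≤ |cv k₁ q x| + |cv k₂ q x| := by
  refine le_trans (le_of_eq ?_)
    ((abs_add_le _ _).trans (add_le_add (abs_cv_add_sub_le (p := p) h₁)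
      (abs_cv_add_sub_le (p := p) h₂)))
  unfold opT
  congr 1; ring

theorem WeakSing.good_test {k : ℝ → ℝ} {θ C : ℝ} (hk : WeakSing k θ C) {a b : ℝ} {q : ℝ → ℝ}
    (hq : q ∈ testSpace a b) (x : ℝ) : Good k q x :=
  hk.good_of_continuousAt (integrable_test hq) hq.1.continuousAt

theorem WeakSing.continuous_cv_test {k : ℝ → ℝ} {θ C : ℝ} (hk : WeakSing k θ C) {a b : ℝ}
    {q : ℝ → ℝ} (hq : q ∈ testSpace a b) : Continuous (cv k q) :=
  hk.continuous_cv hq.1 (hasCompactSupport_test hq)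

theorem exists_corrected_perturbation {a b α β c₁ c₂ : ℝ} (hab : a < b) (hα : α ∈ Ioo (0 : ℝ) 1)
    (hβ : β ∈ Ioo (0 : ℝ) 1) {k₁ k₂ : ℝ → ℝ} (hk₁ : k₁ = powKer c₁ α)
    (hk₂ : k₂ = fun s => powKer c₂ β (-s))
    {u φ : ℝ → ℝ} (hu : Integrable u) (hum : Measurable u) (hu0 : ∀ t, t ∉ Ioo a b → u t = 0)
    (hφ : Continuous φ) (hT : ∀ x ∈ Icc a b, opT k₁ k₂ u x = φ x) {η : ℝ} (hη : 0 < η) :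
    ∃ p τ : ℝ → ℝ, Measurable p ∧ Integrable p ∧ (∀ t, t ∉ Ioo a b → p t = 0) ∧
      ∫ t, p t = 0 ∧ ∫ t, |p t| ≤ η ∧ ContinuousOn τ (Icc a b) ∧ (∀ x ∈ Icc a b, |τ x| ≤ η) ∧
      (∀ q ∈ testSpace a b, (∀ j, ∫ t, endFun a b α β j t * q t = 0) → ∀ x ∈ Icc a b,
        opT k₁ k₂ (fun t => u t + (p t + q t)) x = φ x + τ x + opT k₁ k₂ q x) ∧
      ((∀ q ∈ testSpace a b, ∀ x ∈ Icc a b,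
          |opT k₁ k₂ (fun t => p t + q t) x| ≤ η + (|cv k₁ q x| + |cv k₂ q x|)) ∨
        ∀ q ∈ testSpace a b, ∀ M, ∃ x ∈ Icc a b, M ≤ |opT k₁ k₂ (fun t => p t + q t) x|) := by
  have h₁ : WeakSing k₁ α |c₁| := hk₁ ▸ weakSing_powKer c₁ hα.1 hα.2
  have h₂ : WeakSing k₂ β |c₂| := hk₂ ▸ (weakSing_powKer c₂ hβ.1 hβ.2).comp_neg
  have hd₁ : DirAvg k₁ 1 := hk₁ ▸ dirAvg_powKer c₁ hα.1 hα.2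
  have hd₂ : DirAvg k₂ (-1) := hk₂ ▸ (dirAvg_powKer c₂ hβ.1 hβ.2).comp_neg
  have ga : ∀ {f : ℝ → ℝ}, (∀ t, t ∉ Ioo a b → f t = 0) → Good k₁ f a ∧ cv k₁ f a = 0 :=
    fun hf => by
      rw [hk₁]
      simp [Good, cv, powKer_left_end c₁ α hf]
  have gb : ∀ {f : ℝ → ℝ}, (∀ t, t ∉ Ioo a b → f t = 0) → Good k₂ f b ∧ cv k₂ f b = 0 :=
    fun hf => by
      rw [hk₂]
      have := powKer_right_end c₂ β hf
      simp only [Good, cv, this]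
      simp
  have va : ∀ {f : ℝ → ℝ}, (∀ t, t ∉ Ioo a b → f t = 0) →
      opT k₁ k₂ f a = c₂ * ∫ t, endFun a b α β 1 t * f t := fun hf => by
    rw [opT, (ga hf).2, zero_add, hk₂, cv_powKer_left_end c₂ α β hf]
  have vb : ∀ {f : ℝ → ℝ}, (∀ t, t ∉ Ioo a b → f t = 0) →
      opT k₁ k₂ f b = c₁ * ∫ t, endFun a b α β 2 t * f t := fun hf => by
    rw [opT, (gb hf).2, add_zero, hk₁, cv_powKer_right_end c₁ α β hf]
  choose d hd hdual using fun i => exists_dual hab hα.1 hβ.1 (α := α) (β := β) i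
  have hK : ∃ K : ℝ, 0 ≤ K ∧ ∀ j, (∫ t, |d j t| ≤ K) ∧
      ∀ x ∈ Icc a b, |cv k₁ (d j) x| + |cv k₂ (d j) x| ≤ K := by
    have : ∀ j, ∃ K : ℝ, 0 ≤ K ∧ (∫ t, |d j t| ≤ K) ∧
        ∀ x ∈ Icc a b, |cv k₁ (d j) x| + |cv k₂ (d j) x| ≤ K := by
      intro j
      obtain ⟨K, hK⟩ := (isCompact_Icc (a := a) (b := b)).bddAbove_image
        (f := fun x => |cv k₁ (d j) x| + |cv k₂ (d j) x|)
        ((h₁.continuous_cv_test (hd j)).abs.add (h₂.continuous_cv_test (hd j)).abs).continuousOn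
      refine ⟨max K (∫ t, |d j t|), le_max_of_le_right (integral_nonneg fun _ => abs_nonneg _),
        le_max_right _ _, fun x hx => (hK (mem_image_of_mem _ hx)).trans (le_max_left _ _)⟩
    choose K h1 h2 h3 using this
    have hle : ∀ j, K j ≤ ∑ j, K j := fun j =>
      Finset.single_le_sum (fun j _ => h1 j) (Finset.mem_univ j)
    exact ⟨∑ j, K j, Finset.sum_nonneg fun j _ => h1 j, fun j => ⟨(h2 j).trans (hle j),
      fun x hx => (h3 j x hx).trans (hle j)⟩⟩
  obtain ⟨K, hK0, hK⟩ := hK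
  set B : ℝ := 1 + |c₂|⁻¹ + |c₁|⁻¹ with hB
  have hB0 : 0 ≤ B := by positivity
  have hden : 0 < 1 + 3 * B * K := by positivity
  obtain ⟨p, τ, hpm, hpi, hp0, hpn, hτc, hτn, hbal, hend, hor⟩ :=
    exists_perturbation h₁ h₂ hd₁ hd₂ hab hu hum hu0 hφ hT (div_pos hη hden)
  set ε := η / (1 + 3 * B * K) with hε
  have hε0 : 0 < ε := div_pos hη hden
  have hεη : ε * (1 + 3 * B * K) = η := by rw [hε]; field_simp
  have hmemIcc : a ∈ Icc a b ∧ b ∈ Icc a b := ⟨left_mem_Icc.2 hab.le, right_mem_Icc.2 hab.le⟩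
  -- the correction
  set m : Fin 3 → ℝ := ![-∫ t, p t, -(τ a / c₂), -(τ b / c₁)] with hm
  have hmB : ∀ j, |m j| ≤ ε * B := by
    have e1 : |∫ t, p t| ≤ ε := (abs_integral_le_integral_abs).trans hpn
    have e2 := hτn a hmemIcc.1
    have e3 := hτn b hmemIcc.2
    have i1 : (0 : ℝ) ≤ |c₁|⁻¹ := by positivity
    have i2 : (0 : ℝ) ≤ |c₂|⁻¹ := by positivity
    intro j
    fin_cases j
    · simp only [hm, Fin.zero_eta, Matrix.cons_val_zero, abs_neg]
      nlinarith [mul_nonneg hε0.le i1, mul_nonneg hε0.le i2]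
    · simp only [hm, Fin.mk_one, Matrix.cons_val, abs_neg, div_eq_mul_inv, abs_mul,
        abs_inv]
      nlinarith [mul_le_mul_of_nonneg_right e2 i2, mul_nonneg hε0.le i1]
    · simp only [hm, Fin.reduceFinMk, Matrix.cons_val, abs_neg, div_eq_mul_inv, abs_mul, abs_inv]
      nlinarith [mul_le_mul_of_nonneg_right e3 i1, mul_nonneg hε0.le i2]
  set s : ℝ → ℝ := ∑ j, m j • d j with hs
  have hsmem : s ∈ testSpace a b :=
    Submodule.sum_mem _ fun j _ => Submodule.smul_mem _ _ (hd j)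
  have hst : ∀ t, s t = ∑ j, m j * d j t := fun t => by simp [hs]
  have hspair : ∀ i, ∫ t, endFun a b α β i t * s t = m i := by
    intro i
    simp only [hst, Finset.mul_sum, mul_left_comm _ (m _)]
    rw [integral_finsetSum _ fun j _ =>
      (integrable_mul_test (continuousOn_endFun a b α β i) (hd j)).const_mul _]
    simp [integral_const_mul, hdual]
  have hscv : ∀ {k : ℝ → ℝ} {θ C : ℝ}, WeakSing k θ C → ∀ x, cv k s x = ∑ j, m j * cv k (d j) x := by
    intro k θ C hk x
    simp only [cv, hst, Finset.mul_sum, mul_left_comm _ (m _)]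
    rw [integral_finsetSum _ fun j _ => Integrable.const_mul (hk.good_test (hd j) x) _]
    simp [integral_const_mul]
  have hsb : ∀ x ∈ Icc a b, |cv k₁ s x| + |cv k₂ s x| ≤ ε * (3 * B * K) := by
    intro x hx
    rw [hscv h₁, hscv h₂]
    calc _ ≤ (∑ j, |m j * cv k₁ (d j) x|) + ∑ j, |m j * cv k₂ (d j) x| :=
          add_le_add (Finset.abs_sum_le_sum_abs _ _) (Finset.abs_sum_le_sum_abs _ _)
      _ = ∑ j, |m j| * (|cv k₁ (d j) x| + |cv k₂ (d j) x|) := by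
          rw [← Finset.sum_add_distrib]; simp [abs_mul, mul_add]
      _ ≤ ∑ j : Fin 3, ε * B * K := Finset.sum_le_sum fun j _ =>
          mul_le_mul (hmB j) ((hK j).2 x hx) (by positivity) (by positivity)
      _ = _ := by simp; ring
  have hs0 : ∀ t, t ∉ Ioo a b → s t = 0 := fun t ht => test_eq_zero hsmem ht
  have hsi := integrable_test hsmem
  have hsn : ∫ t, |s t| ≤ ε * (3 * B * K) := by
    calc ∫ t, |s t| ≤ ∫ t, ∑ j, |m j| * |d j t| := by
          refine integral_mono hsi.abs (integrable_finsetSum _ fun j _ =>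
            (integrable_test (hd j)).abs.const_mul _) fun t => ?_
          simp only [hst, ← abs_mul]
          exact Finset.abs_sum_le_sum_abs _ _
      _ = ∑ j, |m j| * ∫ t, |d j t| := by
          rw [integral_finsetSum _ fun j _ => (integrable_test (hd j)).abs.const_mul _]
          simp [integral_const_mul]
      _ ≤ ∑ j : Fin 3, ε * B * K := Finset.sum_le_sum fun j _ =>
          mul_le_mul (hmB j) (hK j).1 (integral_nonneg fun _ => abs_nonneg _) (by positivity)
      _ = _ := by simp; ring
  have hps0 : ∀ t, t ∉ Ioo a b → p t + s t = 0 := fun t ht => by rw [hp0 t ht, hs0 t ht, add_zero]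
  have hnull : ∀ x, x = a ∨ x = b → opT k₁ k₂ (fun t => p t + s t) x = 0 ∧
      τ x + opT k₁ k₂ s x = 0 := by
    intro x hx
    obtain ⟨g1, g2, e⟩ := hend x hx
    have e' : opT k₁ k₂ (fun t => p t + s t) x = τ x + opT k₁ k₂ s x := by
      rw [← e]
      unfold opT
      rw [cv_add g1 (h₁.good_test hsmem x), cv_add g2 (h₂.good_test hsmem x)]
      ring
    rw [e', and_self]
    rcases hx with rfl | rfl
    · rw [va hs0, hspair]
      rw [va hp0] at e
      rcases eq_or_ne c₂ 0 with h0 | h0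
      · rw [← e, h0]; simp
      · simp [hm]; field_simp; ring
    · rw [vb hs0, hspair]
      rw [vb hp0] at e
      rcases eq_or_ne c₁ 0 with h0 | h0
      · rw [← e, h0]; simp
      · simp [hm]; field_simp; ring
  refine ⟨fun t => p t + s t, fun x => τ x + opT k₁ k₂ s x, hpm.add hsmem.1.measurable,
    hpi.add hsi, hps0, ?_, ?_,
    hτc.add ((h₁.continuous_cv_test hsmem).add (h₂.continuous_cv_test hsmem)).continuousOn,
    fun x hx => ?_, fun q hq hq0 x hx => ?_, ?_⟩
  · rw [integral_add hpi hsi]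
    have := hspair 0
    simp [endFun, hm] at this
    rw [this]; ring
  · calc ∫ t, |p t + s t| ≤ ∫ t, (|p t| + |s t|) :=
          integral_mono (hpi.add hsi).abs (hpi.abs.add hsi.abs) fun t => abs_add_le _ _
      _ = (∫ t, |p t|) + ∫ t, |s t| := integral_add hpi.abs hsi.abs
      _ ≤ η := by linarith
  · refine (abs_add_le _ _).trans ?_
    have := (abs_add_le (cv k₁ s x) (cv k₂ s x)).trans (hsb x hx)
    unfold opT
    linarith [hτn x hx]
  · have hsq : (fun t => s t + q t) ∈ testSpace a b := Submodule.add_mem _ hsmem hq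
    by_cases hxe : x = a ∨ x = b
    · have hq0' : opT k₁ k₂ q x = 0 := by
        rcases hxe with rfl | rfl
        · rw [va fun t ht => test_eq_zero hq ht, hq0, mul_zero]
        · rw [vb fun t ht => test_eq_zero hq ht, hq0, mul_zero]
      obtain ⟨g1, g2, -⟩ := hend x hxe
      have G1 := (g1.add (h₁.good_test hsmem x)).add (h₁.good_test hq x)
      have G2 := (g2.add (h₂.good_test hsmem x)).add (h₂.good_test hq x)
      have hr : opT k₁ k₂ (fun t => p t + s t + q t) x = 0 := by
        have h := (hnull x hxe).1
        unfold opT at h hq0' ⊢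
        rw [cv_add (g1.add (h₁.good_test hsmem x)) (h₁.good_test hq x),
          cv_add (g2.add (h₂.good_test hsmem x)) (h₂.good_test hq x)]
        linarith
      have hr0 : ∀ t, t ∉ Ioo a b → p t + s t + q t = 0 := fun t ht => by
        rw [hps0 t ht, test_eq_zero hq ht, add_zero]
      have hr12 : cv k₁ (fun t => p t + s t + q t) x = 0 ∧
          cv k₂ (fun t => p t + s t + q t) x = 0 := by
        unfold opT at hr
        rcases hxe with rfl | rfl
        · have := (ga hr0).2
          exact ⟨this, by linarith⟩
        · have := (gb hr0).2
          exact ⟨by linarith, this⟩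
      have e1 := hT x hx
      have e2 := (hnull x hxe).2
      simp only
      rw [add_assoc, hq0', e2, ← e1]
      unfold opT
      rw [cv_add_of_null G1 hr12.1, cv_add_of_null G2 hr12.2]
      ring
    · have hxI : x ∈ Ioo a b := by
        push Not at hxe
        exact ⟨lt_of_le_of_ne hx.1 (Ne.symm hxe.1), lt_of_le_of_ne hx.2 hxe.2⟩
      obtain ⟨g1, g2, e⟩ := hbal x hxI
      have : (fun t => u t + (p t + s t + q t)) = fun t => (u t + p t) + (s t + q t) := by
        ext t; ring
      rw [this]
      unfold opT at e ⊢
      rw [cv_add g1 (h₁.good_test hsq x), cv_add g2 (h₂.good_test hsq x),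
        cv_add (h₁.good_test hsmem x) (h₁.good_test hq x),
        cv_add (h₂.good_test hsmem x) (h₂.good_test hq x)]
      linarith
  · rcases hor with hb | hunb
    · refine Or.inl fun q hq x hx => ?_
      have e1 := abs_opT_add_sub_le (p := fun t => p t + s t) (h₁.good_test hq x)
        (h₂.good_test hq x)
      have e3 : |opT k₁ k₂ (fun t => p t + s t) x| ≤ η := by
        by_cases hxe : x = a ∨ x = b
        · rw [(hnull x hxe).1, abs_zero]; exact hη.le
        · have hxI : x ∈ Ioo a b := by
            push Not at hxe
            exact ⟨lt_of_le_of_ne hx.1 (Ne.symm hxe.1), lt_of_le_of_ne hx.2 hxe.2⟩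
          have e2 := abs_opT_add_sub_le (p := p) (h₁.good_test hsmem x) (h₂.good_test hsmem x)
          have e4 := abs_sub_abs_le_abs_sub (opT k₁ k₂ (fun t => p t + s t) x) (opT k₁ k₂ p x)
          linarith [hb x hxI, hsb x hx]
      have e4 := abs_sub_abs_le_abs_sub (opT k₁ k₂ (fun t => p t + s t + q t) x)
        (opT k₁ k₂ (fun t => p t + s t) x)
      linarith
    · refine Or.inr fun q hq M => ?_
      have hsq : (fun t => s t + q t) ∈ testSpace a b := Submodule.add_mem _ hsmem hq
      obtain ⟨K', hK'⟩ := (isCompact_Icc (a := a) (b := b)).bddAbove_image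
        (f := fun x => |cv k₁ (fun t => s t + q t) x| + |cv k₂ (fun t => s t + q t) x|)
        ((h₁.continuous_cv_test hsq).abs.add (h₂.continuous_cv_test hsq).abs).continuousOn
      obtain ⟨x, hx, hM⟩ := hunb (M + K')
      refine ⟨x, Ioo_subset_Icc_self hx, ?_⟩
      have e1 := hK' (mem_image_of_mem _ (Ioo_subset_Icc_self hx))
      have e2 := abs_opT_add_sub_le (p := p) (h₁.good_test hsq x) (h₂.good_test hsq x)
      have e3 := abs_sub_abs_le_abs_sub (opT k₁ k₂ p x)
        (opT k₁ k₂ (fun t => p t + (s t + q t)) x)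
      rw [abs_sub_comm] at e3
      simp only [add_assoc]
      linarith

theorem cv_powKer_eq {a b c α x : ℝ} {v w : ℝ → ℝ} (hx : x ∈ Icc a b)
    (hw0 : ∀ t, t ∉ Ioo a b → w t = 0) (hw : ∀ᵐ t, t ∈ Ioo a b → v t = w t) :
    cv (powKer c α) w x = c * ∫ t in a..x, (x - t) ^ (-α) * v t := by
  rw [intervalIntegral.integral_of_le hx.1, ← integral_indicator measurableSet_Ioc,
    ← integral_const_mul, cv]
  refine integral_congr_ae ?_
  filter_upwards [hw, volume.ae_ne x, volume.ae_ne b] with t ht htx htb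
  by_cases htI : t ∈ Ioo a b
  · rcases lt_or_gt_of_ne htx with h | h
    · rw [powKer, if_pos (by linarith), indicator_of_mem (show t ∈ Ioc a x from ⟨htI.1, h.le⟩),
        ht htI, mul_assoc]
    · rw [powKer, if_neg (by linarith), indicator_of_notMem (fun h' => absurd h'.2 (by linarith))]
      simp
  · rw [hw0 t htI, indicator_of_notMem]
    · simp
    · exact fun h => htI ⟨h.1, lt_of_le_of_ne (h.2.trans hx.2) htb⟩

theorem cv_powKer_neg_eq {a b c β x : ℝ} {v w : ℝ → ℝ} (hx : x ∈ Icc a b)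
    (hw0 : ∀ t, t ∉ Ioo a b → w t = 0) (hw : ∀ᵐ t, t ∈ Ioo a b → v t = w t) :
    cv (fun s => powKer c β (-s)) w x = c * ∫ t in x..b, (t - x) ^ (-β) * v t := by
  rw [intervalIntegral.integral_of_le hx.2, ← integral_indicator measurableSet_Ioc,
    ← integral_const_mul, cv]
  refine integral_congr_ae ?_
  filter_upwards [hw, volume.ae_ne x, volume.ae_ne b] with t ht htx htb
  by_cases htI : t ∈ Ioo a b
  · rcases lt_or_gt_of_ne htx with h | h
    · rw [powKer, if_neg (by linarith), indicator_of_notMem (fun h' => absurd h'.1 (by linarith))]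
      simp
    · rw [powKer, if_pos (by linarith), indicator_of_mem (show t ∈ Ioc x b from ⟨h, htI.2.le⟩),
        ht htI, mul_assoc, neg_sub]
  · rw [hw0 t htI, indicator_of_notMem]
    · simp
    · exact fun h => htI ⟨lt_of_le_of_lt hx.1 h.1, lt_of_le_of_ne h.2 htb⟩

/-- The left kernel of the combined Caputo derivative. -/
def caputoKerL (α γ : ℝ) : ℝ → ℝ := powKer (γ / Gamma (1 - α)) α

/-- The right kernel of the combined Caputo derivative. -/
def caputoKerR (β γ : ℝ) : ℝ → ℝ := fun s => powKer (-((1 - γ) / Gamma (1 - β))) β (-s)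

theorem combCaputo_eq_opT {a b α β γ x : ℝ} {f w : ℝ → ℝ} (hx : x ∈ Icc a b)
    (hw0 : ∀ t, t ∉ Ioo a b → w t = 0) (hw : ∀ᵐ t, t ∈ Ioo a b → deriv f t = w t) :
    combCaputo a b α β γ f x = opT (caputoKerL α γ) (caputoKerR β γ) w x := by
  unfold opT caputoKerL caputoKerR
  rw [cv_powKer_eq hx hw0 hw, cv_powKer_neg_eq hx hw0 hw, combCaputo,
    caputoLeft, caputoRight]
  ring

theorem ae_deriv_of_eq_integral {a b c : ℝ} {z v : ℝ → ℝ} (hv : Integrable v)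
    (hz : ∀ x ∈ Icc a b, z x = c + ∫ t in a..x, v t) :
    ∀ᵐ t, t ∈ Ioo a b → deriv z t = v t := by
  filter_upwards [LocallyIntegrable.ae_hasDerivAt_integral hv.locallyIntegrable] with t ht htI
  refine HasDerivAt.deriv (((ht a).const_add c).congr_of_eventuallyEq ?_)
  filter_upwards [isOpen_Ioo.mem_nhds htI] with s hs
  exact hz s (Ioo_subset_Icc_self hs)

theorem absolutelyContinuousOn_of_eq_integral {a b c : ℝ} (hab : a ≤ b) {z v : ℝ → ℝ}
    (hv : Integrable v) (hz : ∀ x ∈ Icc a b, z x = c + ∫ t in a..x, v t) :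
    AbsolutelyContinuousOn z a b := by
  have h := ae_deriv_of_eq_integral hv hz
  have h' : ∀ᵐ t, t ∈ Ioc a b → deriv z t = v t := by
    filter_upwards [h, volume.ae_ne b] with t ht htb htI
    exact ht ⟨htI.1, lt_of_le_of_ne htI.2 htb⟩
  refine ⟨?_, fun x hx => ?_⟩
  · rw [intervalIntegrable_iff_integrableOn_Ioc_of_le hab]
    exact hv.integrableOn.congr_fun_ae
      ((ae_restrict_iff' measurableSet_Ioc).2 (h'.mono fun t ht hI => (ht hI).symm))
  · rw [hz x hx, hz a (left_mem_Icc.2 hab), intervalIntegral.integral_same, add_zero]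
    congr 1
    refine intervalIntegral.integral_congr_ae (h'.mono fun t ht hI => ?_)
    rw [uIoc_of_le hx.1] at hI
    exact (ht ⟨hI.1, hI.2.trans hx.2⟩).symm

theorem AbsolutelyContinuousOn.continuousOn {f : ℝ → ℝ} {a b : ℝ} (hab : a ≤ b)
    (h : AbsolutelyContinuousOn f a b) : ContinuousOn f (Icc a b) := by
  refine ContinuousOn.congr ?_ h.2
  refine continuousOn_const.add ?_
  have := intervalIntegral.continuousOn_primitive_interval' h.1 left_mem_uIcc
  rwa [uIcc_of_le hab] at this

/-- The derivative restricted to the open interval. -/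
def innerDeriv (a b : ℝ) (f : ℝ → ℝ) : ℝ → ℝ := (Ioo a b).indicator (deriv f)

theorem measurable_innerDeriv (a b : ℝ) (f : ℝ → ℝ) : Measurable (innerDeriv a b f) :=
  (measurable_deriv f).indicator measurableSet_Ioo

theorem innerDeriv_of_notMem {a b : ℝ} {f : ℝ → ℝ} {t : ℝ} (h : t ∉ Ioo a b) :
    innerDeriv a b f t = 0 := indicator_of_notMem h _

theorem AbsolutelyContinuousOn.integrable_innerDeriv {f : ℝ → ℝ} {a b : ℝ} (hab : a ≤ b)
    (h : AbsolutelyContinuousOn f a b) : Integrable (innerDeriv a b f) :=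
  (((intervalIntegrable_iff_integrableOn_Ioc_of_le hab).1 h.1).mono_set
    Ioo_subset_Ioc_self).integrable_indicator measurableSet_Ioo

theorem AbsolutelyContinuousOn.eq_integral_innerDeriv {f : ℝ → ℝ} {a b : ℝ}
    (h : AbsolutelyContinuousOn f a b) {x : ℝ} (hx : x ∈ Icc a b) :
    f x = f a + ∫ t in a..x, innerDeriv a b f t := by
  rw [h.2 x hx]
  congr 1
  refine intervalIntegral.integral_congr_ae ?_
  filter_upwards [volume.ae_ne b] with t htb ht
  rw [uIoc_of_le hx.1] at ht
  rw [innerDeriv, indicator_of_mem]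
  exact ⟨ht.1, lt_of_le_of_ne (ht.2.trans hx.2) htb⟩

theorem abs_intervalIntegral_le {v : ℝ → ℝ} (hv : Integrable v) (a x : ℝ) :
    |∫ t in a..x, v t| ≤ ∫ t, |v t| := by
  rw [← norm_eq_abs]
  exact intervalIntegral.norm_integral_le_integral_norm_uIoc.trans
    (setIntegral_le_integral hv.norm (Filter.Eventually.of_forall fun _ => norm_nonneg _))

theorem intervalIntegral_eq_integral {a b : ℝ} (hab : a ≤ b) {v : ℝ → ℝ}
    (h0 : ∀ t, t ∉ Ioo a b → v t = 0) : ∫ t in a..b, v t = ∫ t, v t := by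
  rw [intervalIntegral.integral_of_le hab]
  exact setIntegral_eq_integral_of_forall_compl_eq_zero fun t ht =>
    h0 t fun h => ht (Ioo_subset_Ioc_self h)

/-- Replace component `i` of a trajectory by adding the primitive of `w`. -/
def perturb {N : ℕ} (a : ℝ) (y : ℝ → Fin N → ℝ) (i : Fin N) (w : ℝ → ℝ) : ℝ → Fin N → ℝ :=
  fun x => y x + Pi.single i (∫ t in a..x, w t)

theorem perturb_same {N : ℕ} (a : ℝ) (y : ℝ → Fin N → ℝ) (i : Fin N) (w : ℝ → ℝ) (x : ℝ) :
    perturb a y i w x i = y x i + ∫ t in a..x, w t := by simp [perturb]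

theorem perturb_ne {N : ℕ} (a : ℝ) (y : ℝ → Fin N → ℝ) {i j : Fin N} (h : j ≠ i) (w : ℝ → ℝ)
    (x : ℝ) : perturb a y i w x j = y x j := by simp [perturb, h]

section perturb
variable {a b α β γ : ℝ} {N : ℕ} {y : ℝ → Fin N → ℝ} {i : Fin N} {w : ℝ → ℝ}

theorem combCaputoVec_perturb (hab : a ≤ b)
    (hy : AbsolutelyContinuousOn (fun t => y t i) a b) (hw : Integrable w)
    (hw0 : ∀ t, t ∉ Ioo a b → w t = 0) {x c : ℝ} (hx : x ∈ Icc a b)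
    (h : opT (caputoKerL α γ) (caputoKerR β γ)
      (fun t => innerDeriv a b (fun t => y t i) t + w t) x = combCaputo a b α β γ (fun t => y t i) x + c) :
    combCaputoVec a b α β γ (perturb a y i w) x =
      combCaputoVec a b α β γ y x + Pi.single i c := by
  ext j
  rcases eq_or_ne j i with rfl | hj
  · simp only [combCaputoVec, Pi.add_apply, Pi.single_eq_same]
    rw [← h]
    refine combCaputo_eq_opT hx (fun t ht => by rw [innerDeriv_of_notMem ht, hw0 t ht, add_zero]) ?_
    have hu := hy.integrable_innerDeriv hab
    refine ae_deriv_of_eq_integral (c := y a j) (hu.add hw) fun s hs => ?_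
    rw [perturb_same, hy.eq_integral_innerDeriv hs, intervalIntegral.integral_add
      hu.intervalIntegrable hw.intervalIntegrable, add_assoc]
  · simp [combCaputoVec, perturb_ne a y hj, hj]

theorem memD_perturb (hab : a ≤ b) (hy : memD a b α β γ y) (hw : Integrable w)
    (hw0 : ∀ t, t ∉ Ioo a b → w t = 0) {ψ : ℝ → ℝ} (hψ : ContinuousOn ψ (Icc a b))
    (h : ∀ x ∈ Icc a b, opT (caputoKerL α γ) (caputoKerR β γ)
      (fun t => innerDeriv a b (fun t => y t i) t + w t) x = combCaputo a b α β γ (fun t => y t i) x + ψ x) :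
    memD a b α β γ (perturb a y i w) := by
  have hc := fun x hx => combCaputoVec_perturb hab (hy.1 i) hw hw0 hx (h x hx)
  refine ⟨fun j => ?_, fun j => ?_⟩
  · rcases eq_or_ne j i with rfl | hj
    · simp only [perturb_same]
      have hu := (hy.1 j).integrable_innerDeriv hab
      refine absolutelyContinuousOn_of_eq_integral (c := y a j) hab (hu.add hw) fun s hs => ?_
      rw [(hy.1 j).eq_integral_innerDeriv hs]
      simp only [Pi.add_apply]
      rw [intervalIntegral.integral_add
        hu.intervalIntegrable hw.intervalIntegrable, add_assoc]
    · simp only [perturb_ne a y hj]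
      exact hy.1 j
  · refine ContinuousOn.congr (f := fun x => combCaputo a b α β γ (fun t => y t j) x +
      (Pi.single i (ψ x) : Fin N → ℝ) j) ((hy.2 j).add ?_) fun x hx => congrFun (hc x hx) j
    rcases eq_or_ne j i with rfl | hj
    · simpa using hψ
    · simpa [hj] using continuousOn_const

theorem perturb_sub (a : ℝ) (y : ℝ → Fin N → ℝ) (i : Fin N) (w : ℝ → ℝ) :
    perturb a y i w - y = fun x => Pi.single i (∫ t in a..x, w t) := by
  ext x; simp [perturb]

theorem combCaputoVec_perturb_sub (hw : Integrable w) (hw0 : ∀ t, t ∉ Ioo a b → w t = 0) {x : ℝ}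
    (hx : x ∈ Icc a b) :
    combCaputoVec a b α β γ (perturb a y i w - y) x =
      Pi.single i (opT (caputoKerL α γ) (caputoKerR β γ) w x) := by
  rw [perturb_sub]
  ext j
  rcases eq_or_ne j i with rfl | hj
  · simp only [combCaputoVec, Pi.single_eq_same]
    exact combCaputo_eq_opT hx hw0 (ae_deriv_of_eq_integral (c := 0) hw fun s hs => by simp)
  · simp [combCaputoVec, hj, combCaputo, caputoLeft, caputoRight]

theorem norm1inf_perturb_sub_le (hw : Integrable w) (hw0 : ∀ t, t ∉ Ioo a b → w t = 0) {A B : ℝ}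
    (hA : ∫ t, |w t| ≤ A) (hB0 : 0 ≤ B)
    (h : (∀ x ∈ Icc a b, |opT (caputoKerL α γ) (caputoKerR β γ) w x| ≤ B) ∨
      ∀ M, ∃ x ∈ Icc a b, M ≤ |opT (caputoKerL α γ) (caputoKerR β γ) w x|) :
    norm1inf a b α β γ (perturb a y i w - y) ≤ A + B := by
  have hn : ∀ x ∈ Icc a b, ‖combCaputoVec a b α β γ (perturb a y i w - y) x‖ =
      |opT (caputoKerL α γ) (caputoKerR β γ) w x| := fun x hx => by
    rw [combCaputoVec_perturb_sub hw hw0 hx, Pi.norm_single, norm_eq_abs]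
  refine add_le_add (Real.sSup_le ?_ ((integral_nonneg fun _ => abs_nonneg _).trans hA)) ?_
  · rintro _ ⟨x, -, rfl⟩
    simp only [perturb_sub, Pi.norm_single]
    exact (abs_intervalIntegral_le hw a x).trans hA
  · rcases h with h | h
    · refine Real.sSup_le ?_ hB0
      rintro _ ⟨x, hx, rfl⟩
      exact (hn x hx).trans_le (h x hx)
    · rw [Real.sSup_of_not_bddAbove]
      · exact hB0
      · rintro ⟨M, hM⟩
        obtain ⟨x, hx, hxM⟩ := h (M + 1)
        have := hM (mem_image_of_mem _ hx)
        simp only [hn x hx] at this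
        linarith

end perturb

open Filter Topology in
theorem tendsto_integral_of_uniform_small {a b : ℝ} (hab : a ≤ b) {G : ℝ × ℝ × ℝ → ℝ}
    (hG : Continuous G) {s σ : ℕ → ℝ → ℝ} (hs : ∀ n, ContinuousOn (s n) (Icc a b))
    (hσ : ∀ n, ContinuousOn (σ n) (Icc a b)) (hsb : ∀ n, ∀ x ∈ Icc a b, |s n x| ≤ 1 / (n + 1))
    (hσb : ∀ n, ∀ x ∈ Icc a b, |σ n x| ≤ 1 / (n + 1)) :
    Tendsto (fun n => ∫ x in a..b, G (s n x, σ n x, x)) atTop (𝓝 (∫ x in a..b, G (0, 0, x))) := by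
  obtain ⟨K, hK⟩ := ((isCompact_Icc (a := (-1 : ℝ)) (b := 1)).prod
    ((isCompact_Icc (a := (-1 : ℝ)) (b := 1)).prod (isCompact_Icc (a := a) (b := b)))).bddAbove_image
    (f := fun z => ‖G z‖) hG.norm.continuousOn
  have h1 : ∀ n : ℕ, (1 : ℝ) / (n + 1) ≤ 1 := fun n => by
    rw [div_le_one (by positivity)]
    have : (0 : ℝ) ≤ n := Nat.cast_nonneg n
    linarith
  refine intervalIntegral.tendsto_integral_filter_of_dominated_convergence (fun _ => K)
    (Eventually.of_forall fun n => ?_) (Eventually.of_forall fun n => ?_)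
    intervalIntegrable_const ?_
  · rw [uIoc_of_le hab]
    refine ContinuousOn.aestronglyMeasurable ?_ measurableSet_Ioc
    exact (hG.comp_continuousOn ((hs n).prodMk ((hσ n).prodMk continuousOn_id))).mono
      Ioc_subset_Icc_self
  · refine Eventually.of_forall fun x hx => ?_
    rw [uIoc_of_le hab] at hx
    have hx' := Ioc_subset_Icc_self hx
    exact hK ⟨(s n x, σ n x, x), ⟨abs_le.1 ((hsb n x hx').trans (h1 n)),
      abs_le.1 ((hσb n x hx').trans (h1 n)), hx'⟩, rfl⟩
  · refine Eventually.of_forall fun x hx => ?_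
    rw [uIoc_of_le hab] at hx
    have hx' := Ioc_subset_Icc_self hx
    have e1 : Tendsto (fun n => s n x) atTop (𝓝 0) :=
      squeeze_zero_norm (fun n => hsb n x hx') tendsto_one_div_add_atTop_nhds_zero_nat
    have e2 : Tendsto (fun n => σ n x) atTop (𝓝 0) :=
      squeeze_zero_norm (fun n => hσb n x hx') tendsto_one_div_add_atTop_nhds_zero_nat
    exact (hG.tendsto _).comp (e1.prodMk_nhds (e2.prodMk_nhds tendsto_const_nhds))

theorem weakSing_caputoKerL {α : ℝ} (γ : ℝ) (hα : α ∈ Ioo (0 : ℝ) 1) :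
    ∃ C, WeakSing (caputoKerL α γ) α C := ⟨_, weakSing_powKer _ hα.1 hα.2⟩

theorem weakSing_caputoKerR {β : ℝ} (γ : ℝ) (hβ : β ∈ Ioo (0 : ℝ) 1) :
    ∃ C, WeakSing (caputoKerR β γ) β C := ⟨_, (weakSing_powKer _ hβ.1 hβ.2).comp_neg⟩

theorem continuous_opT_test {a b α β : ℝ} (γ : ℝ) (hα : α ∈ Ioo (0 : ℝ) 1)
    (hβ : β ∈ Ioo (0 : ℝ) 1) {q : ℝ → ℝ} (hq : q ∈ testSpace a b) :
    Continuous (opT (caputoKerL α γ) (caputoKerR β γ) q) := by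
  obtain ⟨_, h₁⟩ := weakSing_caputoKerL γ hα
  obtain ⟨_, h₂⟩ := weakSing_caputoKerR γ hβ
  exact (h₁.continuous_cv_test hq).add (h₂.continuous_cv_test hq)

/-- Test functions orthogonal to the endpoint functions. -/
def NullTest (a b α β : ℝ) (q : ℝ → ℝ) : Prop :=
  q ∈ testSpace a b ∧ ∀ j, ∫ t, endFun a b α β j t * q t = 0

theorem continuous_primitive_test {a b : ℝ} {q : ℝ → ℝ} (hq : q ∈ testSpace a b) :
    Continuous fun x => ∫ t in a..x, q t :=
  intervalIntegral.continuous_primitive (fun _ _ => (integrable_test hq).intervalIntegrable) a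

theorem continuous_clamped {N : ℕ} {a b : ℝ} (hab : a ≤ b) {f : ℝ → Fin N → ℝ}
    (hf : ∀ i, ContinuousOn (fun x => f x i) (Icc a b)) :
    Continuous fun x => f (projIcc a b hab x) :=
  continuous_pi fun i => (continuousOn_iff_continuous_domRestrict.1 (hf i)).comp continuous_projIcc

theorem clamped_eq {E : Type*} {a b : ℝ} (hab : a ≤ b) (f : ℝ → E) {x : ℝ} (hx : x ∈ Icc a b) :
    f (projIcc a b hab x) = f x := by rw [projIcc_of_mem hab hx]

section
variable {a b α β γ : ℝ} {N : ℕ} {L : ℝ → (Fin N → ℝ) → (Fin N → ℝ) → ℝ} {y : ℝ → Fin N → ℝ}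

theorem minimizer_le (hab : a < b)
    (hα : α ∈ Ioo (0 : ℝ) 1) (hβ : β ∈ Ioo (0 : ℝ) 1)
    (hL : Continuous (fun p : ℝ × (Fin N → ℝ) × (Fin N → ℝ) => L p.1 p.2.1 p.2.2))
    (hy : memD a b α β γ y) {δ : ℝ} (hδ : 0 < δ)
    (hmin : ∀ z : ℝ → Fin N → ℝ, memD a b α β γ z → z a = y a → z b = y b →
      norm1inf a b α β γ (z - y) < δ →
      (∫ x in a..b, L x (y x) (combCaputoVec a b α β γ y x)) ≤
        ∫ x in a..b, L x (z x) (combCaputoVec a b α β γ z x)) (i : Fin N) {q : ℝ → ℝ}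
    (hq : NullTest a b α β q) (hqn : ∫ t, |q t| ≤ δ / 4)
    (hqb : ∀ x ∈ Icc a b, |cv (caputoKerL α γ) q x| + |cv (caputoKerR β γ) q x| ≤ δ / 4) :
    (∫ x in a..b, L x (y x) (combCaputoVec a b α β γ y x)) ≤
      ∫ x in a..b, L x (y x + Pi.single i (∫ t in a..x, q t))
        (combCaputoVec a b α β γ y x +
          Pi.single i (opT (caputoKerL α γ) (caputoKerR β γ) q x)) := by
  set Φ := combCaputoVec a b α β γ y with hΦ
  set T := opT (caputoKerL α γ) (caputoKerR β γ) with hTdef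
  have hyc := continuous_clamped hab.le fun i => (hy.1 i).continuousOn hab.le
  have hΦc : Continuous fun x => Φ (projIcc a b hab.le x) := continuous_clamped hab.le hy.2
  have hTq : Continuous (T q) := continuous_opT_test γ hα hβ hq.1
  have hH := continuous_primitive_test hq.1
  have hqi := integrable_test hq.1
  have hu := (hy.1 i).integrable_innerDeriv hab.le
  have hη : ∀ n : ℕ, 0 < min (δ / 8) (1 / ((n : ℝ) + 1)) := fun n =>
    lt_min (by linarith) (by positivity)
  choose p τ hpm hpi hp0 hpz hpn hτc hτn hpT hpor using fun n : ℕ =>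
    exists_corrected_perturbation hab hα hβ (k₁ := caputoKerL α γ) (k₂ := caputoKerR β γ) rfl rfl
      hu (measurable_innerDeriv a b _) (fun t ht => innerDeriv_of_notMem ht)
      ((continuous_apply i).comp hΦc) (fun x hx => by
        rw [Function.comp_apply, clamped_eq hab.le Φ hx]
        exact (combCaputo_eq_opT hx (fun t ht => innerDeriv_of_notMem ht)
          (Filter.Eventually.of_forall fun t ht => (indicator_of_mem ht _).symm)).symm) (hη n)
  set G : ℝ × ℝ × ℝ → ℝ := fun z => L z.2.2
    (y (projIcc a b hab.le z.2.2) + Pi.single i (z.1 + ∫ t in a..z.2.2, q t))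
    (Φ (projIcc a b hab.le z.2.2) + Pi.single i (z.2.1 + T q z.2.2)) with hG
  have hsing : Continuous fun c : ℝ => (Pi.single i c : Fin N → ℝ) :=
    continuous_single (A := fun _ : Fin N => ℝ) i
  have hx2 : Continuous fun z : ℝ × ℝ × ℝ => z.2.2 := by fun_prop
  have hGc : Continuous G := by
    refine hL.comp (hx2.prodMk (Continuous.prodMk ?_ ?_))
    · exact (hyc.comp hx2).add (hsing.comp (continuous_fst.add (hH.comp hx2)))
    · exact (hΦc.comp hx2).add (hsing.comp ((by fun_prop : Continuous fun z : ℝ × ℝ × ℝ => z.2.1).add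
        (hTq.comp hx2)))
  have hlim := tendsto_integral_of_uniform_small hab.le hGc
    (s := fun n x => ∫ t in a..x, p n t) (σ := τ)
    (fun n => (intervalIntegral.continuous_primitive
      (fun _ _ => (hpi n).intervalIntegrable) a).continuousOn) hτc
    (fun n x _ => (abs_intervalIntegral_le (hpi n) a x).trans
      ((hpn n).trans (min_le_right _ _)))
    (fun n x hx => (hτn n x hx).trans (min_le_right _ _))
  have hlimeq : ∫ x in a..b, G (0, 0, x) = ∫ x in a..b, L x (y x + Pi.single i (∫ t in a..x, q t))
      (Φ x + Pi.single i (T q x)) := by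
    refine intervalIntegral.integral_congr fun x hx => ?_
    rw [uIcc_of_le hab.le] at hx
    simp only [hG, zero_add]
    rw [clamped_eq hab.le y hx, clamped_eq hab.le Φ hx]
  rw [← hlimeq]
  refine ge_of_tendsto' hlim fun n => ?_
  set w : ℝ → ℝ := fun t => p n t + q t with hw
  have hwi : Integrable w := (hpi n).add hqi
  have hw0 : ∀ t, t ∉ Ioo a b → w t = 0 := fun t ht => by
    rw [hw]; simp only; rw [hp0 n t ht, test_eq_zero hq.1 ht, add_zero]
  have hTw : ∀ x ∈ Icc a b, T (fun t => innerDeriv a b (fun t => y t i) t + w t) x =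
      combCaputo a b α β γ (fun t => y t i) x + (τ n x + T q x) := fun x hx => by
    rw [hTdef, hpT n q hq.1 hq.2 x hx, Function.comp_apply, clamped_eq hab.le Φ hx, add_assoc]
    rfl
  have hwint : ∫ t in a..b, w t = 0 := by
    have hq1 : ∫ t, q t = 0 := by simpa [endFun] using hq.2 0
    rw [intervalIntegral_eq_integral hab.le hw0, integral_add (hpi n) hqi, hpz n, hq1, add_zero]
  have hwn : ∫ t, |w t| ≤ δ / 8 + δ / 4 := by
    calc ∫ t, |w t| ≤ ∫ t, (|p n t| + |q t|) :=
          integral_mono hwi.abs ((hpi n).abs.add hqi.abs) fun t => abs_add_le _ _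
      _ = (∫ t, |p n t|) + ∫ t, |q t| := integral_add (hpi n).abs hqi.abs
      _ ≤ _ := add_le_add ((hpn n).trans (min_le_left _ _)) hqn
  have hz := hmin (perturb a y i w)
    (memD_perturb hab.le hy hwi hw0 ((hτc n).add hTq.continuousOn) hTw)
    (by simp [perturb]) (by simp [perturb, hwint])
    (lt_of_le_of_lt (norm1inf_perturb_sub_le hwi hw0 hwn (B := δ / 8 + δ / 4) (by linarith) (by
      rcases hpor n with h | h
      · exact Or.inl fun x hx => (h q hq.1 x hx).trans
          (add_le_add (min_le_left _ _) (hqb x hx))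
      · exact Or.inr fun M => h q hq.1 M)) (by linarith))
  refine hz.trans (le_of_eq (intervalIntegral.integral_congr fun x hx => ?_))
  rw [uIcc_of_le hab.le] at hx
  simp only [hG]
  rw [combCaputoVec_perturb hab.le (hy.1 i) hwi hw0 hx (hTw x hx), clamped_eq hab.le y hx,
    clamped_eq hab.le Φ hx, perturb, hw,
    intervalIntegral.integral_add (hpi n).intervalIntegrable hqi.intervalIntegrable]

end

section
variable {N : ℕ} {L : ℝ → (Fin N → ℝ) → (Fin N → ℝ) → ℝ}

theorem pdY_eq_fderiv (hL : ContDiff ℝ 1 (fun p : ℝ × (Fin N → ℝ) × (Fin N → ℝ) => L p.1 p.2.1 p.2.2))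
    (i : Fin N) (x : ℝ) (u v : Fin N → ℝ) :
    pdY L i x u v = fderiv ℝ (fun p : ℝ × (Fin N → ℝ) × (Fin N → ℝ) => L p.1 p.2.1 p.2.2) (x, u, v)
      (0, Pi.single i 1, 0) := by
  have hp : HasDerivAt (fun s : ℝ => (x, Function.update u i s, v))
      ((0 : ℝ), (Pi.single i (1 : ℝ) : Fin N → ℝ), (0 : Fin N → ℝ)) (u i) :=
    (hasDerivAt_const _ _).prodMk ((hasDerivAt_update u i (u i)).prodMk (hasDerivAt_const _ _))
  have hM := ((hL.differentiable one_ne_zero) (x, Function.update u i (u i), v)).hasFDerivAt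
  have := (hM.comp_hasDerivAt (u i) hp).deriv
  rwa [Function.update_eq_self] at this

theorem pdV_eq_fderiv (hL : ContDiff ℝ 1 (fun p : ℝ × (Fin N → ℝ) × (Fin N → ℝ) => L p.1 p.2.1 p.2.2))
    (i : Fin N) (x : ℝ) (u v : Fin N → ℝ) :
    pdV L i x u v = fderiv ℝ (fun p : ℝ × (Fin N → ℝ) × (Fin N → ℝ) => L p.1 p.2.1 p.2.2) (x, u, v)
      (0, 0, Pi.single i 1) := by
  have hp : HasDerivAt (fun s : ℝ => (x, u, Function.update v i s))
      ((0 : ℝ), (0 : Fin N → ℝ), (Pi.single i (1 : ℝ) : Fin N → ℝ)) (v i) :=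
    (hasDerivAt_const _ _).prodMk ((hasDerivAt_const _ _).prodMk (hasDerivAt_update v i (v i)))
  have hM := ((hL.differentiable one_ne_zero) (x, u, Function.update v i (v i))).hasFDerivAt
  have := (hM.comp_hasDerivAt (v i) hp).deriv
  rwa [Function.update_eq_self] at this

theorem continuous_pdY (hL : ContDiff ℝ 1 (fun p : ℝ × (Fin N → ℝ) × (Fin N → ℝ) => L p.1 p.2.1 p.2.2))
    (i : Fin N) : Continuous fun p : ℝ × (Fin N → ℝ) × (Fin N → ℝ) => pdY L i p.1 p.2.1 p.2.2 := by
  simp only [pdY_eq_fderiv hL]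
  exact (hL.continuous_fderiv one_ne_zero).clm_apply continuous_const

/-- First variation of an integral functional in the direction of continuous functions. -/
theorem hasDerivAt_integral_lagrangian {a b : ℝ} (hab : a ≤ b)
    (hL : ContDiff ℝ 1 (fun p : ℝ × (Fin N → ℝ) × (Fin N → ℝ) => L p.1 p.2.1 p.2.2)) (i : Fin N)
    {Y V : ℝ → Fin N → ℝ} (hY : Continuous Y) (hV : Continuous V) {H K : ℝ → ℝ} (hH : Continuous H)
    (hK : Continuous K) :
    HasDerivAt (fun ε : ℝ => ∫ x in a..b, L x (Y x + Pi.single i (ε * H x))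
        (V x + Pi.single i (ε * K x)))
      (∫ x in a..b, (pdY L i x (Y x) (V x) * H x + pdV L i x (Y x) (V x) * K x)) 0 := by
  set M : ℝ × (Fin N → ℝ) × (Fin N → ℝ) → ℝ := fun p => L p.1 p.2.1 p.2.2 with hM
  have hsing : Continuous fun c : ℝ => (Pi.single i c : Fin N → ℝ) :=
    continuous_single (A := fun _ : Fin N => ℝ) i
  have hpath : Continuous fun z : ℝ × ℝ => (z.2, Y z.2 + (Pi.single i (z.1 * H z.2) : Fin N → ℝ),
      V z.2 + (Pi.single i (z.1 * K z.2) : Fin N → ℝ)) := by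
    refine continuous_snd.prodMk (((hY.comp continuous_snd).add (hsing.comp ?_)).prodMk
      ((hV.comp continuous_snd).add (hsing.comp ?_))) <;> fun_prop
  have hF' : Continuous fun z : ℝ × ℝ => fderiv ℝ M (z.2,
      Y z.2 + (Pi.single i (z.1 * H z.2) : Fin N → ℝ), V z.2 + (Pi.single i (z.1 * K z.2) : Fin N → ℝ))
      (0, Pi.single i (H z.2), Pi.single i (K z.2)) := by
    refine ((hL.continuous_fderiv one_ne_zero).comp hpath).clm_apply (continuous_const.prodMk
      ((hsing.comp ?_).prodMk (hsing.comp ?_))) <;> fun_prop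
  obtain ⟨C, hC⟩ := ((isCompact_Icc (a := (-1 : ℝ)) (b := 1)).prod
    (isCompact_Icc (a := a) (b := b))).bddAbove_image hF'.norm.continuousOn
  have hline : ∀ ε : ℝ, Continuous fun x : ℝ => (ε, x) := fun ε => by fun_prop
  have hFε : ∀ ε : ℝ, Continuous fun x => L x (Y x + Pi.single i (ε * H x))
        (V x + Pi.single i (ε * K x)) := fun ε => (hL.continuous.comp hpath).comp (hline ε)
  have hdir : ∀ c : ℝ, (Pi.single i c : Fin N → ℝ) = c • Pi.single i 1 := fun c => by
    rw [← Pi.single_smul, smul_eq_mul, mul_one]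
  have key := (intervalIntegral.hasDerivAt_integral_of_dominated_loc_of_deriv_le (μ := volume)
    (a := a) (b := b)
    (F := fun ε x => L x (Y x + Pi.single i (ε * H x)) (V x + Pi.single i (ε * K x)))
    (F' := fun ε x => fderiv ℝ M (x,
      Y x + (Pi.single i (ε * H x) : Fin N → ℝ), V x + (Pi.single i (ε * K x) : Fin N → ℝ))
      (0, Pi.single i (H x), Pi.single i (K x))) (x₀ := 0) (s := Icc (-1) 1) (bound := fun _ => C)
    (Icc_mem_nhds (by norm_num) (by norm_num))
    (Filter.Eventually.of_forall fun ε => (hFε ε).aestronglyMeasurable)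
    ((hFε 0).intervalIntegrable _ _) (hF'.comp (hline 0)).aestronglyMeasurable
    (Filter.Eventually.of_forall fun x hx ε hε => by
      rw [uIoc_of_le hab] at hx
      exact hC ⟨(ε, x), ⟨hε, Ioc_subset_Icc_self hx⟩, rfl⟩)
    intervalIntegrable_const
    (Filter.Eventually.of_forall fun x hx ε hε => by
      have hlin : ∀ (W : Fin N → ℝ) (c : ℝ),
          HasDerivAt (fun ε : ℝ => W + (Pi.single i (ε * c) : Fin N → ℝ)) (Pi.single i c) ε := by
        intro W c
        have h0 := ((hasDerivAt_id ε).smul_const (Pi.single i c : Fin N → ℝ)).const_add W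
        simpa only [id, one_smul, ← Pi.single_smul, smul_eq_mul] using h0
      have hM' := ((hL.differentiable one_ne_zero) (x, Y x + (Pi.single i (ε * H x) : Fin N → ℝ),
        V x + (Pi.single i (ε * K x) : Fin N → ℝ))).hasFDerivAt
      have hp : HasDerivAt (fun ε : ℝ => (x, Y x + (Pi.single i (ε * H x) : Fin N → ℝ),
          V x + (Pi.single i (ε * K x) : Fin N → ℝ)))
          ((0 : ℝ), (Pi.single i (H x) : Fin N → ℝ), (Pi.single i (K x) : Fin N → ℝ)) ε :=
        (hasDerivAt_const ε x).prodMk ((hlin (Y x) (H x)).prodMk (hlin (V x) (K x)))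
      have hcomp := hM'.comp_hasDerivAt ε hp
      exact hcomp)).2
  refine key.congr_deriv (intervalIntegral.integral_congr fun x _ => Eq.symm ?_)
  simp only [zero_mul, Pi.single_zero, add_zero]
  rw [pdY_eq_fderiv hL, pdV_eq_fderiv hL, mul_comm _ (H x), mul_comm _ (K x), ← smul_eq_mul,
    ← smul_eq_mul, ← map_smul, ← map_smul, ← map_add]
  simp only [Prod.smul_mk, Prod.mk_add_mk, smul_zero, add_zero, zero_add, ← hdir]
  rfl

end

section
variable {a b α β γ : ℝ} {N : ℕ} {L : ℝ → (Fin N → ℝ) → (Fin N → ℝ) → ℝ} {y : ℝ → Fin N → ℝ}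

theorem NullTest.const_mul {q : ℝ → ℝ} (hq : NullTest a b α β q) (ε : ℝ) :
    NullTest a b α β fun t => ε * q t := by
  refine ⟨Submodule.smul_mem _ ε hq.1, fun j => ?_⟩
  simp only [mul_left_comm _ ε, integral_const_mul, hq.2 j, mul_zero]

theorem first_variation_eq_zero (hab : a < b)
    (hα : α ∈ Ioo (0 : ℝ) 1) (hβ : β ∈ Ioo (0 : ℝ) 1)
    (hL : ContDiff ℝ 1 (fun p : ℝ × (Fin N → ℝ) × (Fin N → ℝ) => L p.1 p.2.1 p.2.2))
    (hy : memD a b α β γ y) {δ : ℝ} (hδ : 0 < δ)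
    (hmin : ∀ z : ℝ → Fin N → ℝ, memD a b α β γ z → z a = y a → z b = y b →
      norm1inf a b α β γ (z - y) < δ →
      (∫ x in a..b, L x (y x) (combCaputoVec a b α β γ y x)) ≤
        ∫ x in a..b, L x (z x) (combCaputoVec a b α β γ z x)) (i : Fin N) {q : ℝ → ℝ}
    (hq : NullTest a b α β q) :
    ∫ x in a..b, (pdY L i x (y x) (combCaputoVec a b α β γ y x) * (∫ t in a..x, q t) +
      pdV L i x (y x) (combCaputoVec a b α β γ y x) *
        opT (caputoKerL α γ) (caputoKerR β γ) q x) = 0 := by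
  obtain ⟨_, h₁⟩ := weakSing_caputoKerL γ hα
  obtain ⟨_, h₂⟩ := weakSing_caputoKerR γ hβ
  set Φ := combCaputoVec a b α β γ y with hΦ
  set T := opT (caputoKerL α γ) (caputoKerR β γ) with hTdef
  have hyc := continuous_clamped hab.le fun i => (hy.1 i).continuousOn hab.le
  have hΦc : Continuous fun x => Φ (projIcc a b hab.le x) := continuous_clamped hab.le hy.2
  have hder := hasDerivAt_integral_lagrangian hab.le hL i hyc hΦc
    (continuous_primitive_test hq.1) (continuous_opT_test γ hα hβ hq.1)
  have hclamp : ∀ F : ℝ → (Fin N → ℝ) → (Fin N → ℝ) → ℝ,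
      ∫ x in a..b, F x (y (projIcc a b hab.le x)) (Φ (projIcc a b hab.le x)) =
        ∫ x in a..b, F x (y x) (Φ x) := fun F => by
    refine intervalIntegral.integral_congr fun x hx => ?_
    rw [uIcc_of_le hab.le] at hx
    simp only [clamped_eq hab.le y hx, clamped_eq hab.le Φ hx]
  rw [hclamp fun x u v => pdY L i x u v * (∫ t in a..x, q t) + pdV L i x u v * T q x] at hder
  obtain ⟨K, hK⟩ := (isCompact_Icc (a := a) (b := b)).bddAbove_image
    ((h₁.continuous_cv_test hq.1).abs.add (h₂.continuous_cv_test hq.1).abs).continuousOn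
  set A : ℝ := |K| + (∫ t, |q t|) + 1 with hA
  have hn0 : 0 ≤ ∫ t, |q t| := integral_nonneg fun _ => abs_nonneg _
  have hA0 : 0 < A := by positivity
  refine IsLocalMin.hasDerivAt_eq_zero ?_ hder
  have hnhds : Icc (-(δ / 4 / A)) (δ / 4 / A) ∈ nhds (0 : ℝ) :=
    Icc_mem_nhds (by rw [neg_lt_zero]; positivity) (by positivity)
  filter_upwards [hnhds] with ε hε
  have hεA : |ε| * A ≤ δ / 4 := (le_div_iff₀ hA0).1 (abs_le.2 hε)
  have hT : ∀ x, T (fun t => ε * q t) x = ε * T q x := fun x => by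
    simp only [hTdef, opT, cv_const_mul]; ring
  have := minimizer_le hab hα hβ hL.continuous hy hδ hmin i (hq.const_mul ε) (by
      simp only [abs_mul, integral_const_mul]
      exact (mul_le_mul_of_nonneg_left (by rw [hA]; linarith [abs_nonneg K])
        (abs_nonneg ε)).trans hεA)
    (fun x hx => by
      simp only [cv_const_mul, abs_mul]
      rw [← mul_add]
      refine (mul_le_mul_of_nonneg_left ?_ (abs_nonneg ε)).trans hεA
      have : |cv (caputoKerL α γ) q x| + |cv (caputoKerR β γ) q x| ≤ K :=
        hK (mem_image_of_mem _ hx)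
      linarith [le_abs_self K])
  have e : ∀ ε : ℝ, _ := fun ε => hclamp fun x u v =>
    L x (u + Pi.single i (ε * ∫ t in a..x, q t)) (v + Pi.single i (ε * T q x))
  refine le_trans (le_of_eq (e 0)) (le_trans ?_ (le_of_eq (e ε).symm))
  simp only [zero_mul, Pi.single_zero, add_zero]
  simpa only [← hTdef, ← hΦ, hT, intervalIntegral.integral_const_mul] using this

end

section
variable {a b θ : ℝ} {p : ℝ → ℝ}

theorem monotoneOn_indicator_Ioi (hp : MonotoneOn p (Icc a b)) (h0 : 0 ≤ p a) :
    MonotoneOn ((Ioi a).indicator p) (Iic b) := by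
  intro s hs t ht hst
  by_cases hsa : a < s
  · rw [indicator_of_mem (mem_Ioi.2 hsa), indicator_of_mem (mem_Ioi.2 (hsa.trans_le hst))]
    exact hp ⟨hsa.le, hs⟩ ⟨(hsa.trans_le hst).le, ht⟩ hst
  · rw [indicator_of_notMem (by simpa using hsa)]
    by_cases hta : a < t
    · rw [indicator_of_mem (mem_Ioi.2 hta)]
      exact h0.trans (hp ⟨le_rfl, hta.le.trans ht⟩ ⟨hta.le, ht⟩ hta.le)
    · rw [indicator_of_notMem (by simpa using hta)]

theorem intervalIntegrable_rpow_mul_monotone (hab : a ≤ b) (hθ : θ < 1)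
    (hp : MonotoneOn p (Icc a b)) (h0 : 0 ≤ p a) {x : ℝ} (hx : x ∈ Icc a b) :
    IntervalIntegrable (fun s => s ^ (-θ) * (Ioi a).indicator p (x - s)) volume 0 (b - a) := by
  have hm := monotoneOn_indicator_Ioi hp h0
  have hanti : AntitoneOn (fun s => (Ioi a).indicator p (x - s)) (Icc 0 (b - a)) := by
    intro s hs t ht hst
    exact hm (by simp only [mem_Iic]; linarith [hx.2, ht.1])
      (by simp only [mem_Iic]; linarith [hx.2, hs.1]) (by linarith)
  have hmeas : AEStronglyMeasurable (fun s => (Ioi a).indicator p (x - s))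
      (volume.restrict (uIoc 0 (b - a))) := by
    rw [uIoc_of_le (by linarith)]
    exact (aemeasurable_restrict_of_antitoneOn measurableSet_Icc hanti).aestronglyMeasurable.mono_measure
      (Measure.restrict_mono Ioc_subset_Icc_self le_rfl)
  have hr := intervalIntegral.intervalIntegrable_rpow' (r := -θ) (by linarith) (a := 0) (b := b - a)
  refine (hr.norm.mul_const (p b)).mono_fun' (hr.def'.aestronglyMeasurable.mul hmeas) ?_
  rw [uIoc_of_le (by linarith)]
  refine (ae_restrict_iff' measurableSet_Ioc).2 (Filter.Eventually.of_forall fun s hs => ?_)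
  simp only [norm_mul]
  refine mul_le_mul_of_nonneg_left ?_ (norm_nonneg _)
  rw [norm_eq_abs, abs_of_nonneg]
  · refine (hm (show x - s ∈ Iic b by simp only [mem_Iic]; linarith [hx.2, hs.1])
      (mem_Iic.2 le_rfl) (by linarith [hx.2, hs.1])).trans ?_
    by_cases h : a < b
    · rw [indicator_of_mem (mem_Ioi.2 h)]
    · rw [indicator_of_notMem (by simpa using h)]
      exact h0.trans (hp ⟨le_rfl, hab⟩ ⟨hab, le_rfl⟩ hab)
  · by_cases h : a < x - s
    · rw [indicator_of_mem (mem_Ioi.2 h)]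
      exact h0.trans (hp ⟨le_rfl, hab⟩ ⟨h.le, by linarith [hx.2, hs.1]⟩ h.le)
    · rw [indicator_of_notMem (by simpa using h)]

theorem intervalIntegrable_singular_mul_monotone (hθ : θ < 1)
    (hp : MonotoneOn p (Icc a b)) (h0 : 0 ≤ p a) {x : ℝ} (hx : x ∈ Icc a b) :
    IntervalIntegrable (fun t => (x - t) ^ (-θ) * p t) volume a x := by
  have h := (intervalIntegrable_rpow_mul_monotone (hx.1.trans hx.2) hθ hp h0 hx).comp_sub_left x
  simp only [sub_zero, sub_sub_cancel] at h
  have h2 := h.symm.mono_set (c := a) (d := x) (by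
    rw [uIcc_of_le hx.1, uIcc_of_le (by linarith [hx.1, hx.2])]
    exact Icc_subset_Icc (by linarith [hx.2]) le_rfl)
  refine h2.congr ?_
  rw [uIoc_of_le hx.1]
  intro t ht
  simp only [indicator_of_mem (mem_Ioi.2 ht.1)]

theorem integral_singular_eq {x : ℝ} (hx : x ∈ Icc a b) :
    ∫ t in a..x, (x - t) ^ (-θ) * p t =
      ∫ s in (0 : ℝ)..(b - a), s ^ (-θ) * (Ioi a).indicator p (x - s) := by
  have h := intervalIntegral.integral_comp_sub_left (a := x - (b - a)) (b := x)
    (fun s => s ^ (-θ) * (Ioi a).indicator p (x - s)) x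
  simp only [sub_self, sub_sub_cancel] at h
  rw [← h, intervalIntegral.integral_of_le hx.1,
    intervalIntegral.integral_of_le (by linarith [hx.1, hx.2])]
  refine Eq.trans (setIntegral_congr_fun measurableSet_Ioc fun t ht => ?_)
    (setIntegral_eq_of_subset_of_forall_sdiff_eq_zero measurableSet_Ioc
      (Ioc_subset_Ioc_left (by linarith [hx.2]) : Ioc a x ⊆ Ioc (x - (b - a)) x) fun t ht => by
        rw [indicator_of_notMem, mul_zero]
        exact fun hta => ht.2 ⟨hta, ht.1.2⟩).symm
  simp only [indicator_of_mem (mem_Ioi.2 ht.1)]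

/-- Fractional integrals of nonnegative monotone functions are monotone. -/
theorem monotoneOn_integral_singular (hab : a ≤ b) (hθ : θ < 1)
    (hp : MonotoneOn p (Icc a b)) (h0 : 0 ≤ p a) :
    MonotoneOn (fun x => ∫ t in a..x, (x - t) ^ (-θ) * p t) (Icc a b) := by
  intro x hx z hz hxz
  simp only [integral_singular_eq hx, integral_singular_eq hz]
  refine intervalIntegral.integral_mono_on (by linarith)
    (intervalIntegrable_rpow_mul_monotone hab hθ hp h0 hx)
    (intervalIntegrable_rpow_mul_monotone hab hθ hp h0 hz) fun s hs => ?_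
  refine mul_le_mul_of_nonneg_left ?_ (rpow_nonneg hs.1 _)
  exact monotoneOn_indicator_Ioi hp h0 (by simp only [mem_Iic]; linarith [hx.2, hs.1])
    (by simp only [mem_Iic]; linarith [hz.2, hs.1]) (by linarith)

theorem ae_differentiableAt_leftRLI {m g : ℝ → ℝ} (hab : a ≤ b) (hθ : θ < 1)
    (hp : MonotoneOn p (Icc a b)) (hm : MonotoneOn m (Icc a b))
    (hg : ∀ t ∈ Icc a b, g t = p t - m t) :
    ∀ᵐ x, x ∈ Ioo a b → DifferentiableAt ℝ (leftRLI a (1 - θ) g) x := by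
  set c := |p a| + |m a| with hc
  have hp' : MonotoneOn (fun t => p t + c) (Icc a b) := fun s hs t ht h => by
    linarith [hp hs ht h]
  have hm' : MonotoneOn (fun t => m t + c) (Icc a b) := fun s hs t ht h => by
    linarith [hm hs ht h]
  have hp0 : 0 ≤ p a + c := by linarith [neg_abs_le (p a), abs_nonneg (m a)]
  have hm0 : 0 ≤ m a + c := by linarith [neg_abs_le (m a), abs_nonneg (p a)]
  filter_upwards [(monotoneOn_integral_singular hab hθ hp' hp0).ae_differentiableWithinAt_of_mem,
    (monotoneOn_integral_singular hab hθ hm' hm0).ae_differentiableWithinAt_of_mem] with x h1 h2 hx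
  have hx' := Ioo_subset_Icc_self hx
  have hn : Icc a b ∈ nhds x := Icc_mem_nhds hx.1 hx.2
  refine ((((h1 hx').differentiableAt hn).sub ((h2 hx').differentiableAt hn)).const_mul
    (1 / Gamma (1 - θ))).congr_of_eventuallyEq ?_
  filter_upwards [hn] with z hz
  simp only [leftRLI, Pi.sub_apply]
  rw [← intervalIntegral.integral_sub (intervalIntegrable_singular_mul_monotone hθ hp' hp0 hz)
    (intervalIntegrable_singular_mul_monotone hθ hm' hm0 hz)]
  congr 1
  refine intervalIntegral.integral_congr fun t ht => ?_
  rw [uIcc_of_le hz.1] at ht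
  simp only [hg t ⟨ht.1, ht.2.trans hz.2⟩]
  rw [show 1 - θ - 1 = -θ by ring]
  ring

theorem rightRLI_eq_leftRLI_neg (b θ : ℝ) (g : ℝ → ℝ) (x : ℝ) :
    rightRLI b θ g x = leftRLI (-b) θ (fun t => g (-t)) (-x) := by
  have h := intervalIntegral.integral_comp_neg (a := -b) (b := -x)
    (fun t => (t - x) ^ (θ - 1) * g t)
  simp only [neg_neg] at h
  simp only [rightRLI, leftRLI, ← h]
  congr 2
  ext t
  rw [show -x - t = -t - x by ring]

theorem ae_differentiableAt_rightRLI {m g : ℝ → ℝ} (hab : a ≤ b) (hθ : θ < 1)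
    (hp : MonotoneOn p (Icc a b)) (hm : MonotoneOn m (Icc a b))
    (hg : ∀ t ∈ Icc a b, g t = p t - m t) :
    ∀ᵐ x, x ∈ Ioo a b → DifferentiableAt ℝ (rightRLI b (1 - θ) g) x := by
  have hmem : ∀ t ∈ Icc (-b) (-a), -t ∈ Icc a b := fun t ht =>
    ⟨by linarith [ht.2], by linarith [ht.1]⟩
  have h := ae_differentiableAt_leftRLI (a := -b) (b := -a) (θ := θ)
    (p := fun t => -m (-t)) (m := fun t => -p (-t)) (g := fun t => g (-t)) (by linarith) hθ
    (fun s hs t ht hst => neg_le_neg (hm (hmem t ht) (hmem s hs) (neg_le_neg hst)))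
    (fun s hs t ht hst => neg_le_neg (hp (hmem t ht) (hmem s hs) (neg_le_neg hst)))
    (fun t ht => by rw [hg _ (hmem t ht)]; ring)
  have h' := (Measure.measurePreserving_neg (volume : Measure ℝ)).quasiMeasurePreserving.ae h
  filter_upwards [h'] with x hx hxI
  have h2 := (hx ⟨neg_lt_neg hxI.2, neg_lt_neg hxI.1⟩).comp x differentiable_neg.differentiableAt
  refine h2.congr_of_eventuallyEq (Filter.Eventually.of_forall fun z => ?_)
  exact rightRLI_eq_leftRLI_neg b (1 - θ) g z

theorem AbsolutelyContinuousOn.exists_monotone_sub {g : ℝ → ℝ} (hab : a ≤ b)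
    (hg : AbsolutelyContinuousOn g a b) :
    ∃ p m : ℝ → ℝ, MonotoneOn p (Icc a b) ∧ MonotoneOn m (Icc a b) ∧
      ∀ t ∈ Icc a b, g t = p t - m t := by
  have hsub : ∀ x ∈ Icc a b, ∀ z ∈ Icc a b, IntervalIntegrable (deriv g) volume x z :=
    fun x hx z hz => hg.1.mono_set (by
      rw [uIcc_of_le hab]; exact uIcc_subset_Icc hx hz)
  have ha : a ∈ Icc a b := left_mem_Icc.2 hab
  have hp : ∀ x ∈ Icc a b, ∀ z ∈ Icc a b,
      (∫ t in a..z, |deriv g t|) - ∫ t in a..x, |deriv g t| = ∫ t in x..z, |deriv g t| :=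
    fun x hx z hz => intervalIntegral.integral_interval_sub_left (hsub a ha z hz).abs
      (hsub a ha x hx).abs
  have hq : ∀ x ∈ Icc a b, ∀ z ∈ Icc a b, g z - g x = ∫ t in x..z, deriv g t :=
    fun x hx z hz => by
      rw [hg.2 x hx, hg.2 z hz, add_sub_add_left_eq_sub]
      exact intervalIntegral.integral_interval_sub_left (hsub a ha z hz) (hsub a ha x hx)
  refine ⟨fun x => ∫ t in a..x, |deriv g t|, fun x => (∫ t in a..x, |deriv g t|) - g x,
    fun x hx z hz hxz => ?_, fun x hx z hz hxz => ?_, fun t _ => by ring⟩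
  · have := intervalIntegral.integral_nonneg hxz (μ := volume) fun t _ => abs_nonneg (deriv g t)
    linarith [hp x hx z hz]
  · have := intervalIntegral.integral_mono_on hxz (hsub x hx z hz) (hsub x hx z hz).abs
      fun t _ => le_abs_self (deriv g t)
    simp only
    linarith [hp x hx z hz, hq x hx z hz]

end

section
variable {a b : ℝ} {k w : ℝ → ℝ} {θ C M : ℝ}

theorem integrable_of_bounded_of_vanish (hwm : Measurable w) (hwb : ∀ t, |w t| ≤ M)
    (hw0 : ∀ t, t ∉ Ioo a b → w t = 0) : Integrable w := by
  refine IntegrableOn.integrable_of_forall_notMem_eq_zero (s := Ioo a b) ?_ hw0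
  exact Measure.integrableOn_of_bounded (M := M) (by simp) hwm.aestronglyMeasurable
    (Filter.Eventually.of_forall hwb)

/-- Duality between a convolution operator and its reflection. -/
theorem WeakSing.integral_mul_cv (hk : WeakSing k θ C) (hwm : Measurable w) (hwb : ∀ t, |w t| ≤ M)
    {q : ℝ → ℝ} (hq : Integrable q) (hqm : Measurable q) :
    ∫ x in Icc a b, w x * cv k q x = ∫ t, (∫ x in Icc a b, k (x - t) * w x) * q t := by
  have hI : Integrable (fun z : ℝ × ℝ => w z.1 * (k (z.1 - z.2) * q z.2))
      ((volume.restrict (Icc a b)).prod volume) :=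
    (hk.integrable_prod_Icc hq hqm a b).bdd_mul (c := M)
      (hwm.comp measurable_fst).aestronglyMeasurable (Filter.Eventually.of_forall fun z => hwb z.1)
  calc ∫ x in Icc a b, w x * cv k q x = ∫ x in Icc a b, ∫ t, w x * (k (x - t) * q t) := by
        simp only [cv, integral_const_mul]
    _ = ∫ t, ∫ x in Icc a b, w x * (k (x - t) * q t) := integral_integral_swap hI
    _ = _ := by
        simp only [← integral_mul_const]
        refine integral_congr_ae (Filter.Eventually.of_forall fun t => ?_)
        refine integral_congr_ae (Filter.Eventually.of_forall fun x => ?_)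
        simp only
        ring

theorem cv_neg_eq_setIntegral (hw0 : ∀ t, t ∉ Ioo a b → w t = 0) (t : ℝ) :
    cv (fun s => k (-s)) w t = ∫ x in Icc a b, k (x - t) * w x := by
  rw [setIntegral_eq_integral_of_forall_compl_eq_zero fun x hx => by
    rw [hw0 x fun h => hx (Ioo_subset_Icc_self h), mul_zero]]
  simp only [cv, neg_sub]

theorem WeakSing.abs_cv_le (hk : WeakSing k θ C) (hab : a ≤ b) (hwb : ∀ t, |w t| ≤ M)
    (hw0 : ∀ t, t ∉ Ioo a b → w t = 0) (t : ℝ) :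
    |cv (fun s => k (-s)) w t| ≤ C * ((∫ s, singPart θ s) + (b - a)) * M := by
  have hM : 0 ≤ M := (abs_nonneg _).trans (hwb a)
  have hi : IntervalIntegrable (fun x => k (x - t)) volume a b := by
    simpa using (hk.intervalIntegrable (a - t) (b - t)).comp_sub_right t
  rw [cv_neg_eq_setIntegral hw0, integral_Icc_eq_integral_Ioc,
    ← intervalIntegral.integral_of_le hab, ← norm_eq_abs]
  calc ‖∫ x in a..b, k (x - t) * w x‖ ≤ ∫ x in a..b, |k (x - t)| * M :=
        intervalIntegral.norm_integral_le_of_norm_le hab (Filter.Eventually.of_forall fun x _ => by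
          rw [norm_mul, norm_eq_abs, norm_eq_abs]
          exact mul_le_mul_of_nonneg_left (hwb x) (abs_nonneg _)) (hi.abs.mul_const M)
    _ = (∫ s in (a - t)..(b - t), |k s|) * M := by
        rw [intervalIntegral.integral_mul_const,
          intervalIntegral.integral_comp_sub_right (fun s => |k s|)]
    _ ≤ _ := by
        have := hk.integral_abs_le (A := a - t) (B := b - t) (by linarith)
        rw [sub_sub_sub_cancel_right] at this
        exact mul_le_mul_of_nonneg_right this hM

theorem WeakSing.continuousOn_cv_Ioo (hk : WeakSing k θ C) (hwi : Integrable w)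
    (hwc : ContinuousOn w (Ioo a b)) : ContinuousOn (cv k w) (Ioo a b) := by
  intro x hx
  obtain ⟨ρ, hρ, h⟩ := Metric.isOpen_iff.1 isOpen_Ioo x hx
  exact (hk.continuousAt_cv hwi hρ (hwc.mono h)).continuousWithinAt

end

section
variable {a b α β γ : ℝ}

/-- Integration by parts against a test function with zero mean. -/
theorem integral_mul_primitive_test (hab : a ≤ b) {f q : ℝ → ℝ} (hf : Continuous f)
    (hq : q ∈ testSpace a b) (h0 : ∫ t, q t = 0) :
    ∫ x in a..b, f x * ∫ t in a..x, q t = -∫ x, (∫ t in a..x, f t) * q x := by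
  have hqc : Continuous q := hq.1
  have h := intervalIntegral.integral_mul_deriv_eq_deriv_mul (a := a) (b := b)
    (u := fun x => ∫ t in a..x, q t) (v := fun x => ∫ t in a..x, f t) (u' := q) (v' := f)
    (fun x _ => (hqc.integral_hasStrictDerivAt a x).hasDerivAt)
    (fun x _ => (hf.integral_hasStrictDerivAt a x).hasDerivAt)
    (hqc.intervalIntegrable _ _) (hf.intervalIntegrable _ _)
  rw [intervalIntegral_eq_integral hab fun t ht => test_eq_zero hq ht, h0] at h
  simp only [intervalIntegral.integral_same, zero_mul, mul_zero, sub_self, zero_sub] at h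
  rw [intervalIntegral_eq_integral (v := fun x => q x * ∫ t in a..x, f t) hab fun t ht => by
    rw [test_eq_zero hq ht, zero_mul]] at h
  simpa only [mul_comm] using h

/-- The fundamental lemma: vanishing of the first variation on null test functions forces the
adjoint fractional integral to be a primitive. -/
theorem exists_const_of_variation_eq_zero (hab : a < b) (hα : α ∈ Ioo (0 : ℝ) 1)
    (hβ : β ∈ Ioo (0 : ℝ) 1) {f g : ℝ → ℝ} (hf : Continuous f) (hg : ContinuousOn g (Icc a b))
    (h : ∀ q, NullTest a b α β q → ∫ x in a..b, (f x * (∫ t in a..x, q t) +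
      g x * opT (caputoKerL α γ) (caputoKerR β γ) q x) = 0) :
    ∃ c : ℝ, ∀ t ∈ Ioo a b, γ * rightRLI b (1 - α) g t - (1 - γ) * leftRLI a (1 - β) g t =
      c + ∫ s in a..t, f s := by
  obtain ⟨C₁, h₁⟩ := weakSing_caputoKerL γ hα
  obtain ⟨C₂, h₂⟩ := weakSing_caputoKerR γ hβ
  set w : ℝ → ℝ := (Ioo a b).indicator g with hw
  have hw0 : ∀ t, t ∉ Ioo a b → w t = 0 := fun t ht => indicator_of_notMem ht _
  have hwg : ∀ t ∈ Ioo a b, w t = g t := fun t ht => indicator_of_mem ht _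
  obtain ⟨M, hM⟩ := (isCompact_Icc (a := a) (b := b)).bddAbove_image hg.norm
  have hwb : ∀ t, |w t| ≤ |M| := fun t => by
    by_cases ht : t ∈ Ioo a b
    · rw [hwg t ht]
      exact (hM (mem_image_of_mem _ (Ioo_subset_Icc_self ht))).trans (le_abs_self M)
    · rw [hw0 t ht, abs_zero]; exact abs_nonneg _
  have hwm : Measurable w := by
    have : ContinuousOn g (Ioo a b) := hg.mono Ioo_subset_Icc_self
    rw [hw, ← piecewise_eq_indicator]
    exact this.measurable_piecewise continuousOn_const measurableSet_Ioo
  have hwi : Integrable w := integrable_of_bounded_of_vanish hwm hwb hw0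
  have hwc : ContinuousOn w (Ioo a b) := (hg.mono Ioo_subset_Icc_self).congr hwg
  set S₁ := cv (fun s => caputoKerL α γ (-s)) w with hS₁
  set S₂ := cv (fun s => caputoKerR β γ (-s)) w with hS₂
  have hS₁c : ContinuousOn S₁ (Ioo a b) := h₁.comp_neg.continuousOn_cv_Ioo hwi hwc
  have hS₂c : ContinuousOn S₂ (Ioo a b) := h₂.comp_neg.continuousOn_cv_Ioo hwi hwc
  have hprim : Continuous fun t => ∫ s in a..t, f s :=
    intervalIntegral.continuous_primitive (fun _ _ => hf.intervalIntegrable _ _) a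
  have hFc : ContinuousOn (fun t => S₁ t + S₂ t - ∫ s in a..t, f s) (Ioo a b) :=
    (hS₁c.add hS₂c).sub hprim.continuousOn
  obtain ⟨c, hc⟩ := span_of_pairing hFc (continuousOn_endFun a b α β) fun q hq hq0 => by
    have hmean : ∫ t, q t = 0 := by simpa [endFun] using hq0 0
    have hqi := integrable_test hq
    have hqm : Measurable q := hq.1.measurable
    have e₀ := h q ⟨hq, hq0⟩
    have hTc := continuous_opT_test γ hα hβ hq
    have eg : ∫ x in a..b, g x * opT (caputoKerL α γ) (caputoKerR β γ) q x =
        (∫ t, S₁ t * q t) + ∫ t, S₂ t * q t := by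
      have e₁ := h₁.integral_mul_cv (a := a) (b := b) hwm hwb hqi hqm
      have e₂ := h₂.integral_mul_cv (a := a) (b := b) hwm hwb hqi hqm
      simp only [← cv_neg_eq_setIntegral hw0] at e₁ e₂
      rw [← e₁, ← e₂, ← integral_add, intervalIntegral.integral_of_le hab.le,
        integral_Icc_eq_integral_Ioo, integral_Ioc_eq_integral_Ioo]
      · refine setIntegral_congr_fun measurableSet_Ioo fun x hx => ?_
        simp only [hwg x hx, opT]
        ring
      · exact ((h₁.continuous_cv_test hq).integrableOn_Icc).bdd_mul (c := |M|)
          hwm.aestronglyMeasurable (Filter.Eventually.of_forall hwb)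
      · exact ((h₂.continuous_cv_test hq).integrableOn_Icc).bdd_mul (c := |M|)
          hwm.aestronglyMeasurable (Filter.Eventually.of_forall hwb)
    have j₁ : IntervalIntegrable (fun x => f x * ∫ t in a..x, q t) volume a b :=
      (hf.mul (continuous_primitive_test hq)).intervalIntegrable _ _
    have j₂ : IntervalIntegrable (fun x => g x * opT (caputoKerL α γ) (caputoKerR β γ) q x)
        volume a b := ContinuousOn.intervalIntegrable_of_Icc hab.le (hg.mul hTc.continuousOn)
    rw [intervalIntegral.integral_add j₁ j₂,
      integral_mul_primitive_test hab.le hf hq hmean, eg] at e₀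
    have i₁ := integrable_mul_test hS₁c hq
    have i₂ := integrable_mul_test hS₂c hq
    have i₃ := integrable_mul_test hprim.continuousOn hq
    simp only [sub_mul, add_mul]
    have i₁₂ : Integrable fun t => S₁ t * q t + S₂ t * q t := i₁.add i₂
    rw [integral_sub i₁₂ i₃, integral_add i₁ i₂]
    linarith
  obtain ⟨K, hK⟩ := (isCompact_Icc (a := a) (b := b)).bddAbove_image hprim.norm.continuousOn
  obtain ⟨c1, c2⟩ := endFun_bounded hab hα.1 hβ.1 (c := c)
    (M := C₁ * ((∫ s, singPart α s) + (b - a)) * |M| + C₂ * ((∫ s, singPart β s) + (b - a)) * |M| + K)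
    fun t ht => by
      rw [← hc t ht]
      have hK' : |∫ s in a..t, f s| ≤ K := hK (mem_image_of_mem _ (Ioo_subset_Icc_self ht))
      have b₁ := h₁.abs_cv_le hab.le hwb hw0 t
      have b₂ := h₂.abs_cv_le hab.le hwb hw0 t
      exact (abs_sub _ _).trans (add_le_add ((abs_add_le _ _).trans (add_le_add b₁ b₂)) hK')
  refine ⟨c 0, fun t ht => ?_⟩
  have hct := hc t ht
  rw [Fin.sum_univ_three, c1, c2] at hct
  have htI := Ioo_subset_Icc_self ht
  have hae : ∀ᵐ s, s ∈ Ioo a b → g s = w s :=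
    Filter.Eventually.of_forall fun s hs => (hwg s hs).symm
  have v₁ : S₁ t = γ * rightRLI b (1 - α) g t := by
    rw [hS₁]
    simp only [caputoKerL]
    rw [cv_powKer_neg_eq htI hw0 hae, rightRLI, show 1 - α - 1 = -α by ring]
    ring
  have v₂ : S₂ t = -((1 - γ) * leftRLI a (1 - β) g t) := by
    rw [hS₂]
    simp only [caputoKerR, neg_neg]
    have := cv_powKer_eq (c := -((1 - γ) / Gamma (1 - β))) (α := β) htI hw0 hae
    rw [this, leftRLI, show 1 - β - 1 = -β by ring]
    ring
  rw [v₁, v₂] at hct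
  simp only [endFun, Matrix.cons_val_zero, mul_one, zero_mul, add_zero] at hct
  linarith

/-- The pointwise Euler–Lagrange equation, almost everywhere. -/
theorem ae_combRL_eq (hab : a < b) (hα : α < 1) (hβ : β < 1) {c : ℝ} {f g : ℝ → ℝ}
    (hf : Continuous f) (hg : AbsolutelyContinuousOn g a b)
    (h : ∀ t ∈ Ioo a b, γ * rightRLI b (1 - α) g t - (1 - γ) * leftRLI a (1 - β) g t =
      c + ∫ s in a..t, f s) :
    ∀ᵐ x, x ∈ Ioo a b → f x + combRL a b α β γ g x = 0 := by
  obtain ⟨p, m, hp, hm, hgpm⟩ := hg.exists_monotone_sub hab.le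
  filter_upwards [ae_differentiableAt_leftRLI hab.le hβ hp hm hgpm,
    ae_differentiableAt_rightRLI hab.le hα hp hm hgpm] with x hl hr hx
  have hd := ((hr hx).hasDerivAt.const_mul γ).sub ((hl hx).hasDerivAt.const_mul (1 - γ))
  have hf' : HasDerivAt (fun t => c + ∫ s in a..t, f s) (f x) x :=
    (hf.integral_hasStrictDerivAt a x).hasDerivAt.const_add c
  have hu := hd.unique (hf'.congr_of_eventuallyEq (by
    filter_upwards [isOpen_Ioo.mem_nhds hx] with t ht
    exact h t ht))
  rw [combRL, rlLeftD, rlRightD, ← hu]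
  ring

end

/-- Weak form of the Euler–Lagrange equations: if `y ∈ 𝐃` with `y(a) = yᵃ`, `y(b) = yᵇ` is a
local minimizer of `J` subject to these boundary conditions, then for every `h ∈ 𝐃` with
`h(a) = h(b) = 0`,
`∫_a^b Σᵢ [∂L/∂yᵢ + D_{1-γ}^{β,α} ∂L/∂vᵢ] hᵢ dx = 0`. -/
theorem fractional_euler_lagrange_weak_form
    (a b α β γ : ℝ) (N : ℕ) (hab : a < b)
    (hα : α ∈ Ioo (0 : ℝ) 1) (hβ : β ∈ Ioo (0 : ℝ) 1) (hγ : γ ∈ Icc (0 : ℝ) 1)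
    (L : ℝ → (Fin N → ℝ) → (Fin N → ℝ) → ℝ)
    (hL : ContDiff ℝ 1 (fun p : ℝ × (Fin N → ℝ) × (Fin N → ℝ) => L p.1 p.2.1 p.2.2))
    (ya yb : Fin N → ℝ)
    (y : ℝ → Fin N → ℝ) (hy : memD a b α β γ y) (hya : y a = ya) (hyb : y b = yb)
    (hmin : ∃ δ > (0 : ℝ), ∀ z : ℝ → Fin N → ℝ, memD a b α β γ z → z a = ya → z b = yb →
      norm1inf a b α β γ (z - y) < δ →
      (∫ x in a..b, L x (y x) (combCaputoVec a b α β γ y x)) ≤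
        ∫ x in a..b, L x (z x) (combCaputoVec a b α β γ z x))
    (hreg : ∀ i : Fin N,
      AbsolutelyContinuousOn
        (fun x => pdV L i x (y x) (combCaputoVec a b α β γ y x)) a b ∧
      ContinuousOn
        (fun x => combRL a b α β γ
          (fun t => pdV L i t (y t) (combCaputoVec a b α β γ y t)) x) (Icc a b)) :
    ∀ h : ℝ → Fin N → ℝ, memD a b α β γ h → h a = 0 → h b = 0 →
      (∫ x in a..b, ∑ i,
        (pdY L i x (y x) (combCaputoVec a b α β γ y x) +
          combRL a b α β γ
            (fun t => pdV L i t (y t) (combCaputoVec a b α β γ y t)) x) * h x i) = 0 := by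
  subst hya hyb
  obtain ⟨δ, hδ, hmin⟩ := hmin
  intro h _ _ _
  have hyc := continuous_clamped hab.le fun i => (hy.1 i).continuousOn hab.le
  have hΦc : Continuous fun x => combCaputoVec a b α β γ y (projIcc a b hab.le x) :=
    continuous_clamped hab.le hy.2
  have key : ∀ i, ∀ᵐ x, x ∈ Ioo a b → pdY L i x (y x) (combCaputoVec a b α β γ y x) +
      combRL a b α β γ (fun t => pdV L i t (y t) (combCaputoVec a b α β γ y t)) x = 0 := by
    intro i
    have hf : Continuous fun x => pdY L i x (y (projIcc a b hab.le x))
        (combCaputoVec a b α β γ y (projIcc a b hab.le x)) :=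
      (continuous_pdY hL i).comp (continuous_id.prodMk (hyc.prodMk hΦc))
    have hfeq : ∀ x ∈ Icc a b, pdY L i x (y (projIcc a b hab.le x))
        (combCaputoVec a b α β γ y (projIcc a b hab.le x)) =
          pdY L i x (y x) (combCaputoVec a b α β γ y x) := fun x hx => by
      rw [clamped_eq hab.le y hx, clamped_eq hab.le (combCaputoVec a b α β γ y) hx]
    obtain ⟨c, hc⟩ := exists_const_of_variation_eq_zero (γ := γ) hab hα hβ hf
      ((hreg i).1.continuousOn hab.le) fun q hq => by
        rw [← first_variation_eq_zero hab hα hβ hL hy hδ hmin i hq]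
        refine intervalIntegral.integral_congr fun x hx => ?_
        rw [uIcc_of_le hab.le] at hx
        simp only [hfeq x hx]
    filter_upwards [ae_combRL_eq hab hα.2 hβ.2 hf (hreg i).1 hc] with x hx hxI
    rw [← hfeq x (Ioo_subset_Icc_self hxI)]
    exact hx hxI
  rw [intervalIntegral.integral_of_le hab.le, integral_Ioc_eq_integral_Ioo]
  refine integral_eq_zero_of_ae ((ae_restrict_iff' measurableSet_Ioo).2 ?_)
  filter_upwards [ae_all_iff.2 key] with x hx hxI
  exact Finset.sum_eq_zero fun i _ => by rw [hx i hxI, zero_mul]
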